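/- Let P ∈ ℤ[x] be a polynomial that is either a product of at least two pairwise non-proportional linear factors a_i x + b_i over ℤ (i.e. a_i b_j − a_j b_i ≠ 0 for i ≠ j) or an irreducible quadratic, assume P is admissible, and assume P(n) ≥ 1 for all positive integers n. Then there exist constants κ > 0 and δ > 0 such that: (i) #{n ≤ N : P(n) is squarefree} = κ·N + O_P(N^{3/4}); and (ii) for every ε > 0, #{(n₁,n₂,n₃,n₄) ∈ [1,N]⁴ : each P(n_i) is squarefree and P(n₁)P(n₂)P(n₃)P(n₄) is a perfect square} = 3κ²·N² + O_{P,ε}(N^{2−δ+ε}), as N → ∞. -/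

import Mathlib

open Polynomial in
/-- number of roots of `P` modulo `q` -/
def sfmRho (P : ℤ[X]) (q : ℕ) : ℕ :=
  ((Finset.range q).filter (fun r : ℕ => (q : ℤ) ∣ P.eval (r : ℤ))).card

theorem sfm_pow_omega_le (K : ℕ) (ε : ℝ) (hε : 0 < ε) :
    ∃ C : ℝ, 0 < C ∧ ∀ n : ℕ, 1 ≤ n → (K : ℝ) ^ (n.primeFactors.card) ≤ C * (n : ℝ) ^ ε := by
  obtain ⟨B, hB⟩ := exists_nat_gt (((K : ℝ) + 1) ^ (1 / ε))
  refine ⟨((K : ℝ) + 1) ^ B, by positivity, fun n hn => ?_⟩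
  have h1 : ∀ p ∈ n.primeFactors, (K : ℝ) ≤ (if p < B then (K : ℝ) + 1 else 1) * (p : ℝ) ^ ε := by
    intro p hp
    have hp1 : (1 : ℝ) ≤ p := by exact_mod_cast (Nat.prime_of_mem_primeFactors hp).one_le
    split_ifs with h
    · have : (1 : ℝ) ≤ (p : ℝ) ^ ε := Real.one_le_rpow hp1 hε.le
      nlinarith [Nat.cast_nonneg (α := ℝ) K]
    · have hBp : (B : ℝ) ≤ p := by exact_mod_cast not_lt.mp h
      have h2 : ((K : ℝ) + 1) ^ (1 / ε) ≤ p := by linarith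
      have h3 := Real.rpow_le_rpow (by positivity) h2 hε.le
      rw [← Real.rpow_mul (by positivity), one_div, inv_mul_cancel₀ hε.ne', Real.rpow_one] at h3
      linarith
  calc (K : ℝ) ^ (n.primeFactors.card) = ∏ p ∈ n.primeFactors, (K : ℝ) := by simp
    _ ≤ ∏ p ∈ n.primeFactors, ((if p < B then (K : ℝ) + 1 else 1) * (p : ℝ) ^ ε) :=
        Finset.prod_le_prod (fun _ _ => by positivity) h1
    _ = (∏ p ∈ n.primeFactors, (if p < B then (K : ℝ) + 1 else 1)) *
          ∏ p ∈ n.primeFactors, (p : ℝ) ^ ε := Finset.prod_mul_distrib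
    _ ≤ ((K : ℝ) + 1) ^ B * (n : ℝ) ^ ε := by
        apply mul_le_mul
        · rw [← Finset.prod_filter]
          simp only [Finset.prod_const]
          apply pow_le_pow_right₀ (by linarith [Nat.cast_nonneg (α := ℝ) K])
          calc _ ≤ (Finset.range B).card := Finset.card_le_card (by
                intro p hp; simp at hp ⊢; exact hp.2)
            _ = B := by simp
        · rw [Real.finsetProd_rpow _ _ (fun _ _ => by positivity)]
          apply Real.rpow_le_rpow (by positivity) _ hε.le
          have := Nat.le_of_dvd (by omega) (Nat.prod_primeFactors_dvd n)
          calc _ = ((∏ p ∈ n.primeFactors, p : ℕ) : ℝ) := by push_cast; rfl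
            _ ≤ _ := by exact_mod_cast this
        · positivity
        · positivity

theorem sfm_submult (F : ℕ → ℕ) (K : ℕ) (h1 : F 1 ≤ 1)
    (hm : ∀ a b : ℕ, Nat.Coprime a b → F (a * b) ≤ F a * F b)
    (hp : ∀ p : ℕ, p.Prime → F p ≤ K) (g : ℕ) (hg : Squarefree g) :
    F g ≤ K ^ g.primeFactors.card := by
  induction g using Nat.recOnMul with
  | zero => simp at hg
  | one => simpa using h1
  | prime p hpp => 
    simpa [hpp.primeFactors] using hp p hpp
  | mul a b iha ihb =>
    have hc : Nat.Coprime a b := Nat.coprime_of_squarefree_mul hg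
    have ha := hg.of_mul_left
    have hb := hg.of_mul_right
    rw [hc.primeFactors_mul, Finset.card_union_of_disjoint hc.disjoint_primeFactors, pow_add]
    exact (hm a b hc).trans (Nat.mul_le_mul (iha ha) (ihb hb))

theorem sfm_dvd_iff (P : Polynomial ℤ) (m : ℕ) (x y : ℕ) (h : x ≡ y [MOD m]) :
    (m : ℤ) ∣ P.eval (x : ℤ) ↔ (m : ℤ) ∣ P.eval (y : ℤ) := by
  have h1 : (m : ℤ) ∣ (y : ℤ) - x := (Nat.modEq_iff_dvd).mp h
  have h2 : (m : ℤ) ∣ P.eval (y : ℤ) - P.eval (x : ℤ) := h1.trans (Polynomial.sub_dvd_eval_sub _ _ _)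
  constructor
  · intro h3; simpa using dvd_add h3 h2
  · intro h3; simpa using dvd_sub h3 h2

theorem sfm_rho_mul (P : Polynomial ℤ) (m n : ℕ) (h : Nat.Coprime m n) :
    sfmRho P (m * n) = sfmRho P m * sfmRho P n := by
  unfold sfmRho
  rw [← Finset.card_product]
  rcases Nat.eq_zero_or_pos m with rfl | hm
  · simp
  rcases Nat.eq_zero_or_pos n with rfl | hn
  · simp
  apply Finset.card_bij (fun r _ => (r % m, r % n))
  · intro r hr
    simp only [Finset.mem_filter, Finset.mem_range, Finset.mem_product] at hr ⊢
    refine ⟨⟨Nat.mod_lt _ hm, ?_⟩, Nat.mod_lt _ hn, ?_⟩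
    · rw [sfm_dvd_iff P m _ _ (Nat.mod_modEq r m)]
      exact dvd_trans (by push_cast; exact dvd_mul_right _ _) hr.2
    · rw [sfm_dvd_iff P n _ _ (Nat.mod_modEq r n)]
      exact dvd_trans (by push_cast; exact dvd_mul_left _ _) hr.2
  · intro r hr r' hr' he
    simp only [Finset.mem_filter, Finset.mem_range, Prod.mk.injEq] at hr hr' he
    have := (Nat.modEq_and_modEq_iff_modEq_mul h).mp ⟨he.1, he.2⟩
    exact Nat.ModEq.eq_of_lt_of_lt this hr.1 hr'.1
  · rintro ⟨x, y⟩ hxy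
    simp only [Finset.mem_filter, Finset.mem_range, Finset.mem_product] at hxy
    let z := Nat.chineseRemainder h x y
    have hzm : (z : ℕ) % m = x := by
      have := z.2.1; unfold Nat.ModEq at this; rw [this, Nat.mod_eq_of_lt hxy.1.1]
    have hzn : (z : ℕ) % n = y := by
      have := z.2.2; unfold Nat.ModEq at this; rw [this, Nat.mod_eq_of_lt hxy.2.1]
    refine ⟨z, ?_, by simp [hzm, hzn]⟩
    simp only [Finset.mem_filter, Finset.mem_range]
    refine ⟨Nat.chineseRemainder_lt_mul h x y hm.ne' hn.ne', ?_⟩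
    push_cast
    apply IsCoprime.mul_dvd (by exact_mod_cast h)
    · rw [sfm_dvd_iff P m _ _ z.2.1]; exact hxy.1.2
    · rw [sfm_dvd_iff P n _ _ z.2.2]; exact hxy.2.2

theorem sfm_rho_one (P : Polynomial ℤ) : sfmRho P 1 = 1 := by
  simp [sfmRho]

theorem sfm_rho_le (P : Polynomial ℤ) (q : ℕ) : sfmRho P q ≤ q := by
  unfold sfmRho
  exact (Finset.card_filter_le _ _).trans (by simp)

theorem sfm_rho_prime (P : Polynomial ℤ) (hP : P ≠ 0) (p : ℕ) (hp : p.Prime) :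
    sfmRho P p ≤ P.natDegree + P.leadingCoeff.natAbs := by
  by_cases hd : (p : ℤ) ∣ P.leadingCoeff
  · have : p ≤ P.leadingCoeff.natAbs :=
      Nat.le_of_dvd (by simpa [Nat.pos_iff_ne_zero] using hP) (Int.natCast_dvd.mp hd)
    have := sfm_rho_le P p
    omega
  · have := Fact.mk hp
    have hl : (Int.castRingHom (ZMod p)) P.leadingCoeff ≠ 0 := by
      intro h0
      exact hd ((ZMod.intCast_zmod_eq_zero_iff_dvd _ p).mp h0)
    set Q := P.map (Int.castRingHom (ZMod p)) with hQ
    have hQ0 : Q ≠ 0 := by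
      intro h0
      have : Q.coeff P.natDegree = 0 := by rw [h0]; simp
      rw [hQ, Polynomial.coeff_map] at this
      exact hl this
    have h1 : sfmRho P p ≤ Q.roots.toFinset.card := by
      unfold sfmRho
      apply Finset.card_le_card_of_injOn (fun r : ℕ => (r : ZMod p))
      · intro r hr
        simp only [Finset.coe_filter, Finset.mem_range, Set.mem_setOf_eq] at hr
        simp only [Finset.mem_coe, Multiset.mem_toFinset, Polynomial.mem_roots hQ0, Polynomial.IsRoot]
        have := (ZMod.intCast_zmod_eq_zero_iff_dvd (P.eval (r : ℤ)) p).mpr hr.2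
        rw [hQ, Polynomial.eval_map, ← this]
        have h3 := Polynomial.hom_eval₂ P (RingHom.id ℤ) (Int.castRingHom (ZMod p)) (r : ℤ)
        simp [Polynomial.eval₂_id] at h3
        simp [h3]
      · intro r hr r' hr' he
        simp only [Finset.coe_filter, Finset.mem_range, Set.mem_setOf_eq] at hr hr'
        have := (ZMod.natCast_eq_natCast_iff _ _ _).mp he
        exact Nat.ModEq.eq_of_lt_of_lt this hr.1 hr'.1
    have h2 : Q.roots.toFinset.card ≤ Q.natDegree :=
      (Multiset.toFinset_card_le _).trans (Polynomial.card_roots' Q)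
    have h3 : Q.natDegree ≤ P.natDegree := Polynomial.natDegree_map_le
    omega

theorem sfm_rho_prime_sq (P : Polynomial ℤ) (hP : P ≠ 0) (U V : Polynomial ℤ) (R : ℤ) (hR : R ≠ 0)
    (hUV : U * P + V * Polynomial.derivative P = Polynomial.C R) (p : ℕ) (hp : p.Prime) :
    sfmRho P (p ^ 2) ≤ P.natDegree + P.leadingCoeff.natAbs + R.natAbs ^ 2 := by
  by_cases hd : (p : ℤ) ∣ R
  · have : p ≤ R.natAbs := Nat.le_of_dvd (by omega) (Int.natCast_dvd.mp hd)
    have h1 := sfm_rho_le P (p ^ 2)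
    have h2 : p ^ 2 ≤ R.natAbs ^ 2 := Nat.pow_le_pow_left this 2
    omega
  · have h1 : sfmRho P (p ^ 2) ≤ sfmRho P p := by
      unfold sfmRho
      apply Finset.card_le_card_of_injOn (fun r : ℕ => r % p)
      · intro r hr
        simp only [Finset.coe_filter, Finset.mem_range, Set.mem_setOf_eq] at hr ⊢
        refine ⟨Nat.mod_lt _ hp.pos, ?_⟩
        rw [sfm_dvd_iff P p _ _ (Nat.mod_modEq r p)]
        exact dvd_trans (by push_cast; exact dvd_pow_self _ two_ne_zero) hr.2
      · intro r hr r' hr' he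
        simp only [Finset.coe_filter, Finset.mem_range, Set.mem_setOf_eq] at hr hr'
        have he' : r ≡ r' [MOD p] := he
        obtain ⟨h, hh⟩ := (Nat.modEq_iff_dvd).mp he'
        have hx : (r' : ℤ) = r + p * h := by linarith
        obtain ⟨k, hk⟩ := Polynomial.binomExpansion P (r : ℤ) (p * h)
        have hr2 := hr'.2
        rw [hx, hk] at hr2
        push_cast at hr2
        have hr1 := hr.2
        push_cast at hr1
        have h4 : (p : ℤ) ^ 2 ∣ Polynomial.eval (r : ℤ) (Polynomial.derivative P) * (p * h) := by
          have : Polynomial.eval (r : ℤ) (Polynomial.derivative P) * (p * h) =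
            (Polynomial.eval (r : ℤ) P + Polynomial.eval (r : ℤ) (Polynomial.derivative P) * (p * h)
              + k * (p * h) ^ 2) - Polynomial.eval (r : ℤ) P - (p : ℤ) ^ 2 * (k * h ^ 2) := by ring
          rw [this]
          exact dvd_sub (dvd_sub hr2 hr1) (dvd_mul_right _ _)
        have h5 : (p : ℤ) ∣ Polynomial.eval (r : ℤ) (Polynomial.derivative P) * h := by
          have hp0 : (p : ℤ) ≠ 0 := by exact_mod_cast hp.ne_zero
          apply (mul_dvd_mul_iff_left hp0).mp
          rw [← pow_two, mul_left_comm]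
          exact h4
        have hpp : Prime (p : ℤ) := Nat.prime_iff_prime_int.mp hp
        have h6 : (p : ℤ) ∣ h := by
          rcases hpp.dvd_or_dvd h5 with h6 | h6
          · exfalso
            apply hd
            have := congrArg (Polynomial.eval (r : ℤ)) hUV
            simp at this
            rw [← this]
            exact dvd_add (Dvd.dvd.mul_left ((dvd_pow_self _ two_ne_zero).trans hr1) _)
              (Dvd.dvd.mul_left h6 _)
          · exact h6
        have h7 : r ≡ r' [MOD p ^ 2] := by
          apply (Nat.modEq_iff_dvd).mpr
          rw [hh]; push_cast; rw [pow_two]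
          exact mul_dvd_mul_left _ h6
        exact Nat.ModEq.eq_of_lt_of_lt h7 hr.1 hr'.1
    have h2 := sfm_rho_prime P hP p hp
    omega

theorem sfm_count (P : Polynomial ℤ) (q N : ℕ) (hq : 0 < q) :
    |((((Finset.Icc 1 N).filter (fun n : ℕ => (q : ℤ) ∣ P.eval (n : ℤ))).card : ℕ) : ℝ) -
      (N : ℝ) * (sfmRho P q / q)| ≤ sfmRho P q := by
  have h1 : ((Finset.Icc 1 N).filter (fun n : ℕ => (q : ℤ) ∣ P.eval (n : ℤ))).card =
      ∑ r ∈ (Finset.range q).filter (fun r : ℕ => (q : ℤ) ∣ P.eval (r : ℤ)),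
        ((Finset.Ioc 0 N).filter (fun n => n ≡ r [MOD q])).card := by
    rw [Finset.card_eq_sum_card_fiberwise (f := fun n => n % q)
      (t := (Finset.range q).filter (fun r : ℕ => (q : ℤ) ∣ P.eval (r : ℤ)))]
    · apply Finset.sum_congr rfl
      intro r hr
      simp only [Finset.mem_filter, Finset.mem_range] at hr
      congr 1
      ext n
      simp only [Finset.mem_filter, Finset.mem_Icc, Finset.mem_Ioc]
      have : n % q = r ↔ n ≡ r [MOD q] := by
        unfold Nat.ModEq; rw [Nat.mod_eq_of_lt hr.1]
      rw [this]
      constructor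
      · rintro ⟨⟨h1, h2⟩, h3⟩; exact ⟨⟨by omega, by omega⟩, h3⟩
      · rintro ⟨h1, h3⟩
        exact ⟨⟨⟨by omega, by omega⟩, (sfm_dvd_iff P q _ _ h3).mpr hr.2⟩, h3⟩
    · intro n hn
      simp only [Finset.coe_filter, Finset.mem_range, Set.mem_setOf_eq] at hn ⊢
      exact ⟨Nat.mod_lt _ hq, (sfm_dvd_iff P q _ _ (Nat.mod_modEq n q)).mpr hn.2⟩
  have h2 : ∀ r : ℕ, |((((Finset.Ioc 0 N).filter (fun n => n ≡ r [MOD q])).card : ℕ) : ℝ) - (N : ℝ) / q| ≤ 1 := by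
    intro r
    have h3 : ((((Finset.Ioc 0 N).filter (fun n => n ≡ r [MOD q])).card : ℕ) : ℤ) =
      max (⌊(((N : ℚ) - r) / q)⌋ - ⌊((((0 : ℕ) : ℚ) - r) / q)⌋ : ℤ) 0 :=
      Nat.Ioc_filter_modEq_card 0 N hq r
    have hq' : (0 : ℚ) < q := by exact_mod_cast hq
    have h4 : ((((0 : ℕ) : ℚ) - r) / q) ≤ (((N : ℚ) - r) / q) := by
      apply div_le_div_of_nonneg_right _ hq'.le
      have : (0 : ℚ) ≤ N := by positivity
      push_cast; linarith
    have h5 : ⌊((((0 : ℕ) : ℚ) - r) / q)⌋ ≤ ⌊(((N : ℚ) - r) / q)⌋ := Int.floor_le_floor h4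
    rw [max_eq_left (by omega)] at h3
    have e1 := Int.floor_le (((N : ℚ) - r) / q)
    have e2 := Int.lt_floor_add_one (((N : ℚ) - r) / q)
    have e3 := Int.floor_le ((((0 : ℕ) : ℚ) - r) / q)
    have e4 := Int.lt_floor_add_one ((((0 : ℕ) : ℚ) - r) / q)
    have e5 : (((N : ℚ) - r) / q) - ((((0 : ℕ) : ℚ) - r) / q) = (N : ℚ) / q := by
      push_cast; ring
    have e6 : |((((Finset.Ioc 0 N).filter (fun n => n ≡ r [MOD q])).card : ℕ) : ℚ) - (N : ℚ) / q| ≤ 1 := by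
      have h6 : ((((Finset.Ioc 0 N).filter (fun n => n ≡ r [MOD q])).card : ℕ) : ℚ) =
        (⌊(((N : ℚ) - r) / q)⌋ : ℚ) - (⌊((((0 : ℕ) : ℚ) - r) / q)⌋ : ℚ) := by exact_mod_cast h3
      rw [h6, ← e5, abs_le]
      constructor <;> linarith
    have e7 := (Rat.cast_le (K := ℝ)).mpr e6
    push_cast at e7
    exact e7
  rw [h1]
  have h3 : (N : ℝ) * (sfmRho P q / q) = ∑ r ∈ (Finset.range q).filter (fun r : ℕ => (q : ℤ) ∣ P.eval (r : ℤ)), (N : ℝ) / q := by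
    rw [Finset.sum_const, nsmul_eq_mul]; unfold sfmRho; ring
  rw [h3]
  push_cast
  rw [← Finset.sum_sub_distrib]
  refine (Finset.abs_sum_le_sum_abs _ _).trans ?_
  refine (Finset.sum_le_sum (fun r _ => h2 r)).trans ?_
  simp [sfmRho]


/-- standing hypotheses on the polynomial and its value function -/
structure SfmH (P : Polynomial ℤ) (f : ℕ → ℕ) : Prop where
  deg : 2 ≤ P.natDegree
  sep : (P.map (Int.castRingHom ℚ)).Separable
  val : ∀ n : ℕ, 1 ≤ n → (f n : ℤ) = P.eval (n : ℤ)
  pos : ∀ n : ℕ, 1 ≤ n → 1 ≤ f n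

theorem sfm_bezout (P : Polynomial ℤ) (h : (P.map (Int.castRingHom ℚ)).Separable) :
    ∃ (U V : Polynomial ℤ) (R : ℤ), R ≠ 0 ∧ U * P + V * Polynomial.derivative P = Polynomial.C R := by
  obtain ⟨a, b, hab⟩ := h
  obtain ⟨d1, hm1, hd1⟩ := IsLocalization.integerNormalization_spec (nonZeroDivisors ℤ) a
  obtain ⟨d2, hm2, hd2⟩ := IsLocalization.integerNormalization_spec (nonZeroDivisors ℤ) b
  refine ⟨Polynomial.C (d2 : ℤ) * IsLocalization.integerNormalization (nonZeroDivisors ℤ) a,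
    Polynomial.C (d1 : ℤ) * IsLocalization.integerNormalization (nonZeroDivisors ℤ) b, d1 * d2,
    mul_ne_zero (nonZeroDivisors.ne_zero hm1) (nonZeroDivisors.ne_zero hm2), ?_⟩
  apply Polynomial.map_injective (Int.castRingHom ℚ) Int.cast_injective
  have e1 : (IsLocalization.integerNormalization (nonZeroDivisors ℤ) a).map (Int.castRingHom ℚ) =
      Polynomial.C ((Int.castRingHom ℚ) (d1 : ℤ)) * a := by
    have : (algebraMap ℤ ℚ) = Int.castRingHom ℚ := rfl
    rw [← this, hd1]
    ext n
    simp
  have e2 : (IsLocalization.integerNormalization (nonZeroDivisors ℤ) b).map (Int.castRingHom ℚ) =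
      Polynomial.C ((Int.castRingHom ℚ) (d2 : ℤ)) * b := by
    have : (algebraMap ℤ ℚ) = Int.castRingHom ℚ := rfl
    rw [← this, hd2]
    ext n
    simp
  rw [Polynomial.derivative_map] at hab
  simp only [Polynomial.map_add, Polynomial.map_mul, Polynomial.map_C, e1, e2, map_mul]
  linear_combination (Polynomial.C ((Int.castRingHom ℚ) (d1 : ℤ)) * Polynomial.C ((Int.castRingHom ℚ) (d2 : ℤ))) * hab

namespace SfmH
variable {P : Polynomial ℤ} {f : ℕ → ℕ}

theorem ne_zero (h : SfmH P f) : P ≠ 0 := by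
  rintro rfl
  have := h.deg
  simp at this

theorem rho_bound (h : SfmH P f) : ∃ K : ℕ, ∀ g : ℕ, Squarefree g →
    sfmRho P g ≤ K ^ g.primeFactors.card ∧ sfmRho P (g ^ 2) ≤ K ^ g.primeFactors.card := by
  obtain ⟨U, V, R, hR, hUV⟩ := sfm_bezout P h.sep
  refine ⟨P.natDegree + P.leadingCoeff.natAbs + R.natAbs ^ 2, fun g hg => ⟨?_, ?_⟩⟩
  · apply sfm_submult (fun g => sfmRho P g) _ (sfm_rho_one P).le
      (fun a b hab => (sfm_rho_mul P a b hab).le) _ g hg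
    intro p hp
    have := sfm_rho_prime P h.ne_zero p hp
    show sfmRho P p ≤ _
    omega
  · apply sfm_submult (fun g => sfmRho P (g ^ 2)) _ (by simp [sfm_rho_one P]) _ _ g hg
    · intro a b hab
      show sfmRho P ((a * b) ^ 2) ≤ _
      rw [mul_pow]
      exact (sfm_rho_mul P _ _ (hab.pow 2 2)).le
    · intro p hp
      exact sfm_rho_prime_sq P h.ne_zero U V R hR hUV p hp

theorem rho_eps (h : SfmH P f) (ε : ℝ) (hε : 0 < ε) : ∃ C : ℝ, 0 < C ∧ ∀ g : ℕ, Squarefree g →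
    (sfmRho P g : ℝ) ≤ C * (g : ℝ) ^ ε ∧ (sfmRho P (g ^ 2) : ℝ) ≤ C * (g : ℝ) ^ ε := by
  obtain ⟨K, hK⟩ := h.rho_bound
  obtain ⟨C, hC, hC'⟩ := sfm_pow_omega_le K ε hε
  refine ⟨C, hC, fun g hg => ?_⟩
  have h1 := hC' g (Nat.pos_of_ne_zero hg.ne_zero)
  obtain ⟨h2, h3⟩ := hK g hg
  constructor
  · refine le_trans ?_ h1
    exact_mod_cast h2
  · refine le_trans ?_ h1
    exact_mod_cast h3

theorem valR (h : SfmH P f) (n : ℕ) (hn : 1 ≤ n) :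
    (f n : ℝ) = (P.map (Int.castRingHom ℝ)).eval (n : ℝ) := by
  have h1 := h.val n hn
  have h2 : ((f n : ℤ) : ℝ) = ((P.eval (n : ℤ) : ℤ) : ℝ) := by rw [h1]
  push_cast at h2
  rw [h2, Polynomial.eval_map, Polynomial.eval₂_at_natCast]
  simp

theorem growth (h : SfmH P f) : 0 < P.leadingCoeff ∧ ∃ C : ℝ, 0 < C ∧ ∀ n : ℕ, 1 ≤ n →
    (f n : ℝ) ≤ C * (n : ℝ) ^ P.natDegree ∧ (n : ℝ) ^ P.natDegree ≤ C * f n := by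
  set k := P.natDegree with hk
  have hinj : Function.Injective (Int.castRingHom ℝ) := Int.cast_injective
  have hlim : Filter.Tendsto (fun n : ℕ => (f n : ℝ) / (n : ℝ) ^ k) Filter.atTop
      (nhds (P.leadingCoeff : ℝ)) := by
    have h1 := Polynomial.div_tendsto_atTop_leadingCoeff_div_of_degree_eq
      (P.map (Int.castRingHom ℝ)) (Polynomial.X ^ k) (by
        rw [Polynomial.degree_map_eq_of_injective hinj, Polynomial.degree_X_pow,
          Polynomial.degree_eq_natDegree h.ne_zero])
    have h2 := h1.comp tendsto_natCast_atTop_atTop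
    simp only [Polynomial.leadingCoeff_map_of_injective hinj, Polynomial.leadingCoeff_X_pow, div_one] at h2
    refine h2.congr' ?_
    filter_upwards [Filter.eventually_ge_atTop 1] with n hn
    simp [h.valR n hn]
  have hlc : 0 < P.leadingCoeff := by
    have h1 : (0 : ℝ) ≤ (P.leadingCoeff : ℝ) := ge_of_tendsto' hlim (fun n => by positivity)
    have h2 : (0 : ℤ) ≤ P.leadingCoeff := by exact_mod_cast h1
    exact lt_of_le_of_ne h2 (Ne.symm (Polynomial.leadingCoeff_ne_zero.mpr h.ne_zero))
  refine ⟨hlc, ?_⟩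
  have hlcR : (0 : ℝ) < (P.leadingCoeff : ℝ) := by exact_mod_cast hlc
  have hb1 : ∃ C1 : ℝ, ∀ n : ℕ, (f n : ℝ) / (n : ℝ) ^ k ≤ C1 := by
    obtain ⟨C1, hC1⟩ := hlim.bddAbove_range
    exact ⟨C1, fun n => hC1 ⟨n, rfl⟩⟩
  have hb2 : ∃ C1 : ℝ, ∀ n : ℕ, ((f n : ℝ) / (n : ℝ) ^ k)⁻¹ ≤ C1 := by
    obtain ⟨C1, hC1⟩ := (hlim.inv₀ hlcR.ne').bddAbove_range
    exact ⟨C1, fun n => hC1 ⟨n, rfl⟩⟩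
  obtain ⟨C1, hC1⟩ := hb1
  obtain ⟨C2, hC2⟩ := hb2
  refine ⟨max (max C1 C2) 1, by positivity, fun n hn => ?_⟩
  have hn' : (0 : ℝ) < (n : ℝ) ^ k := by positivity
  have hf : (0 : ℝ) < f n := by exact_mod_cast h.pos n hn
  constructor
  · have := (div_le_iff₀ hn').mp (hC1 n)
    refine this.trans ?_
    gcongr
    exact (le_max_left _ _).trans (le_max_left _ _)
  · have := hC2 n
    rw [inv_div, div_le_iff₀ hf] at this
    refine this.trans ?_
    gcongr
    exact (le_max_right _ _).trans (le_max_left _ _)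

theorem omega_eps (h : SfmH P f) (ε : ℝ) (hε : 0 < ε) : ∃ C : ℝ, 0 < C ∧ ∀ n N : ℕ, 1 ≤ n → n ≤ N →
    (2 : ℝ) ^ (f n).primeFactors.card ≤ C * (N : ℝ) ^ ε := by
  obtain ⟨_, C1, hC1, hC1'⟩ := h.growth
  have hk : (0 : ℝ) < P.natDegree := by exact_mod_cast (by have := h.deg; omega)
  obtain ⟨C, hC, hC'⟩ := sfm_pow_omega_le 2 (ε / P.natDegree) (by positivity)
  refine ⟨C * C1 ^ (ε / P.natDegree), by positivity, fun n N hn hN => ?_⟩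
  have h1 := hC' (f n) (h.pos n hn)
  push_cast at h1
  refine h1.trans ?_
  rw [mul_assoc]
  apply mul_le_mul_of_nonneg_left _ hC.le
  have h2 : (f n : ℝ) ≤ C1 * (N : ℝ) ^ P.natDegree := by
    refine (hC1' n hn).1.trans ?_
    gcongr
  calc (f n : ℝ) ^ (ε / P.natDegree) ≤ (C1 * (N : ℝ) ^ P.natDegree) ^ (ε / P.natDegree) := by
        apply Real.rpow_le_rpow (by positivity) h2 (by positivity)
    _ = C1 ^ (ε / P.natDegree) * (N : ℝ) ^ ε := by
        rw [Real.mul_rpow hC1.le (by positivity), ← Real.rpow_natCast, ← Real.rpow_mul (by positivity)]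
        congr 2
        field_simp

theorem count_le (h : SfmH P f) (q N : ℕ) (hq : 0 < q) :
    ((((Finset.Icc 1 N).filter (fun n : ℕ => q ∣ f n)).card : ℕ) : ℝ) ≤
      sfmRho P q * ((N : ℝ) / q + 1) := by
  have h1 := sfm_count P q N hq
  have h2 : (Finset.Icc 1 N).filter (fun n : ℕ => (q : ℤ) ∣ P.eval (n : ℤ)) =
      (Finset.Icc 1 N).filter (fun n : ℕ => q ∣ f n) := by
    apply Finset.filter_congr
    intro n hn
    rw [Finset.mem_Icc] at hn
    rw [← h.val n hn.1, Int.natCast_dvd_natCast]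
  rw [h2, abs_le] at h1
  have : (N : ℝ) * (sfmRho P q / q) = sfmRho P q * ((N : ℝ) / q) := by ring
  rw [mul_add, mul_one]
  linarith [h1.2]

theorem fiber_card (h : SfmH P f) (v : ℕ) (S : Finset ℕ) (hS : ∀ n ∈ S, 1 ≤ n ∧ f n = v) :
    S.card ≤ P.natDegree := by
  have hne : P - Polynomial.C (v : ℤ) ≠ 0 := by
    intro h0
    have h1 := sub_eq_zero.mp h0
    have h2 := h.deg
    rw [h1] at h2
    simp at h2
  calc S.card ≤ (P - Polynomial.C (v : ℤ)).roots.toFinset.card := by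
        apply Finset.card_le_card_of_injOn (fun n : ℕ => (n : ℤ))
        · intro n hn
          obtain ⟨h1, h2⟩ := hS n hn
          simp only [Finset.mem_coe, Multiset.mem_toFinset, Polynomial.mem_roots hne, Polynomial.IsRoot]
          simp [← h.val n h1, h2]
        · intro a _ b _ hab
          simpa using hab
    _ ≤ (P - Polynomial.C (v : ℤ)).natDegree :=
        (Multiset.toFinset_card_le _).trans (Polynomial.card_roots' _)
    _ = P.natDegree := Polynomial.natDegree_sub_C

end SfmH


theorem sfm_card_sqf_divisors (m : ℕ) (hm : m ≠ 0) :
    (m.divisors.filter Squarefree).card = 2 ^ m.primeFactors.card := by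
  have h := Nat.sum_divisors_filter_squarefree hm (f := fun _ => (1 : ℕ))
  simp only [Finset.sum_const, smul_eq_mul, mul_one, Finset.card_powerset] at h
  rw [h, Nat.factors_eq]
  rfl

theorem sfm_sq_dvd (d b a : ℕ) (ha : Squarefree a) (h : d ^ 2 ∣ b ^ 2 * a) (hd : d ≠ 0) : d ∣ b := by
  obtain ⟨g, d', b', hg, hc, rfl, rfl⟩ := Nat.exists_coprime' (m := d) (n := b)
    (Nat.gcd_pos_of_pos_left _ (Nat.pos_of_ne_zero hd))
  have h1 : d' ^ 2 * g ^ 2 ∣ (b' ^ 2 * a) * g ^ 2 := by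
    convert h using 1 <;> ring
  have h2 : d' ^ 2 ∣ b' ^ 2 * a := Nat.dvd_of_mul_dvd_mul_right (by positivity) h1
  have h3 : d' ^ 2 ∣ a := (Nat.Coprime.pow 2 2 hc).dvd_of_dvd_mul_left h2
  have h4 := ha d' (by rwa [pow_two] at h3)
  rw [Nat.isUnit_iff] at h4
  subst h4
  simp

open ArithmeticFunction in
theorem sfm_mob_le (m Y : ℕ) (hm : m ≠ 0) :
    |∑ d ∈ (Finset.Icc 1 Y).filter (fun d => d ^ 2 ∣ m), moebius d| ≤ 2 ^ m.primeFactors.card := by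
  refine (Finset.abs_sum_le_sum_abs _ _).trans ?_
  calc ∑ d ∈ (Finset.Icc 1 Y).filter (fun d => d ^ 2 ∣ m), |moebius d|
      = ∑ d ∈ ((Finset.Icc 1 Y).filter (fun d => d ^ 2 ∣ m)).filter Squarefree, 1 := by
        rw [Finset.sum_filter Squarefree]
        apply Finset.sum_congr rfl
        intro d _
        exact abs_moebius
    _ ≤ ∑ d ∈ m.divisors.filter Squarefree, 1 := by
        apply Finset.sum_le_sum_of_subset_of_nonneg
        · intro d hd
          simp only [Finset.mem_filter, Finset.mem_Icc, Nat.mem_divisors] at hd ⊢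
          exact ⟨⟨(dvd_pow_self _ two_ne_zero).trans hd.1.2, hm⟩, hd.2⟩
        · intros; norm_num
    _ = 2 ^ m.primeFactors.card := by
        rw [Finset.sum_const, sfm_card_sqf_divisors m hm]; simp

open ArithmeticFunction in
theorem sfm_mob_eq (m Y : ℕ) (hm : m ≠ 0) (h : ∀ d : ℕ, Squarefree d → d ^ 2 ∣ m → d ≤ Y) :
    ∑ d ∈ (Finset.Icc 1 Y).filter (fun d => d ^ 2 ∣ m), moebius d =
      if Squarefree m then 1 else 0 := by
  obtain ⟨a, b, hab, ha⟩ := Nat.sq_mul_squarefree m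
  have hb : b ≠ 0 := by rintro rfl; simp at hab; exact hm hab.symm
  have h1 : ∑ d ∈ (Finset.Icc 1 Y).filter (fun d => d ^ 2 ∣ m), moebius d =
      ∑ d ∈ b.divisors, moebius d := by
    have hdiv : ∀ d : ℕ, d ≠ 0 → (d ^ 2 ∣ m ↔ d ∣ b) := by
      intro d hd
      rw [← hab]
      exact ⟨fun h => sfm_sq_dvd d b a ha h hd, fun h => (pow_dvd_pow_of_dvd h 2).mul_right _⟩
    apply Finset.sum_subset
    · intro d hd
      simp only [Finset.mem_filter, Finset.mem_Icc, Nat.mem_divisors] at hd ⊢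
      exact ⟨(hdiv d (by omega)).mp hd.2, hb⟩
    · intro d hd hd'
      simp only [Finset.mem_filter, Finset.mem_Icc, Nat.mem_divisors] at hd hd'
      apply moebius_eq_zero_of_not_squarefree
      intro hs
      have h2 := (hdiv d hs.ne_zero).mpr hd.1
      exact hd' ⟨⟨Nat.pos_of_ne_zero hs.ne_zero, h d hs h2⟩, h2⟩
  rw [h1]
  have h2 : ∑ d ∈ b.divisors, moebius d = (moebius * (zeta : ArithmeticFunction ℤ)) b := by
    rw [coe_mul_zeta_apply]
  rw [h2, moebius_mul_coe_zeta, one_apply]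
  congr 1
  rw [eq_iff_iff]
  constructor
  · rintro rfl
    simpa [← hab] using ha
  · intro hs
    have := hs b ⟨a, by rw [← hab]; ring⟩
    simpa using this

theorem sfm_mid_divisor (y : ℝ) (hy : 1 ≤ y) (d : ℕ) (hd : Real.sqrt y < d)
    (hp : ∀ p : ℕ, p.Prime → p ∣ d → (p : ℝ) ≤ y) :
    ∃ e : ℕ, e ∣ d ∧ Real.sqrt y < e ∧ (e : ℝ) ≤ y := by
  induction d using Nat.strong_induction_on with
  | _ d ih =>
    by_cases h1 : (d : ℝ) ≤ y
    · exact ⟨d, dvd_rfl, hd, h1⟩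
    push Not at h1
    have hs : 1 ≤ Real.sqrt y := Real.one_le_sqrt.mpr hy
    have hd1 : d ≠ 1 := by rintro rfl; norm_num at h1; linarith
    obtain ⟨q, hq, e, rfl⟩ := Nat.exists_prime_and_dvd hd1
    by_cases h2 : Real.sqrt y < q
    · exact ⟨q, dvd_mul_right _ _, h2, hp q hq (dvd_mul_right _ _)⟩
    push Not at h2
    have h3 : Real.sqrt y < e := by
      by_contra h3
      push Not at h3
      push_cast at h1
      have h5 := Real.mul_self_sqrt (show 0 ≤ y by linarith)
      have h4 : (q : ℝ) * e ≤ Real.sqrt y * Real.sqrt y := by gcongr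
      linarith
    have he : e ≠ 0 := by rintro rfl; norm_num at h3; linarith
    have hlt : e < q * e := by
      have := hq.two_le
      have : 0 < e := Nat.pos_of_ne_zero he
      nlinarith
    obtain ⟨e', h4, h5, h6⟩ := ih e hlt h3 (fun p hp1 hp2 => hp p hp1 (hp2.mul_left _))
    exact ⟨e', h4.mul_left _, h5, h6⟩


open Classical in
/-- few values divisible by the square of a large prime -/
def SfmT (f : ℕ → ℕ) : Prop := ∃ C : ℝ, 0 < C ∧ ∀ N : ℕ, 1 ≤ N →
  ((((Finset.Icc 1 N).filter (fun n => ∃ p : ℕ, p.Prime ∧ (N : ℝ) ^ ((7 : ℝ) / 10) < p ∧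
    p ^ 2 ∣ f n)).card : ℕ) : ℝ) ≤ C * (N : ℝ) ^ ((7 : ℝ) / 10)

/-- summand of the density -/
noncomputable def sfmH (P : Polynomial ℤ) (n : ℕ) : ℝ :=
  (ArithmeticFunction.moebius n : ℝ) * sfmRho P (n ^ 2) / (n : ℝ) ^ 2

theorem sfm_tail : ∃ Z : ℝ, 0 < Z ∧ ∀ z : ℝ, 0 < z → ∀ S : Finset ℕ, (∀ d ∈ S, z < (d : ℝ)) →
    ∑ d ∈ S, (d : ℝ) ^ (-(199 : ℝ) / 100) ≤ Z * z ^ (-(9 : ℝ) / 10) := by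
  have hs : Summable (fun d : ℕ => (d : ℝ) ^ (-(109 : ℝ) / 100)) :=
    Real.summable_nat_rpow.mpr (by norm_num)
  refine ⟨(∑' d : ℕ, (d : ℝ) ^ (-(109 : ℝ) / 100)) + 1, ?_, ?_⟩
  · have : 0 ≤ ∑' d : ℕ, (d : ℝ) ^ (-(109 : ℝ) / 100) := tsum_nonneg (fun d => by positivity)
    linarith
  intro z hz S hS
  calc ∑ d ∈ S, (d : ℝ) ^ (-(199 : ℝ) / 100)
      ≤ ∑ d ∈ S, (d : ℝ) ^ (-(109 : ℝ) / 100) * z ^ (-(9 : ℝ) / 10) := by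
        apply Finset.sum_le_sum
        intro d hd
        have hdz := hS d hd
        have hd0 : (0 : ℝ) < d := hz.trans hdz
        have e : (-(199 : ℝ) / 100) = (-(109 : ℝ) / 100) + (-(9 : ℝ) / 10) := by norm_num
        rw [e, Real.rpow_add hd0]
        apply mul_le_mul_of_nonneg_left _ (by positivity)
        exact Real.rpow_le_rpow_of_nonpos hz hdz.le (by norm_num)
    _ = (∑ d ∈ S, (d : ℝ) ^ (-(109 : ℝ) / 100)) * z ^ (-(9 : ℝ) / 10) := by rw [Finset.sum_mul]
    _ ≤ _ := by
        apply mul_le_mul_of_nonneg_right _ (by positivity)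
        have := hs.sum_le_tsum S (fun d _ => by positivity)
        linarith

namespace SfmH
variable {P : Polynomial ℤ} {f : ℕ → ℕ}

theorem h_bound (h : SfmH P f) : ∃ C : ℝ, 0 < C ∧
    (∀ g : ℕ, Squarefree g → (sfmRho P (g ^ 2) : ℝ) ≤ C * (g : ℝ) ^ ((1 : ℝ) / 100)) ∧
    (∀ n : ℕ, |sfmH P n| ≤ C * (n : ℝ) ^ (-(199 : ℝ) / 100)) := by
  obtain ⟨C, hC, hC'⟩ := h.rho_eps (1 / 100) (by norm_num)
  refine ⟨C, hC, fun g hg => (hC' g hg).2, fun n => ?_⟩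
  unfold sfmH
  by_cases hn : Squarefree n
  · have hn0 : (0 : ℝ) < n := by exact_mod_cast Nat.pos_of_ne_zero hn.ne_zero
    rw [abs_div, abs_mul]
    have h1 : |((ArithmeticFunction.moebius n : ℤ) : ℝ)| = 1 := by
      exact_mod_cast ArithmeticFunction.abs_moebius_eq_one_of_squarefree hn
    rw [h1, one_mul, Nat.abs_cast, abs_of_pos (by positivity : (0 : ℝ) < (n : ℝ) ^ 2),
      div_le_iff₀ (by positivity)]
    refine (hC' n hn).2.trans (le_of_eq ?_)
    rw [mul_assoc]
    congr 1
    rw [← Real.rpow_natCast, ← Real.rpow_add hn0]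
    norm_num
  · rw [ArithmeticFunction.moebius_eq_zero_of_not_squarefree hn]
    simp
    positivity

theorem h_summable (h : SfmH P f) : Summable (fun n => ‖sfmH P n‖) := by
  obtain ⟨C, hC, _, hC'⟩ := h.h_bound
  have hs : Summable (fun d : ℕ => C * (d : ℝ) ^ (-(199 : ℝ) / 100)) :=
    (Real.summable_nat_rpow.mpr (by norm_num)).mul_left C
  exact hs.of_nonneg_of_le (fun n => norm_nonneg _) hC'

theorem h_tail (h : SfmH P f) : ∃ C : ℝ, 0 < C ∧ ∀ y : ℝ, 1 ≤ y →
    |(∑' n, sfmH P n) - ∑ d ∈ Finset.Icc 1 ⌊y⌋₊, sfmH P d| ≤ C * y ^ (-(9 : ℝ) / 10) := by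
  obtain ⟨C, hC, _, hC'⟩ := h.h_bound
  obtain ⟨Z, hZ, hZ'⟩ := sfm_tail
  refine ⟨C * Z, by positivity, fun y hy => ?_⟩
  have hs : HasSum (sfmH P) (∑' n, sfmH P n) := (Summable.of_norm h.h_summable).hasSum
  have h2 : Filter.Tendsto (fun T : Finset ℕ => |(∑ d ∈ T, sfmH P d) - ∑ d ∈ Finset.Icc 1 ⌊y⌋₊, sfmH P d|)
      Filter.atTop (nhds |(∑' n, sfmH P n) - ∑ d ∈ Finset.Icc 1 ⌊y⌋₊, sfmH P d|) := by
    have h3 : Filter.Tendsto (fun T : Finset ℕ => ∑ d ∈ T, sfmH P d) Filter.atTop (nhds (∑' n, sfmH P n)) := by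
      simpa [HasSum] using hs
    exact (h3.sub_const _).abs
  refine le_of_tendsto h2 ?_
  filter_upwards [Filter.eventually_ge_atTop (Finset.Icc 1 ⌊y⌋₊)] with T hT
  rw [← Finset.sum_sdiff hT, add_sub_cancel_right]
  have h0 : sfmH P 0 = 0 := by simp [sfmH]
  rw [← Finset.sum_erase (T \ Finset.Icc 1 ⌊y⌋₊) h0]
  refine (Finset.abs_sum_le_sum_abs _ _).trans ?_
  refine (Finset.sum_le_sum (fun d _ => hC' d)).trans ?_
  rw [← Finset.mul_sum, mul_assoc]
  apply mul_le_mul_of_nonneg_left _ hC.le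
  apply hZ' y (by linarith)
  intro d hd
  simp only [Finset.mem_erase, Finset.mem_sdiff, Finset.mem_Icc] at hd
  have : ⌊y⌋₊ < d := by
    by_contra h4
    exact hd.2.2 ⟨by omega, by omega⟩
  exact Nat.lt_of_floor_lt this

theorem rho_sum (h : SfmH P f) : ∃ C : ℝ, 0 < C ∧ ∀ N : ℕ, 1 ≤ N →
    ∑ d ∈ (Finset.Icc 1 ⌊(N : ℝ) ^ ((7 : ℝ) / 10)⌋₊).filter Squarefree, (sfmRho P (d ^ 2) : ℝ) ≤
      C * (N : ℝ) ^ ((71 : ℝ) / 100) := by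
  obtain ⟨C, hC, hC', _⟩ := h.h_bound
  refine ⟨C, hC, fun N hN => ?_⟩
  have hN1 : (1 : ℝ) ≤ N := by exact_mod_cast hN
  set y := (N : ℝ) ^ ((7 : ℝ) / 10) with hy
  have hy1 : 1 ≤ y := Real.one_le_rpow hN1 (by norm_num)
  have hyN : y ≤ N := by
    rw [hy]; nth_rewrite 2 [← Real.rpow_one (N : ℝ)]
    exact Real.rpow_le_rpow_of_exponent_le hN1 (by norm_num)
  calc ∑ d ∈ (Finset.Icc 1 ⌊y⌋₊).filter Squarefree, (sfmRho P (d ^ 2) : ℝ)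
      ≤ ∑ d ∈ (Finset.Icc 1 ⌊y⌋₊).filter Squarefree, C * (N : ℝ) ^ ((1 : ℝ) / 100) := by
        apply Finset.sum_le_sum
        intro d hd
        simp only [Finset.mem_filter, Finset.mem_Icc] at hd
        refine (hC' d hd.2).trans ?_
        have : (d : ℝ) ≤ N := ((Nat.le_floor_iff (by linarith)).mp hd.1.2).trans hyN
        gcongr
    _ = ((Finset.Icc 1 ⌊y⌋₊).filter Squarefree).card * (C * (N : ℝ) ^ ((1 : ℝ) / 100)) := by simp
    _ ≤ y * (C * (N : ℝ) ^ ((1 : ℝ) / 100)) := by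
        gcongr
        calc ((((Finset.Icc 1 ⌊y⌋₊).filter Squarefree).card : ℕ) : ℝ) ≤ ((Finset.Icc 1 ⌊y⌋₊).card : ℝ) := by
              exact_mod_cast Finset.card_filter_le _ _
          _ = (⌊y⌋₊ : ℝ) := by simp
          _ ≤ y := Nat.floor_le (by linarith)
    _ = C * (N : ℝ) ^ ((71 : ℝ) / 100) := by
        rw [hy, mul_left_comm, ← Real.rpow_add (by linarith)]
        norm_num

open Classical in
theorem exc_bound (h : SfmH P f) (hT : SfmT f) : ∃ C : ℝ, 0 < C ∧ ∀ N : ℕ, 1 ≤ N →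
    ((((Finset.Icc 1 N).filter (fun n => ∃ d : ℕ, Squarefree d ∧ d ^ 2 ∣ f n ∧
      ⌊(N : ℝ) ^ ((7 : ℝ) / 10)⌋₊ < d)).card : ℕ) : ℝ) ≤ C * (N : ℝ) ^ ((71 : ℝ) / 100) := by
  obtain ⟨CT, hCT, hCT'⟩ := hT
  obtain ⟨C1, hC1, hC1'⟩ := h.rho_sum
  obtain ⟨C2, hC2, hC2', _⟩ := h.h_bound
  obtain ⟨Z, hZ, hZ'⟩ := sfm_tail
  refine ⟨CT + (C2 * Z + C1), by positivity, fun N hN => ?_⟩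
  have hN1 : (1 : ℝ) ≤ N := by exact_mod_cast hN
  set y := (N : ℝ) ^ ((7 : ℝ) / 10) with hy
  have hy1 : 1 ≤ y := Real.one_le_rpow hN1 (by norm_num)
  set D := ((Finset.Icc 1 ⌊y⌋₊).filter Squarefree).filter (fun d : ℕ => Real.sqrt y < d) with hD
  set T := (Finset.Icc 1 N).filter (fun n => ∃ p : ℕ, p.Prime ∧ y < p ∧ p ^ 2 ∣ f n) with hTT
  have hsub : (Finset.Icc 1 N).filter (fun n => ∃ d : ℕ, Squarefree d ∧ d ^ 2 ∣ f n ∧ ⌊y⌋₊ < d) ⊆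
      T ∪ D.biUnion (fun d => (Finset.Icc 1 N).filter (fun n => d ^ 2 ∣ f n)) := by
    intro n hn
    simp only [Finset.mem_filter, hTT, hD, Finset.mem_union, Finset.mem_biUnion] at hn ⊢
    obtain ⟨hn1, d, hd1, hd2, hd3⟩ := hn
    by_cases hpp : ∃ p : ℕ, p.Prime ∧ y < p ∧ p ^ 2 ∣ f n
    · exact Or.inl ⟨hn1, hpp⟩
    · right
      push Not at hpp
      have hyd : y < d := Nat.lt_of_floor_lt hd3
      have hsy : Real.sqrt y ≤ y := by
        rw [Real.sqrt_le_left (by linarith)]; nlinarith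
      obtain ⟨e, he1, he2, he3⟩ := sfm_mid_divisor y hy1 d (by linarith) (by
        intro p hp hpd
        by_contra h4
        push Not at h4
        exact hpp p hp h4 ((pow_dvd_pow_of_dvd hpd 2).trans hd2))
      have hes := hd1.squarefree_of_dvd he1
      refine ⟨e, ⟨⟨Finset.mem_Icc.mpr ⟨Nat.pos_of_ne_zero hes.ne_zero, Nat.le_floor he3⟩, hes⟩, he2⟩,
        hn1, (pow_dvd_pow_of_dvd he1 2).trans hd2⟩
  have hc1 := (Finset.card_le_card hsub).trans (Finset.card_union_le _ _)
  have hc2 : ((((Finset.Icc 1 N).filter (fun n => ∃ d : ℕ, Squarefree d ∧ d ^ 2 ∣ f n ∧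
      ⌊y⌋₊ < d)).card : ℕ) : ℝ) ≤ (T.card : ℝ) +
        ∑ d ∈ D, ((((Finset.Icc 1 N).filter (fun n => d ^ 2 ∣ f n)).card : ℕ) : ℝ) := by
    have := hc1.trans (Nat.add_le_add_left Finset.card_biUnion_le _)
    exact_mod_cast this
  refine hc2.trans ?_
  have hp1 : y ≤ (N : ℝ) ^ ((71 : ℝ) / 100) := Real.rpow_le_rpow_of_exponent_le hN1 (by norm_num)
  rw [add_mul]
  apply add_le_add
  · refine (hCT' N hN).trans ?_
    gcongr
  have hDd : ∀ d ∈ D, 1 ≤ d ∧ Squarefree d ∧ Real.sqrt y < d := by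
    intro d hd
    simp only [hD, Finset.mem_filter, Finset.mem_Icc] at hd
    exact ⟨hd.1.1.1, hd.1.2, hd.2⟩
  calc ∑ d ∈ D, ((((Finset.Icc 1 N).filter (fun n => d ^ 2 ∣ f n)).card : ℕ) : ℝ)
      ≤ ∑ d ∈ D, (N * (C2 * (d : ℝ) ^ (-(199 : ℝ) / 100)) + (sfmRho P (d ^ 2) : ℝ)) := by
        apply Finset.sum_le_sum
        intro d hd
        obtain ⟨hd1, hd2, hd3⟩ := hDd d hd
        have hd0 : (0 : ℝ) < d := by exact_mod_cast hd1
        refine (h.count_le (d ^ 2) N (by positivity)).trans ?_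
        rw [mul_add, mul_one]
        apply add_le_add_left
        have e1 : (d : ℝ) ^ (-(199 : ℝ) / 100) = (d : ℝ) ^ ((1 : ℝ) / 100) / (d : ℝ) ^ 2 := by
          rw [eq_div_iff (by positivity), ← Real.rpow_natCast, ← Real.rpow_add hd0]
          norm_num
        rw [e1]
        have := hC2' d hd2
        calc (sfmRho P (d ^ 2) : ℝ) * (N / ((d ^ 2 : ℕ) : ℝ)) = N * ((sfmRho P (d ^ 2) : ℝ) / (d : ℝ) ^ 2) := by
              push_cast; ring
          _ ≤ N * (C2 * (d : ℝ) ^ ((1 : ℝ) / 100) / (d : ℝ) ^ 2) := by gcongr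
          _ = _ := by ring
    _ = N * (C2 * ∑ d ∈ D, (d : ℝ) ^ (-(199 : ℝ) / 100)) + ∑ d ∈ D, (sfmRho P (d ^ 2) : ℝ) := by
        rw [Finset.sum_add_distrib, ← Finset.mul_sum, ← Finset.mul_sum]
    _ ≤ C2 * Z * (N : ℝ) ^ ((71 : ℝ) / 100) + C1 * (N : ℝ) ^ ((71 : ℝ) / 100) := by
        apply add_le_add
        · have e2 := hZ' (Real.sqrt y) (by positivity) D (fun d hd => (hDd d hd).2.2)
          have e3 : (N : ℝ) * (Real.sqrt y) ^ (-(9 : ℝ) / 10) ≤ (N : ℝ) ^ ((71 : ℝ) / 100) := by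
            have hN0 : (0 : ℝ) < N := by linarith
            rw [Real.sqrt_eq_rpow, hy, ← Real.rpow_mul hN0.le, ← Real.rpow_mul hN0.le]
            nth_rewrite 1 [← Real.rpow_one (N : ℝ)]
            rw [← Real.rpow_add hN0]
            exact Real.rpow_le_rpow_of_exponent_le hN1 (by norm_num)
          calc N * (C2 * ∑ d ∈ D, (d : ℝ) ^ (-(199 : ℝ) / 100))
              ≤ N * (C2 * (Z * (Real.sqrt y) ^ (-(9 : ℝ) / 10))) := by gcongr
            _ = C2 * Z * (N * (Real.sqrt y) ^ (-(9 : ℝ) / 10)) := by ring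
            _ ≤ _ := by gcongr
        · refine le_trans ?_ (hC1' N hN)
          apply Finset.sum_le_sum_of_subset_of_nonneg (Finset.filter_subset _ _)
          intros; positivity
    _ = _ := by ring

end SfmH


namespace SfmH
variable {P : Polynomial ℤ} {f : ℕ → ℕ}

theorem mob_swap (h : SfmH P f) (N Y : ℕ) :
    |(∑ n ∈ Finset.Icc 1 N, (∑ d ∈ (Finset.Icc 1 Y).filter (fun d => d ^ 2 ∣ f n),
      (ArithmeticFunction.moebius d : ℝ))) - N * ∑ d ∈ Finset.Icc 1 Y, sfmH P d| ≤
      ∑ d ∈ (Finset.Icc 1 Y).filter Squarefree, (sfmRho P (d ^ 2) : ℝ) := by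
  have e1 : (∑ n ∈ Finset.Icc 1 N, (∑ d ∈ (Finset.Icc 1 Y).filter (fun d => d ^ 2 ∣ f n),
      (ArithmeticFunction.moebius d : ℝ))) = ∑ d ∈ Finset.Icc 1 Y, (ArithmeticFunction.moebius d : ℝ) *
        ((((Finset.Icc 1 N).filter (fun n : ℕ => d ^ 2 ∣ f n)).card : ℕ) : ℝ) := by
    simp_rw [Finset.sum_filter]
    rw [Finset.sum_comm]
    apply Finset.sum_congr rfl
    intro d _
    rw [← Finset.sum_filter, Finset.sum_const, nsmul_eq_mul, mul_comm]
  rw [e1, Finset.mul_sum, ← Finset.sum_sub_distrib, Finset.sum_filter]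
  refine (Finset.abs_sum_le_sum_abs _ _).trans ?_
  apply Finset.sum_le_sum
  intro d hd
  rw [Finset.mem_Icc] at hd
  unfold sfmH
  split_ifs with hs
  · have h1 := sfm_count P (d ^ 2) N (by have := hd.1; positivity)
    have h2 : (Finset.Icc 1 N).filter (fun n : ℕ => ((d ^ 2 : ℕ) : ℤ) ∣ P.eval (n : ℤ)) =
        (Finset.Icc 1 N).filter (fun n : ℕ => d ^ 2 ∣ f n) := by
      apply Finset.filter_congr
      intro n hn
      rw [Finset.mem_Icc] at hn
      rw [← h.val n hn.1, Int.natCast_dvd_natCast]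
    rw [h2] at h1
    have h3 : |((ArithmeticFunction.moebius d : ℤ) : ℝ)| = 1 := by
      exact_mod_cast ArithmeticFunction.abs_moebius_eq_one_of_squarefree hs
    have h4 : (ArithmeticFunction.moebius d : ℝ) *
        ((((Finset.Icc 1 N).filter (fun n : ℕ => d ^ 2 ∣ f n)).card : ℕ) : ℝ) -
        N * ((ArithmeticFunction.moebius d : ℝ) * (sfmRho P (d ^ 2)) / (d : ℝ) ^ 2) =
        (ArithmeticFunction.moebius d : ℝ) *
        (((((Finset.Icc 1 N).filter (fun n : ℕ => d ^ 2 ∣ f n)).card : ℕ) : ℝ) -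
          (N : ℝ) * (sfmRho P (d ^ 2) / ((d ^ 2 : ℕ) : ℝ))) := by push_cast; ring
    rw [h4, abs_mul, h3, one_mul]
    exact h1
  · rw [ArithmeticFunction.moebius_eq_zero_of_not_squarefree hs]
    simp

open Classical in
theorem density (h : SfmH P f) (hT : SfmT f) : ∃ C : ℝ, 0 < C ∧ ∀ N : ℕ, 1 ≤ N →
    |((((Finset.Icc 1 N).filter (fun n => Squarefree (f n))).card : ℕ) : ℝ) - (∑' n, sfmH P n) * N| ≤
      C * (N : ℝ) ^ ((3 : ℝ) / 4) := by
  obtain ⟨C1, hC1, hC1'⟩ := h.rho_sum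
  obtain ⟨C2, hC2, hC2'⟩ := h.h_tail
  obtain ⟨C3, hC3, hC3'⟩ := h.exc_bound hT
  obtain ⟨C4, hC4, hC4'⟩ := h.omega_eps (1 / 100) (by norm_num)
  refine ⟨C1 + C2 + C3 * (1 + C4), by positivity, fun N hN => ?_⟩
  have hN1 : (1 : ℝ) ≤ N := by exact_mod_cast hN
  have hN0 : (0 : ℝ) < N := by linarith
  set y := (N : ℝ) ^ ((7 : ℝ) / 10) with hy
  have hy1 : 1 ≤ y := Real.one_le_rpow hN1 (by norm_num)
  set κ := ∑' n, sfmH P n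
  set A : ℕ → ℝ := fun n => ∑ d ∈ (Finset.Icc 1 ⌊y⌋₊).filter (fun d => d ^ 2 ∣ f n),
      (ArithmeticFunction.moebius d : ℝ) with hA
  set E := (Finset.Icc 1 N).filter (fun n => ∃ d : ℕ, Squarefree d ∧ d ^ 2 ∣ f n ∧
      ⌊y⌋₊ < d) with hE
  have hs1 := h.mob_swap N ⌊y⌋₊
  have hs2 := hC1' N hN
  have hs3 := hC2' y hy1
  have hs4 := hC3' N hN
  have hcard : ((((Finset.Icc 1 N).filter (fun n => Squarefree (f n))).card : ℕ) : ℝ) =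
      ∑ n ∈ Finset.Icc 1 N, (if Squarefree (f n) then (1 : ℝ) else 0) := by
    rw [← Finset.sum_filter]; simp
  have hdiff : |(∑ n ∈ Finset.Icc 1 N, (if Squarefree (f n) then (1 : ℝ) else 0)) -
      ∑ n ∈ Finset.Icc 1 N, A n| ≤ E.card * ((1 + C4) * (N : ℝ) ^ ((1 : ℝ) / 100)) := by
    rw [← Finset.sum_sub_distrib]
    refine (Finset.abs_sum_le_sum_abs _ _).trans ?_
    rw [← nsmul_eq_mul, ← Finset.sum_const, hE, Finset.sum_filter]
    apply Finset.sum_le_sum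
    intro n hn
    rw [Finset.mem_Icc] at hn
    have hfn : f n ≠ 0 := by have := h.pos n hn.1; omega
    split_ifs with c1 c2 c2
    · have := sfm_mob_le (f n) ⌊y⌋₊ hfn
      have h2 : |A n| ≤ 2 ^ (f n).primeFactors.card := by
        simp only [hA]; exact_mod_cast this
      have h3 := hC4' n N hn.1 hn.2
      have h4 : 1 ≤ (N : ℝ) ^ ((1 : ℝ) / 100) := Real.one_le_rpow hN1 (by norm_num)
      calc |1 - A n| ≤ |1| + |A n| := abs_sub _ _
        _ ≤ _ := by rw [abs_one]; linarith
    · have := sfm_mob_eq (f n) ⌊y⌋₊ hfn (by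
        intro d hd1 hd2; by_contra h5; exact c2 ⟨d, hd1, hd2, by omega⟩)
      have h2 : A n = 1 := by
        simp only [hA]
        simp only [c1, if_true] at this
        exact_mod_cast this
      simp [h2]
    · have := sfm_mob_le (f n) ⌊y⌋₊ hfn
      have h2 : |A n| ≤ 2 ^ (f n).primeFactors.card := by
        simp only [hA]; exact_mod_cast this
      have h3 := hC4' n N hn.1 hn.2
      have h4 : 1 ≤ (N : ℝ) ^ ((1 : ℝ) / 100) := Real.one_le_rpow hN1 (by norm_num)
      rw [zero_sub, abs_neg]
      linarith
    · have := sfm_mob_eq (f n) ⌊y⌋₊ hfn (by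
        intro d hd1 hd2; by_contra h5; exact c2 ⟨d, hd1, hd2, by omega⟩)
      have h2 : A n = 0 := by
        simp only [hA]
        simp only [c1, if_false] at this
        exact_mod_cast this
      simp [h2]
  set W := (N : ℝ) ^ ((3 : ℝ) / 4) with hW
  have hb1 : (N : ℝ) ^ ((71 : ℝ) / 100) ≤ W :=
    Real.rpow_le_rpow_of_exponent_le hN1 (by norm_num)
  have hb2 : N * y ^ (-(9 : ℝ) / 10) ≤ W := by
    rw [hy, ← Real.rpow_mul hN0.le]
    nth_rewrite 1 [← Real.rpow_one (N : ℝ)]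
    rw [← Real.rpow_add hN0]
    exact Real.rpow_le_rpow_of_exponent_le hN1 (by norm_num)
  have hb3 : (N : ℝ) ^ ((71 : ℝ) / 100) * (N : ℝ) ^ ((1 : ℝ) / 100) ≤ W := by
    rw [← Real.rpow_add hN0]
    exact Real.rpow_le_rpow_of_exponent_le hN1 (by norm_num)
  have t1 : |(∑ n ∈ Finset.Icc 1 N, (if Squarefree (f n) then (1 : ℝ) else 0)) -
      ∑ n ∈ Finset.Icc 1 N, A n| ≤ C3 * (1 + C4) * W := by
    refine hdiff.trans ?_
    calc (E.card : ℝ) * ((1 + C4) * (N : ℝ) ^ ((1 : ℝ) / 100))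
        ≤ (C3 * (N : ℝ) ^ ((71 : ℝ) / 100)) * ((1 + C4) * (N : ℝ) ^ ((1 : ℝ) / 100)) := by gcongr
      _ = C3 * (1 + C4) * ((N : ℝ) ^ ((71 : ℝ) / 100) * (N : ℝ) ^ ((1 : ℝ) / 100)) := by ring
      _ ≤ _ := by gcongr
  have t2 : |(∑ n ∈ Finset.Icc 1 N, A n) - N * ∑ d ∈ Finset.Icc 1 ⌊y⌋₊, sfmH P d| ≤ C1 * W :=
    hs1.trans (hs2.trans (by gcongr))
  have t3 : |N * (∑ d ∈ Finset.Icc 1 ⌊y⌋₊, sfmH P d) - κ * N| ≤ C2 * W := by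
    rw [mul_comm κ, ← mul_sub, abs_mul, Nat.abs_cast, abs_sub_comm]
    calc (N : ℝ) * |κ - ∑ d ∈ Finset.Icc 1 ⌊y⌋₊, sfmH P d| ≤ N * (C2 * y ^ (-(9 : ℝ) / 10)) := by gcongr
      _ = C2 * (N * y ^ (-(9 : ℝ) / 10)) := by ring
      _ ≤ _ := by gcongr
  rw [hcard]
  calc _ ≤ _ := abs_sub_le _ (∑ n ∈ Finset.Icc 1 N, A n) _
    _ ≤ C3 * (1 + C4) * W + (C1 * W + C2 * W) := by
      gcongr
      exact (abs_sub_le _ (N * ∑ d ∈ Finset.Icc 1 ⌊y⌋₊, sfmH P d) _).trans (by gcongr)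
    _ = _ := by ring

theorem kappa_pos (h : SfmH P f) (hT : SfmT f)
    (hadm : ¬ ∃ p : ℕ, p.Prime ∧ ∀ n : ℕ, 0 < n → (p : ℤ)^2 ∣ P.eval (n : ℤ)) :
    0 < ∑' n, sfmH P n := by
  have hnn : 0 ≤ ∑' n, sfmH P n := by
    obtain ⟨C, hC, hC'⟩ := h.density hT
    by_contra hneg
    push Not at hneg
    set κ := ∑' n, sfmH P n
    have h1 : Filter.Tendsto (fun N : ℕ => (N : ℝ) ^ ((1 : ℝ) / 4)) Filter.atTop Filter.atTop :=
      (tendsto_rpow_atTop (by norm_num)).comp tendsto_natCast_atTop_atTop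
    obtain ⟨N, hN1, hN2⟩ := ((h1.eventually_gt_atTop (C / (-κ))).and
      (Filter.eventually_ge_atTop 1)).exists
    have h2 := (abs_le.mp (hC' N hN2)).2
    have hN0 : (0 : ℝ) < N := by exact_mod_cast hN2
    have h3 : (N : ℝ) = (N : ℝ) ^ ((1 : ℝ) / 4) * (N : ℝ) ^ ((3 : ℝ) / 4) := by
      rw [← Real.rpow_add hN0]; norm_num
    rw [div_lt_iff₀ (by linarith)] at hN1
    have h4 : 0 < (N : ℝ) ^ ((3 : ℝ) / 4) := by positivity
    have h5 : C * (N : ℝ) ^ ((3 : ℝ) / 4) < -κ * N := by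
      nth_rewrite 2 [h3]
      nlinarith
    have h6 : (0 : ℝ) ≤ (((Finset.Icc 1 N).filter (fun n => Squarefree (f n))).card : ℕ) := Nat.cast_nonneg _
    have h7 : ((((Finset.Icc 1 N).filter (fun n => Squarefree (f n))).card : ℕ) : ℝ) - κ * N ≤
        C * (N : ℝ) ^ ((3 : ℝ) / 4) := by convert h2
    linarith
  refine lt_of_le_of_ne hnn (Ne.symm ?_)
  have hep := EulerProduct.eulerProduct_hasProd (f := sfmH P) (by simp [sfmH, sfm_rho_one])
    (by
      intro m n hmn
      unfold sfmH
      rw [ArithmeticFunction.isMultiplicative_moebius.map_mul_of_coprime hmn, mul_pow,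
        sfm_rho_mul P _ _ (hmn.pow 2 2)]
      push_cast
      rw [mul_pow]
      by_cases hm : m = 0
      · subst hm; simp
      by_cases hn : n = 0
      · subst hn; simp
      field_simp) h.h_summable (by simp [sfmH])
  rw [← hep.tprod_eq]
  have hfac : ∀ p : Nat.Primes, ∑' e, sfmH P (p ^ e : ℕ) = 1 + sfmH P p := by
    intro p
    rw [tsum_eq_sum (s := Finset.range 2)]
    · simp [Finset.sum_range_succ, sfmH, sfm_rho_one]
    · intro e he
      simp at he
      unfold sfmH
      rw [ArithmeticFunction.moebius_eq_zero_of_not_squarefree]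
      · simp
      · intro hsq
        rw [Nat.squarefree_pow_iff p.prop.ne_one (by omega)] at hsq
        omega
  simp_rw [hfac]
  apply tprod_one_add_ne_zero_of_summable
  · intro p hp
    apply hadm
    refine ⟨p, p.prop, fun n hn => ?_⟩
    have hp0 : (0 : ℝ) < (p : ℕ) := by exact_mod_cast p.prop.pos
    unfold sfmH at hp
    rw [ArithmeticFunction.moebius_apply_prime p.prop] at hp
    have h1 : (sfmRho P ((p : ℕ) ^ 2) : ℝ) = (((p : ℕ) ^ 2 : ℕ) : ℝ) := by
      push_cast at hp ⊢
      field_simp at hp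
      linarith
    have h2 : sfmRho P ((p : ℕ) ^ 2) = (p : ℕ) ^ 2 := by exact_mod_cast h1
    unfold sfmRho at h2
    have h3 := (Finset.card_filter_eq_iff (s := Finset.range ((p : ℕ) ^ 2))).mp (by rw [h2]; simp)
    have h4 := h3 (n % (p : ℕ) ^ 2) (Finset.mem_range.mpr (Nat.mod_lt _ (by have := p.prop.pos; positivity)))
    have h5 := (sfm_dvd_iff P ((p : ℕ) ^ 2) _ n (Nat.mod_modEq n _)).mp h4
    exact_mod_cast h5
  · exact h.h_summable.comp_injective (i := fun p : Nat.Primes => (p : ℕ)) Subtype.coe_injective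

end SfmH


theorem sfmT_linear (k : ℕ) (a b : Fin k → ℤ) (f : ℕ → ℕ)
    (hΔ : ∀ i j, i ≠ j → a i * b j - a j * b i ≠ 0)
    (hval : ∀ n : ℕ, 1 ≤ n → (f n : ℤ) = ∏ i, (a i * n + b i))
    (hpos : ∀ n : ℕ, 1 ≤ n → 1 ≤ f n) : SfmT f := by
  classical
  set A : ℤ := (∑ i, (|a i| + |b i|)) + 1 with hA
  set B : ℤ := (∑ i, ∑ j, |a i * b j - a j * b i|) + 1 with hB
  have hA1 : 1 ≤ A := by
    have : 0 ≤ ∑ i, (|a i| + |b i|) := Finset.sum_nonneg (fun i _ => by positivity)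
    omega
  have hB1 : 1 ≤ B := by
    have : 0 ≤ ∑ i, ∑ j, |a i * b j - a j * b i| :=
      Finset.sum_nonneg (fun i _ => Finset.sum_nonneg (fun j _ => by positivity))
    omega
  have hA1' : (1 : ℝ) ≤ A := by exact_mod_cast hA1
  have hB1' : (1 : ℝ) ≤ B := by exact_mod_cast hB1
  refine ⟨(A : ℝ) ^ 3 + (B : ℝ) ^ 2 + 1, by positivity, fun N hN => ?_⟩
  have hN1 : (1 : ℝ) ≤ N := by exact_mod_cast hN
  have hN0 : (0 : ℝ) < N := by linarith
  rcases Finset.eq_empty_or_nonempty ((Finset.Icc 1 N).filter (fun n => ∃ p : ℕ, p.Prime ∧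
    (N : ℝ) ^ ((7 : ℝ) / 10) < p ∧ p ^ 2 ∣ f n)) with h0 | ⟨n, hn⟩
  · unfold SfmT at *
    rw [h0]
    simp only [Finset.card_empty, Nat.cast_zero]
    positivity
  have hcard : ((((Finset.Icc 1 N).filter (fun n => ∃ p : ℕ, p.Prime ∧
    (N : ℝ) ^ ((7 : ℝ) / 10) < p ∧ p ^ 2 ∣ f n)).card : ℕ) : ℝ) ≤ N := by
    have := Finset.card_filter_le (Finset.Icc 1 N) (fun n => ∃ p : ℕ, p.Prime ∧
      (N : ℝ) ^ ((7 : ℝ) / 10) < p ∧ p ^ 2 ∣ f n)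
    rw [Nat.card_Icc] at this
    exact_mod_cast this
  refine hcard.trans ?_
  simp only [Finset.mem_filter, Finset.mem_Icc] at hn
  obtain ⟨⟨hn1, hn2⟩, p, hp, hpy, hpd⟩ := hn
  have hy1 : 1 ≤ (N : ℝ) ^ ((7 : ℝ) / 10) := Real.one_le_rpow hN1 (by norm_num)
  suffices hs : (N : ℝ) ≤ (A : ℝ) ^ 3 ∨ (N : ℝ) ≤ (B : ℝ) ^ 2 by
    have e1 : 0 ≤ (A : ℝ) ^ 3 := by positivity
    have e2 : 0 ≤ (B : ℝ) ^ 2 := by positivity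
    have : (N : ℝ) ≤ (A : ℝ) ^ 3 + (B : ℝ) ^ 2 + 1 := by rcases hs with hs | hs <;> linarith
    nlinarith
  by_cases hpB : (p : ℤ) ≤ B
  · right
    have hpB' : (p : ℝ) ≤ B := by exact_mod_cast hpB
    have h1 : (N : ℝ) ^ ((7 : ℝ) / 10) ≤ B := by linarith
    calc (N : ℝ) = ((N : ℝ) ^ (1 / 2 : ℝ)) ^ 2 := by
          rw [← Real.rpow_natCast, ← Real.rpow_mul hN0.le]; norm_num
      _ ≤ ((N : ℝ) ^ (7 / 10 : ℝ)) ^ 2 := by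
          have := Real.rpow_le_rpow_of_exponent_le hN1 (show (1 / 2 : ℝ) ≤ 7 / 10 by norm_num)
          gcongr
      _ ≤ _ := by gcongr
  · left
    push Not at hpB
    have hpp : Prime (p : ℤ) := Nat.prime_iff_prime_int.mp hp
    have hpd' : (p : ℤ) ^ 2 ∣ ∏ i, (a i * n + b i) := by
      rw [← hval n hn1]; exact_mod_cast hpd
    obtain ⟨i, _, hi⟩ := (Prime.dvd_finset_prod_iff hpp _).mp ((dvd_pow_self _ (two_ne_zero)).trans hpd')
    have hj : ∀ j ∈ Finset.univ.erase i, IsCoprime ((p : ℤ) ^ 2) (a j * n + b j) := by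
      intro j hj
      have hji : j ≠ i := (Finset.mem_erase.mp hj).1
      apply IsCoprime.pow_left
      rw [Prime.coprime_iff_not_dvd hpp]
      intro hdj
      have h1 : (p : ℤ) ∣ a i * b j - a j * b i := by
        have : a i * b j - a j * b i = a i * (a j * n + b j) - a j * (a i * n + b i) := by ring
        rw [this]
        exact dvd_sub (hdj.mul_left _) (hi.mul_left _)
      have h2 : (p : ℤ) ≤ |a i * b j - a j * b i| :=
        Int.le_of_dvd (abs_pos.mpr (hΔ i j hji.symm)) ((dvd_abs _ _).mpr h1)
      have h3 : |a i * b j - a j * b i| ≤ ∑ i, ∑ j, |a i * b j - a j * b i| := by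
        refine le_trans ?_ (Finset.single_le_sum (f := fun i => ∑ j, |a i * b j - a j * b i|)
          (fun i _ => Finset.sum_nonneg (fun j _ => abs_nonneg _)) (Finset.mem_univ i))
        exact Finset.single_le_sum (f := fun j => |a i * b j - a j * b i|)
          (fun j _ => abs_nonneg _) (Finset.mem_univ j)
      omega
    have hcop := IsCoprime.prod_right hj
    rw [← Finset.mul_prod_erase _ _ (Finset.mem_univ i)] at hpd'
    have hdi := hcop.dvd_of_dvd_mul_right hpd'
    have hne : a i * n + b i ≠ 0 := by
      intro h0
      have h1 := hval n hn1
      rw [← Finset.mul_prod_erase _ _ (Finset.mem_univ i), h0, zero_mul] at h1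
      have := hpos n hn1
      omega
    have hle : (p : ℤ) ^ 2 ≤ |a i * n + b i| :=
      Int.le_of_dvd (abs_pos.mpr hne) ((dvd_abs _ _).mpr hdi)
    have hle2 : |a i * n + b i| ≤ A * N := by
      have h1 : |a i| + |b i| ≤ A := by
        have := Finset.single_le_sum (f := fun i => |a i| + |b i|) (fun i _ => by positivity) (Finset.mem_univ i)
        omega
      have hn1' : (1 : ℤ) ≤ n := by exact_mod_cast hn1
      have hn2' : (n : ℤ) ≤ N := by exact_mod_cast hn2
      calc |a i * n + b i| ≤ |a i * n| + |b i| := abs_add_le _ _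
        _ = |a i| * n + |b i| := by rw [abs_mul, Nat.abs_cast]
        _ ≤ |a i| * N + |b i| * N := by
            have := abs_nonneg (a i); have := abs_nonneg (b i)
            nlinarith
        _ = (|a i| + |b i|) * N := by ring
        _ ≤ A * N := by gcongr
    have hfin : (p : ℝ) ^ 2 ≤ A * N := by exact_mod_cast hle.trans hle2
    have h2 : ((N : ℝ) ^ ((7 : ℝ) / 10)) ^ 2 ≤ A * N := le_trans (by gcongr) hfin
    have h3 : ((N : ℝ) ^ ((7 : ℝ) / 10)) ^ 2 = (N : ℝ) ^ ((2 : ℝ) / 5) * N := by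
      nth_rewrite 3 [← Real.rpow_one (N : ℝ)]
      rw [← Real.rpow_add hN0, ← Real.rpow_natCast, ← Real.rpow_mul hN0.le]; norm_num
    rw [h3] at h2
    have h4 : (N : ℝ) ^ ((2 : ℝ) / 5) ≤ A := le_of_mul_le_mul_right h2 hN0
    calc (N : ℝ) = ((N : ℝ) ^ (1 / 3 : ℝ)) ^ 3 := by
          rw [← Real.rpow_natCast, ← Real.rpow_mul hN0.le]; norm_num
      _ ≤ ((N : ℝ) ^ (2 / 5 : ℝ)) ^ 3 := by
          have := Real.rpow_le_rpow_of_exponent_le hN1 (show (1 / 3 : ℝ) ≤ 2 / 5 by norm_num)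
          gcongr
      _ ≤ _ := by gcongr

theorem sfm_pell_inj (M : ℕ) (hM : 1 ≤ M) (D : ℤ) (hD : D ≠ 0) (X1 d1 X2 d2 : ℕ)
    (hX1 : 1 ≤ X1) (hX2 : 1 ≤ X2)
    (e1 : (X1 : ℤ) ^ 2 - M * (d1 : ℤ) ^ 2 = D) (e2 : (X2 : ℤ) ^ 2 - M * (d2 : ℤ) ^ 2 = D)
    (hX : X1 % D.natAbs = X2 % D.natAbs) (hd : d1 % D.natAbs = d2 % D.natAbs)
    (h12 : (X1 : ℝ) + d1 * Real.sqrt M < 2 * (X2 + d2 * Real.sqrt M))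
    (h21 : (X2 : ℝ) + d2 * Real.sqrt M < 2 * (X1 + d1 * Real.sqrt M)) : X1 = X2 ∧ d1 = d2 := by
  have dX : D ∣ (X2 : ℤ) - X1 := by
    have := (Nat.modEq_iff_dvd).mp (show X1 ≡ X2 [MOD D.natAbs] from hX)
    exact Int.natAbs_dvd.mp this
  have dd : D ∣ (d2 : ℤ) - d1 := by
    have := (Nat.modEq_iff_dvd).mp (show d1 ≡ d2 [MOD D.natAbs] from hd)
    exact Int.natAbs_dvd.mp this
  obtain ⟨u, hu⟩ : D ∣ (X1 : ℤ) * X2 - M * d1 * d2 := by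
    have : (X1 : ℤ) * X2 - M * d1 * d2 = X1 * (X2 - X1) - M * d1 * (d2 - d1) + D := by
      rw [← e1]; ring
    rw [this]
    exact dvd_add (dvd_sub (dX.mul_left _) (dd.mul_left _)) dvd_rfl
  set w := Real.sqrt M with hw
  have hw2 : w ^ 2 = M := Real.sq_sqrt (by positivity)
  have hw0 : 0 ≤ w := Real.sqrt_nonneg _
  set α1 : ℝ := X1 + d1 * w with hα1
  set α2 : ℝ := X2 + d2 * w with hα2
  have hX1r : (1 : ℝ) ≤ X1 := by exact_mod_cast hX1
  have hX2r : (1 : ℝ) ≤ X2 := by exact_mod_cast hX2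
  have p1 : 0 < α1 := by positivity
  have p2 : 0 < α2 := by positivity
  have hDr : (D : ℝ) ≠ 0 := by exact_mod_cast hD
  have e1r : α1 * ((X1 : ℝ) - d1 * w) = D := by
    have : ((X1 : ℝ)) ^ 2 - M * (d1 : ℝ) ^ 2 = D := by exact_mod_cast e1
    rw [← this, ← hw2]; ring
  have e2r : α2 * ((X2 : ℝ) - d2 * w) = D := by
    have : ((X2 : ℝ)) ^ 2 - M * (d2 : ℝ) ^ 2 = D := by exact_mod_cast e2
    rw [← this, ← hw2]; ring
  have hur : (X1 : ℝ) * X2 - M * d1 * d2 = D * u := by exact_mod_cast hu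
  have h2u : 2 * (u : ℝ) * (α1 * α2) = α1 ^ 2 + α2 ^ 2 := by
    have h1 : 2 * (D * (u : ℝ)) = α2 * (X1 - d1 * w) + α1 * (X2 - d2 * w) := by
      rw [← hur, ← hw2]; ring
    apply mul_left_cancel₀ hDr
    calc (D : ℝ) * (2 * (u : ℝ) * (α1 * α2)) = 2 * (D * (u : ℝ)) * (α1 * α2) := by ring
      _ = α2 ^ 2 * (α1 * (X1 - d1 * w)) + α1 ^ 2 * (α2 * (X2 - d2 * w)) := by rw [h1]; ring
      _ = _ := by rw [e1r, e2r]; ring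
  have hu2 : u < 2 := by
    by_contra h
    push Not at h
    have hr : (2 : ℝ) ≤ u := by exact_mod_cast h
    have := mul_pos p1 p2
    nlinarith [mul_pos (sub_pos.mpr h12) (sub_pos.mpr h21)]
  have hu1 : 0 < u := by
    have : 0 < 2 * (u : ℝ) * (α1 * α2) := by rw [h2u]; positivity
    have h3 : 0 < 2 * (u : ℝ) := pos_of_mul_pos_left this (mul_pos p1 p2).le
    have h4 : (0 : ℝ) < u := by linarith
    exact_mod_cast h4
  have hu3 : u = 1 := by omega
  subst hu3
  have hαα : α1 = α2 := by
    have : (α1 - α2) ^ 2 = 0 := by push_cast at h2u; nlinarith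
    have := pow_eq_zero_iff (two_ne_zero) |>.mp this
    linarith
  have hββ : (X1 : ℝ) - d1 * w = X2 - d2 * w := by
    apply mul_left_cancel₀ p1.ne'
    rw [e1r, hαα, e2r]
  have hXX : (X1 : ℝ) = X2 := by linarith
  have hw1 : 0 < w := Real.sqrt_pos.mpr (by exact_mod_cast hM)
  have hdd : (d1 : ℝ) = d2 := by
    have : (d1 : ℝ) * w = d2 * w := by linarith
    exact mul_right_cancel₀ hw1.ne' this
  exact ⟨by exact_mod_cast hXX, by exact_mod_cast hdd⟩

theorem sfm_pell_count (M : ℕ) (hM : 1 ≤ M) (D : ℤ) (hD : D ≠ 0) (Z : ℕ) (S : Finset (ℕ × ℕ))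
    (hS : ∀ q ∈ S, 1 ≤ q.1 ∧ q.1 ≤ Z ∧ (q.1 : ℤ) ^ 2 - M * (q.2 : ℤ) ^ 2 = D) :
    S.card ≤ D.natAbs ^ 2 * (Nat.log 2 (2 * Z + D.natAbs) + 1) := by
  set φ : ℕ × ℕ → ℝ := fun q => (q.1 : ℝ) + q.2 * Real.sqrt M with hφ
  have hD0 : 0 < D.natAbs := by omega
  have hmap : ∀ q ∈ S, (q.1 % D.natAbs, q.2 % D.natAbs, Nat.log 2 ⌊φ q⌋₊) ∈
      (Finset.range D.natAbs) ×ˢ (Finset.range D.natAbs) ×ˢ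
        (Finset.range (Nat.log 2 (2 * Z + D.natAbs) + 1)) := by
    intro q hq
    obtain ⟨h1, h2, h3⟩ := hS q hq
    simp only [Finset.mem_product, Finset.mem_range]
    refine ⟨Nat.mod_lt _ hD0, Nat.mod_lt _ hD0, Nat.lt_succ_of_le (Nat.log_mono_right ?_)⟩
    have hd : (q.2 : ℝ) * Real.sqrt M ≤ Z + D.natAbs := by
      apply abs_le_of_sq_le_sq' _ (by positivity) |>.2
      rw [mul_pow, Real.sq_sqrt (by positivity)]
      have h3r : ((q.1 : ℝ)) ^ 2 - M * (q.2 : ℝ) ^ 2 = D := by exact_mod_cast h3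
      have h4 : -(D : ℝ) ≤ D.natAbs := by
        rw [Nat.cast_natAbs]; push_cast; exact neg_le_abs _
      have h5 : (1 : ℝ) ≤ D.natAbs := by exact_mod_cast hD0
      have h6 : (q.1 : ℝ) ≤ Z := by exact_mod_cast h2
      have h7 : (0 : ℝ) ≤ q.1 := by positivity
      nlinarith
    have : φ q ≤ ((2 * Z + D.natAbs : ℕ) : ℝ) := by
      have h6 : (q.1 : ℝ) ≤ Z := by exact_mod_cast h2
      simp only [hφ]; push_cast at hd ⊢; linarith
    exact Nat.floor_le_of_le this
  have hinj : Set.InjOn (fun q : ℕ × ℕ => (q.1 % D.natAbs, q.2 % D.natAbs, Nat.log 2 ⌊φ q⌋₊)) S := by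
    intro q hq r hr hqr
    obtain ⟨h1, h2, h3⟩ := hS q hq
    obtain ⟨g1, g2, g3⟩ := hS r hr
    simp only [Prod.mk.injEq] at hqr
    have key : ∀ s t : ℕ × ℕ, 1 ≤ s.1 → 1 ≤ t.1 → Nat.log 2 ⌊φ s⌋₊ = Nat.log 2 ⌊φ t⌋₊ → φ s < 2 * φ t := by
      intro s t hs ht hst
      have hs1 : (1 : ℝ) ≤ φ s := by
        have : (1 : ℝ) ≤ s.1 := by exact_mod_cast hs
        have h0 : 0 ≤ (s.2 : ℝ) * Real.sqrt M := by positivity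
        simp only [hφ]; linarith
      have ht1 : (1 : ℝ) ≤ φ t := by
        have : (1 : ℝ) ≤ t.1 := by exact_mod_cast ht
        have h0 : 0 ≤ (t.2 : ℝ) * Real.sqrt M := by positivity
        simp only [hφ]; linarith
      have a1 : ⌊φ s⌋₊ < 2 ^ (Nat.log 2 ⌊φ s⌋₊ + 1) := Nat.lt_pow_succ_log_self (by norm_num) _
      have a2 : 2 ^ (Nat.log 2 ⌊φ t⌋₊) ≤ ⌊φ t⌋₊ := Nat.pow_log_le_self 2 (by
        have := Nat.le_floor (α := ℝ) (n := 1) (a := φ t) (by exact_mod_cast ht1); omega)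
      have b1 : φ s < ((2 ^ (Nat.log 2 ⌊φ s⌋₊ + 1) : ℕ) : ℝ) := (Nat.floor_lt (by linarith)).mp a1
      have b2 : ((2 ^ (Nat.log 2 ⌊φ t⌋₊) : ℕ) : ℝ) ≤ φ t := (Nat.le_floor_iff (by linarith)).mp a2
      rw [hst] at b1
      push_cast at b1 b2
      rw [pow_succ] at b1
      linarith
    have := sfm_pell_inj M hM D hD q.1 q.2 r.1 r.2 h1 g1 h3 g3 hqr.1 hqr.2.1
      (key q r h1 g1 hqr.2.2) (key r q g1 h1 hqr.2.2.symm)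
    exact Prod.ext this.1 this.2
  refine (Finset.card_le_card_of_injOn _ hmap hinj).trans (le_of_eq ?_)
  simp only [Finset.card_product, Finset.card_range]
  ring


theorem sfm_log_bound (A : ℕ) : ∃ C : ℝ, 0 < C ∧ ∀ N : ℕ, 1 ≤ N →
    ((Nat.log 2 (A * N) + 1 : ℕ) : ℝ) ≤ C * (N : ℝ) ^ ((1 : ℝ) / 20) := by
  refine ⟨1 + ((A : ℝ) ^ ((1 : ℝ) / 20) / (1 / 20)) / Real.log 2, by positivity, fun N hN => ?_⟩
  have hN1 : (1 : ℝ) ≤ N := by exact_mod_cast hN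
  have h1 : ((Nat.log 2 (A * N) : ℕ) : ℝ) ≤ Real.logb 2 ((A * N : ℕ) : ℝ) := by
    exact_mod_cast Real.natLog_le_logb (A * N) 2
  have h2 := Real.log_le_rpow_div (x := ((A * N : ℕ) : ℝ)) (by positivity) (show (0 : ℝ) < 1 / 20 by norm_num)
  have hl : 0 < Real.log 2 := Real.log_pos (by norm_num)
  have h4 : 1 ≤ (N : ℝ) ^ ((1 : ℝ) / 20) := Real.one_le_rpow hN1 (by norm_num)
  push_cast at h1 h2 ⊢
  rw [Real.mul_rpow (by positivity) (by positivity)] at h2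
  have h3 : Real.logb 2 ((A : ℝ) * N) ≤ ((A : ℝ) ^ ((1 : ℝ) / 20) / (1 / 20)) / Real.log 2 * (N : ℝ) ^ ((1 : ℝ) / 20) := by
    rw [Real.logb]
    rw [div_mul_eq_mul_div]
    apply div_le_div_of_nonneg_right _ hl.le
    refine h2.trans (le_of_eq ?_)
    ring
  linarith

theorem sfmT_quadratic {P : Polynomial ℤ} {f : ℕ → ℕ} (h : SfmH P f) (h2 : P.natDegree = 2) : SfmT f := by
  classical
  set a := P.coeff 2 with ha
  set b := P.coeff 1 with hb
  set c := P.coeff 0 with hc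
  have hPe : P = Polynomial.C a * Polynomial.X ^ 2 + Polynomial.C b * Polynomial.X + Polynomial.C c :=
    Polynomial.eq_quadratic_of_degree_le_two (by
      rw [Polynomial.degree_eq_natDegree h.ne_zero, h2]; rfl)
  have ha0 : 0 < a := by
    have := h.growth.1
    rwa [Polynomial.leadingCoeff, h2] at this
  set D := b ^ 2 - 4 * a * c with hDdef
  have hD : D ≠ 0 := by
    intro h0
    have hsq := h.sep.squarefree
    have hd : (Polynomial.C (2 * (a : ℚ)) * Polynomial.X + Polynomial.C (b : ℚ)) *
        (Polynomial.C (2 * (a : ℚ)) * Polynomial.X + Polynomial.C (b : ℚ)) ∣ P.map (Int.castRingHom ℚ) := by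
      have haq : (a : ℚ) ≠ 0 := by exact_mod_cast ha0.ne'
      refine ⟨Polynomial.C (1 / (4 * (a : ℚ))), ?_⟩
      rw [hPe]
      simp only [Polynomial.map_add, Polynomial.map_mul, Polynomial.map_C, Polynomial.map_X, Polynomial.map_pow]
      have h0q : (b : ℚ) ^ 2 - 4 * a * c = 0 := by exact_mod_cast h0
      have e1 : Polynomial.C (a : ℚ) = Polynomial.C (2 * (a : ℚ)) * Polynomial.C (2 * (a : ℚ)) * Polynomial.C (1 / (4 * (a : ℚ))) := by
        rw [← Polynomial.C_mul, ← Polynomial.C_mul]; congr 1; field_simp; norm_num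
      have e2 : Polynomial.C (b : ℚ) = 2 * Polynomial.C (2 * (a : ℚ)) * Polynomial.C (b : ℚ) * Polynomial.C (1 / (4 * (a : ℚ))) := by
        rw [show (2 : Polynomial ℚ) = Polynomial.C 2 from rfl, ← Polynomial.C_mul, ← Polynomial.C_mul, ← Polynomial.C_mul]; congr 1; field_simp; norm_num
      have e3 : Polynomial.C (c : ℚ) = Polynomial.C (b : ℚ) * Polynomial.C (b : ℚ) * Polynomial.C (1 / (4 * (a : ℚ))) := by
        rw [← Polynomial.C_mul, ← Polynomial.C_mul]; congr 1; field_simp; linarith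
      simp only [eq_intCast]
      calc _ = (Polynomial.C (2 * (a : ℚ)) * Polynomial.C (2 * (a : ℚ)) * Polynomial.C (1 / (4 * (a : ℚ)))) * Polynomial.X ^ 2 +
            (2 * Polynomial.C (2 * (a : ℚ)) * Polynomial.C (b : ℚ) * Polynomial.C (1 / (4 * (a : ℚ)))) * Polynomial.X +
            Polynomial.C (b : ℚ) * Polynomial.C (b : ℚ) * Polynomial.C (1 / (4 * (a : ℚ))) := by
              rw [← e1, ← e2, ← e3]
        _ = _ := by ring
    have hu := Polynomial.natDegree_eq_zero_of_isUnit (hsq _ hd)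
    rw [Polynomial.natDegree_linear (by have : (a : ℚ) ≠ 0 := by exact_mod_cast ha0.ne'
                                        positivity)] at hu
    omega
  have hfe : ∀ n : ℕ, 1 ≤ n → (f n : ℤ) = a * n ^ 2 + b * n + c := by
    intro n hn
    rw [h.val n hn]
    conv_lhs => rw [hPe]
    simp
  obtain ⟨_, C0, hC0, hC0'⟩ := h.growth
  rw [h2] at hC0'
  set A : ℕ := 4 * a.natAbs + 2 * b.natAbs + D.natAbs with hA
  obtain ⟨CL, hCL, hCL'⟩ := sfm_log_bound A
  -- count for fixed e
  have hcnt : ∀ N e : ℕ, 1 ≤ N → 1 ≤ e →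
      ((((Finset.Icc 1 N).filter (fun n => ∃ p : ℕ, f n = e * p ^ 2)).card : ℕ) : ℝ) ≤
        (b.natAbs + D.natAbs ^ 2 * CL) * (N : ℝ) ^ ((1 : ℝ) / 20) := by
    intro N e hN he
    have hN1 : (1 : ℝ) ≤ N := by exact_mod_cast hN
    set S := (Finset.Icc 1 N).filter (fun n => ∃ p : ℕ, f n = e * p ^ 2) with hS
    set S1 := S.filter (fun n => n ≤ b.natAbs) with hS1
    set S2 := S.filter (fun n => ¬ n ≤ b.natAbs) with hS2
    have hsplit : S.card = S1.card + S2.card := (Finset.card_filter_add_card_filter_not _).symm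
    have hc1 : S1.card ≤ b.natAbs := by
      calc S1.card ≤ (Finset.Icc 1 b.natAbs).card := by
            apply Finset.card_le_card
            intro n hn
            simp only [hS1, hS, Finset.mem_filter, Finset.mem_Icc] at hn ⊢
            exact ⟨hn.1.1.1, hn.2⟩
        _ = _ := by simp
    have hc2 : S2.card ≤ D.natAbs ^ 2 * (Nat.log 2 (2 * ((2 * a.natAbs + b.natAbs) * N) + D.natAbs) + 1) := by
      have hch : ∀ n : ℕ, ∃ p : ℕ, n ∈ S2 → f n = e * p ^ 2 := by
        intro n
        by_cases hn : n ∈ S2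
        · simp only [hS2, hS, Finset.mem_filter] at hn
          obtain ⟨p, hp⟩ := hn.1.2
          exact ⟨p, fun _ => hp⟩
        · exact ⟨0, fun h => absurd h hn⟩
      choose p hp using hch
      set g : ℕ → ℕ × ℕ := fun n => ((2 * a * n + b).toNat, p n) with hg
      have hX : ∀ n ∈ S2, 1 ≤ 2 * a * n + b ∧ 2 * a * n + b ≤ (2 * a.natAbs + b.natAbs) * N ∧ 1 ≤ n := by
        intro n hn
        simp only [hS2, hS, Finset.mem_filter, Finset.mem_Icc] at hn
        obtain ⟨⟨⟨hn1, hn2⟩, _⟩, hn3⟩ := hn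
        have hn3' : (b.natAbs : ℤ) < n := by push Not at hn3; exact_mod_cast hn3
        have hn2' : (n : ℤ) ≤ N := by exact_mod_cast hn2
        have hn1' : (1 : ℤ) ≤ n := by exact_mod_cast hn1
        have hbb : -(b.natAbs : ℤ) ≤ b := by omega
        have hbb2 : b ≤ (b.natAbs : ℤ) := by omega
        have hb3 : (0 : ℤ) ≤ b.natAbs := by omega
        have haa : (a.natAbs : ℤ) = a := by omega
        refine ⟨by nlinarith, ?_, hn1⟩
        rw [haa]
        nlinarith
      have hinj : Set.InjOn g S2 := by
        intro x hx y hy hxy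
        simp only [hg, Prod.mk.injEq] at hxy
        have h1 := (hX x hx).1
        have h2 := (hX y hy).1
        have h3 : 2 * a * (x : ℤ) + b = 2 * a * y + b := by omega
        have h4 : (2 * a) * (x : ℤ) = (2 * a) * y := by linarith
        have := mul_left_cancel₀ (by omega) h4
        exact_mod_cast this
      rw [← Finset.card_image_of_injOn hinj]
      apply sfm_pell_count (4 * a.natAbs * e) (by
        have : 1 ≤ a.natAbs := by omega
        have := Nat.mul_le_mul this he
        nlinarith) D hD
      intro q hq
      obtain ⟨n, hn, rfl⟩ := Finset.mem_image.mp hq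
      obtain ⟨h1, h2, h3⟩ := hX n hn
      have hcast : (((2 * a * (n : ℤ) + b).toNat : ℕ) : ℤ) = 2 * a * n + b := Int.toNat_of_nonneg (by omega)
      refine ⟨by simp only [hg]; omega, ?_, ?_⟩
      · simp only [hg]
        zify
        rw [hcast]
        push_cast at h2
        exact h2
      · simp only [hg]
        rw [hcast]
        have h4 := hfe n h3
        have h5 : (f n : ℤ) = e * (p n : ℤ) ^ 2 := by exact_mod_cast hp n hn
        have haa : (a.natAbs : ℤ) = a := by omega
        push_cast
        rw [show |a| = a from abs_of_pos ha0, hDdef]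
        have h6 : (e : ℤ) * (p n : ℤ) ^ 2 = a * n ^ 2 + b * n + c := by rw [← h5, h4]
        linear_combination (-4 * a) * h6
    have hlog : Nat.log 2 (2 * ((2 * a.natAbs + b.natAbs) * N) + D.natAbs) ≤ Nat.log 2 (A * N) := by
      apply Nat.log_mono_right
      rw [hA]
      nlinarith [Nat.zero_le D.natAbs]
    have hfin : S.card ≤ b.natAbs + D.natAbs ^ 2 * (Nat.log 2 (A * N) + 1) := by
      rw [hsplit]
      refine add_le_add hc1 (hc2.trans ?_)
      gcongr
    have h4 : 1 ≤ (N : ℝ) ^ ((1 : ℝ) / 20) := Real.one_le_rpow hN1 (by norm_num)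
    have h5 := hCL' N hN
    calc (S.card : ℝ) ≤ ((b.natAbs + D.natAbs ^ 2 * (Nat.log 2 (A * N) + 1) : ℕ) : ℝ) := by exact_mod_cast hfin
      _ = (b.natAbs : ℝ) * 1 + (D.natAbs : ℝ) ^ 2 * ((Nat.log 2 (A * N) + 1 : ℕ) : ℝ) := by
        simp only [Nat.cast_add, Nat.cast_mul, Nat.cast_pow, Nat.cast_one, mul_one]
      _ ≤ (b.natAbs : ℝ) * (N : ℝ) ^ ((1 : ℝ) / 20) + (D.natAbs : ℝ) ^ 2 * (CL * (N : ℝ) ^ ((1 : ℝ) / 20)) := by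
        gcongr
      _ = _ := by ring
  refine ⟨C0 * (b.natAbs + D.natAbs ^ 2 * CL) + 1, by positivity, fun N hN => ?_⟩
  have hN1 : (1 : ℝ) ≤ N := by exact_mod_cast hN
  have hN0 : (0 : ℝ) < N := by linarith
  have hsub : (Finset.Icc 1 N).filter (fun n => ∃ p : ℕ, p.Prime ∧ (N : ℝ) ^ ((7 : ℝ) / 10) < p ∧
      p ^ 2 ∣ f n) ⊆ (Finset.Icc 1 ⌊C0 * (N : ℝ) ^ ((3 : ℝ) / 5)⌋₊).biUnion
        (fun e => (Finset.Icc 1 N).filter (fun n => ∃ p : ℕ, f n = e * p ^ 2)) := by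
    intro n hn
    simp only [Finset.mem_filter, Finset.mem_biUnion] at hn ⊢
    obtain ⟨hn1, p, hp, hpy, e, he⟩ := hn
    have hn2 := Finset.mem_Icc.mp hn1
    refine ⟨e, ?_, hn1, p, by rw [he]; ring⟩
    rw [Finset.mem_Icc]
    have hf := h.pos n hn2.1
    refine ⟨Nat.pos_of_ne_zero (by rintro rfl; simp at he; omega), Nat.le_floor ?_⟩
    have h1 := (hC0' n hn2.1).1
    have hnN : (n : ℝ) ≤ N := by exact_mod_cast hn2.2
    have h3 : ((N : ℝ) ^ ((7 : ℝ) / 10)) ^ 2 * e ≤ C0 * (N : ℝ) ^ 2 := by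
      calc ((N : ℝ) ^ ((7 : ℝ) / 10)) ^ 2 * e ≤ (p : ℝ) ^ 2 * e := by gcongr
        _ = (f n : ℝ) := by rw [he]; push_cast; ring
        _ ≤ C0 * (n : ℝ) ^ 2 := h1
        _ ≤ _ := by gcongr
    have h4 : (N : ℝ) ^ 2 = (N : ℝ) ^ ((3 : ℝ) / 5) * ((N : ℝ) ^ ((7 : ℝ) / 10)) ^ 2 := by
      rw [← Real.rpow_natCast, ← Real.rpow_natCast, ← Real.rpow_mul hN0.le, ← Real.rpow_add hN0]; norm_num
    rw [h4] at h3
    have h5 : 0 < ((N : ℝ) ^ ((7 : ℝ) / 10)) ^ 2 := by positivity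
    nlinarith
  set K : ℝ := (b.natAbs + D.natAbs ^ 2 * CL) with hK
  have hK0 : 0 ≤ K := by positivity
  have hcard := (Finset.card_le_card hsub).trans Finset.card_biUnion_le
  calc _ ≤ ((∑ e ∈ Finset.Icc 1 ⌊C0 * (N : ℝ) ^ ((3 : ℝ) / 5)⌋₊,
        ((Finset.Icc 1 N).filter (fun n => ∃ p : ℕ, f n = e * p ^ 2)).card : ℕ) : ℝ) := by exact_mod_cast hcard
    _ = ∑ e ∈ Finset.Icc 1 ⌊C0 * (N : ℝ) ^ ((3 : ℝ) / 5)⌋₊,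
        ((((Finset.Icc 1 N).filter (fun n => ∃ p : ℕ, f n = e * p ^ 2)).card : ℕ) : ℝ) := by push_cast; rfl
    _ ≤ ∑ e ∈ Finset.Icc 1 ⌊C0 * (N : ℝ) ^ ((3 : ℝ) / 5)⌋₊, K * (N : ℝ) ^ ((1 : ℝ) / 20) := by
        apply Finset.sum_le_sum
        intro e he
        exact hcnt N e hN (Finset.mem_Icc.mp he).1
    _ = ⌊C0 * (N : ℝ) ^ ((3 : ℝ) / 5)⌋₊ * (K * (N : ℝ) ^ ((1 : ℝ) / 20)) := by simp
    _ ≤ (C0 * (N : ℝ) ^ ((3 : ℝ) / 5)) * (K * (N : ℝ) ^ ((1 : ℝ) / 20)) := by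
        gcongr
        exact Nat.floor_le (by positivity)
    _ = C0 * K * ((N : ℝ) ^ ((3 : ℝ) / 5) * (N : ℝ) ^ ((1 : ℝ) / 20)) := by ring
    _ ≤ C0 * K * (N : ℝ) ^ ((7 : ℝ) / 10) := by
        rw [← Real.rpow_add hN0]
        have := Real.rpow_le_rpow_of_exponent_le hN1 (show (3 : ℝ) / 5 + 1 / 20 ≤ 7 / 10 by norm_num)
        gcongr
    _ ≤ _ := by
        have : 0 ≤ (N : ℝ) ^ ((7 : ℝ) / 10) := by positivity
        nlinarith


theorem sfm_nonid (Q : Polynomial ℂ) (hQ : Q.Separable) (hk : 2 ≤ Q.natDegree) (s t : ℝ) (hs : 0 < s)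
    (ht : 0 < t) (hst : s ≠ t) (μ β : ℂ) :
    Polynomial.C (t : ℂ) * Q - Polynomial.C (s : ℂ) * Q.comp (Polynomial.C μ * Polynomial.X + Polynomial.C β) ≠ 0 := by
  intro h0
  have h1 := sub_eq_zero.mp h0
  have hsC : (s : ℂ) ≠ 0 := by exact_mod_cast hs.ne'
  have htC : (t : ℂ) ≠ 0 := by exact_mod_cast ht.ne'
  have hμ : μ ≠ 0 := by
    rintro rfl
    have h2 := congrArg Polynomial.natDegree h1
    rw [Polynomial.natDegree_C_mul htC, Polynomial.natDegree_C_mul hsC, Polynomial.natDegree_comp] at h2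
    simp at h2
    omega
  have hQ0 : Q ≠ 0 := by rintro rfl; simp at hk
  set S := Q.roots.toFinset with hS
  have hcard : 2 ≤ S.card := by
    have h2 : Q.roots.Nodup := Polynomial.nodup_roots hQ
    rw [hS, Multiset.toFinset_card_of_nodup h2]
    have := (IsAlgClosed.splits Q).natDegree_eq_card_roots
    omega
  set σ : ℂ → ℂ := fun x => μ * x + β with hσ
  have hinj : Function.Injective σ := by
    intro x y hxy
    simp only [hσ, add_left_inj] at hxy
    exact mul_left_cancel₀ hμ hxy
  have hmaps : ∀ x ∈ S, σ x ∈ S := by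
    intro x hx
    simp only [hS, Multiset.mem_toFinset, Polynomial.mem_roots hQ0, Polynomial.IsRoot] at hx ⊢
    have h2 := congrArg (Polynomial.eval x) h1
    simp only [Polynomial.eval_mul, Polynomial.eval_C, Polynomial.eval_comp, Polynomial.eval_add,
      Polynomial.eval_X, hx, mul_zero] at h2
    exact (mul_eq_zero.mp h2.symm).resolve_left hsC
  have himg : S.image σ = S := by
    apply Finset.eq_of_subset_of_card_le
    · intro y hy
      obtain ⟨x, hx, rfl⟩ := Finset.mem_image.mp hy
      exact hmaps x hx
    · rw [Finset.card_image_of_injective _ hinj]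
  have hsum : ∑ x ∈ S, ∑ y ∈ S, ‖x - y‖ = ‖μ‖ * ∑ x ∈ S, ∑ y ∈ S, ‖x - y‖ := by
    conv_lhs => rw [← himg]
    rw [Finset.sum_image (fun x _ y _ h => hinj h), Finset.mul_sum]
    apply Finset.sum_congr rfl
    intro x _
    rw [Finset.sum_image (fun x _ y _ h => hinj h), Finset.mul_sum]
    apply Finset.sum_congr rfl
    intro y _
    rw [← norm_mul]
    simp only [hσ]
    congr 1; ring
  have hpos : 0 < ∑ x ∈ S, ∑ y ∈ S, ‖x - y‖ := by
    obtain ⟨x, hx, y, hy, hxy⟩ := Finset.one_lt_card.mp hcard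
    calc 0 < ‖x - y‖ := norm_pos_iff.mpr (sub_ne_zero.mpr hxy)
      _ ≤ ∑ y ∈ S, ‖x - y‖ := Finset.single_le_sum (f := fun y => ‖x - y‖) (fun _ _ => norm_nonneg _) hy
      _ ≤ _ := Finset.single_le_sum (f := fun x => ∑ y ∈ S, ‖x - y‖)
        (fun _ _ => Finset.sum_nonneg (fun _ _ => norm_nonneg _)) hx
  have hμ1 : ‖μ‖ = 1 := by
    have : (‖μ‖ - 1) * ∑ x ∈ S, ∑ y ∈ S, ‖x - y‖ = 0 := by linarith
    rcases mul_eq_zero.mp this with h | h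
    · linarith
    · exact absurd h hpos.ne'
  have h2 := congrArg Polynomial.leadingCoeff h1
  rw [Polynomial.leadingCoeff_mul, Polynomial.leadingCoeff_mul, Polynomial.leadingCoeff_comp (by
    rw [Polynomial.natDegree_linear hμ]; norm_num), Polynomial.leadingCoeff_linear hμ,
    Polynomial.leadingCoeff_C, Polynomial.leadingCoeff_C] at h2
  have h3 := congrArg norm h2
  rw [norm_mul, norm_mul, norm_mul, norm_pow, hμ1, one_pow, mul_one] at h3
  have h4 : ‖Q.leadingCoeff‖ ≠ 0 := norm_ne_zero_iff.mpr (Polynomial.leadingCoeff_ne_zero.mpr hQ0)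
  have h5 := mul_right_cancel₀ h4 h3
  rw [Complex.norm_real, Complex.norm_real, Real.norm_of_nonneg hs.le, Real.norm_of_nonneg ht.le] at h5
  exact hst h5.symm

theorem sfm_poly_bound (R : Polynomial ℝ) (m : ℕ) (hR : R.natDegree ≤ m) : ∃ C : ℝ, 0 < C ∧ ∀ x : ℝ, 1 ≤ x →
    |R.eval x| ≤ C * x ^ m := by
  refine ⟨(∑ i ∈ Finset.range (m + 1), |R.coeff i|) + 1, by positivity, fun x hx => ?_⟩
  rw [Polynomial.eval_eq_sum_range' (Nat.lt_succ_of_le hR)]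
  refine (Finset.abs_sum_le_sum_abs _ _).trans ?_
  have : ∑ i ∈ Finset.range (m + 1), |R.coeff i * x ^ i| ≤ ∑ i ∈ Finset.range (m + 1), |R.coeff i| * x ^ m := by
    apply Finset.sum_le_sum
    intro i hi
    rw [abs_mul, abs_of_nonneg (by positivity : 0 ≤ x ^ i)]
    have : i ≤ m := by have := Finset.mem_range.mp hi; omega
    gcongr
  refine this.trans ?_
  rw [← Finset.sum_mul]
  have : 0 ≤ x ^ m := by positivity
  nlinarith

namespace SfmH
variable {P : Polynomial ℤ} {f : ℕ → ℕ}

/-- approximation by a shifted power -/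
theorem approx (h : SfmH P f) : ∃ c0 C : ℝ, 0 < C ∧ ∀ n : ℕ, 1 ≤ n →
    |(f n : ℝ) - P.leadingCoeff * ((n : ℝ) + c0) ^ P.natDegree| ≤ C * (n : ℝ) ^ (P.natDegree - 2) := by
  set k := P.natDegree with hk
  have hk2 : 2 ≤ k := h.deg
  set Q := P.map (Int.castRingHom ℝ) with hQ
  set a : ℝ := (P.leadingCoeff : ℝ) with ha
  have ha0 : 0 < a := by have := h.growth.1; simp only [ha]; exact_mod_cast this
  have hQk : Q.coeff k = a := by simp [hQ, ha, hk]
  have hQd : Q.natDegree ≤ k := Polynomial.natDegree_map_le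
  have hk0 : (0 : ℝ) < k := by exact_mod_cast (by omega)
  set c0 : ℝ := Q.coeff (k - 1) / (k * a) with hc0
  set R := Q - Polynomial.C a * (Polynomial.X + Polynomial.C c0) ^ k with hR
  have hRd : R.natDegree ≤ k - 2 := by
    rw [Polynomial.natDegree_le_iff_coeff_eq_zero]
    intro i hi
    rw [hR, Polynomial.coeff_sub, Polynomial.coeff_C_mul, Polynomial.coeff_X_add_C_pow]
    rcases lt_trichotomy i k with h1 | h1 | h1
    · have : i = k - 1 := by omega
      subst this
      rw [show k - (k - 1) = 1 by omega]
      have : k.choose (k - 1) = k := by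
        rw [Nat.choose_symm (by omega : 1 ≤ k)]; simp
      rw [this, hc0]
      field_simp
      ring
    · subst h1
      rw [hQk]; simp
    · rw [Polynomial.coeff_eq_zero_of_natDegree_lt (by omega), Nat.choose_eq_zero_of_lt h1]
      simp
  obtain ⟨C, hC, hC'⟩ := sfm_poly_bound R (k - 2) hRd
  refine ⟨c0, C, hC, fun n hn => ?_⟩
  have := hC' n (by exact_mod_cast hn)
  rw [hR] at this
  simp only [Polynomial.eval_sub, Polynomial.eval_mul, Polynomial.eval_C, Polynomial.eval_pow,
    Polynomial.eval_add, Polynomial.eval_X] at this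
  rwa [h.valR n hn]

theorem pow_gap (k : ℕ) (hk : 2 ≤ k) (w v : ℝ) (hw : 0 < w) (hv : 0 < v) :
    |w - v| * (max w v) ^ (k - 1) ≤ |w ^ k - v ^ k| := by
  obtain ⟨m, rfl⟩ : ∃ m, k = m + 1 := ⟨k - 1, by omega⟩
  simp only [Nat.add_sub_cancel]
  rcases le_total w v with hwv | hwv
  · rw [max_eq_right hwv, abs_of_nonpos (by linarith), abs_of_nonpos (by
      have := pow_le_pow_left₀ hw.le hwv (m + 1); linarith)]
    have := pow_le_pow_left₀ hw.le hwv m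
    have : w ^ (m + 1) = w ^ m * w := pow_succ _ _
    have : v ^ (m + 1) = v ^ m * v := pow_succ _ _
    nlinarith
  · rw [max_eq_left hwv, abs_of_nonneg (by linarith), abs_of_nonneg (by
      have := pow_le_pow_left₀ hv.le hwv (m + 1); linarith)]
    have := pow_le_pow_left₀ hv.le hwv m
    have : w ^ (m + 1) = w ^ m * w := pow_succ _ _
    have : v ^ (m + 1) = v ^ m * v := pow_succ _ _
    nlinarith

theorem delta (h : SfmH P f) : ∃ c0 C : ℝ, 1 ≤ C ∧ ∀ x y s t : ℕ, C ≤ x → C ≤ y → 1 ≤ s → 1 ≤ t →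
    t * f x = s * f y → ∀ l : ℝ, 0 < l → l ^ P.natDegree = (t : ℝ) / s →
    |l * (x + c0) - (y + c0)| * y ≤ C * (l ^ 2 + 1) := by
  obtain ⟨c0, C, hC, hC'⟩ := h.approx
  have ha1 := h.growth.1
  have hk2 := h.deg
  set k := P.natDegree with hk
  set a : ℝ := (P.leadingCoeff : ℝ) with ha
  have ha0 : 1 ≤ a := by simp only [ha]; exact_mod_cast ha1
  refine ⟨c0, 2 * |c0| + 1 + 2 * (C * 2 ^ (k - 2)), by
    have : 0 ≤ |c0| := abs_nonneg _
    have : 0 ≤ 2 * (C * 2 ^ (k - 2)) := by positivity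
    linarith, ?_⟩
  intro x y s t hx hy hs ht hst l hl hlk
  have hp0 : 0 ≤ C * 2 ^ (k - 2) := by positivity
  have hc00 : 0 ≤ |c0| := abs_nonneg _
  have hc1 := neg_abs_le c0
  have hx1 : (1 : ℝ) ≤ x := by linarith
  have hy1 : (1 : ℝ) ≤ y := by linarith
  have hu2 : (x : ℝ) ≤ 2 * (x + c0) := by linarith
  have hv2 : (y : ℝ) ≤ 2 * (y + c0) := by linarith
  set u : ℝ := x + c0 with hu
  set v : ℝ := y + c0 with hv
  have hu0 : 0 < u := by linarith
  have hv0 : 0 < v := by linarith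
  have hs0 : (0 : ℝ) < s := by exact_mod_cast hs
  have ht0 : (0 : ℝ) < t := by exact_mod_cast ht
  have e1 := hC' x (by exact_mod_cast hx1)
  have e2 := hC' y (by exact_mod_cast hy1)
  have hstr : (t : ℝ) * f x = s * f y := by exact_mod_cast hst
  have hb1 : |(f x : ℝ) - a * u ^ k| ≤ C * 2 ^ (k - 2) * u ^ (k - 2) := by
    refine e1.trans ?_
    rw [mul_assoc, ← mul_pow]
    gcongr
  have hb2 : |(f y : ℝ) - a * v ^ k| ≤ C * 2 ^ (k - 2) * v ^ (k - 2) := by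
    refine e2.trans ?_
    rw [mul_assoc, ← mul_pow]
    gcongr
  set C2 := C * 2 ^ (k - 2) with hC2
  have ht' : (t : ℝ) = l ^ k * s := by rw [hlk]; field_simp
  have hmain : |(l * u) ^ k - v ^ k| ≤ C2 * (l ^ 2 * (l * u) ^ (k - 2) + v ^ (k - 2)) := by
    have h1 : s * a * ((l * u) ^ k - v ^ k) = t * (a * u ^ k - f x) - s * (a * v ^ k - f y) := by
      rw [mul_pow]
      have : t * (a * u ^ k - f x) - s * (a * v ^ k - f y) = t * (a * u ^ k) - s * (a * v ^ k) := by
        linear_combination -hstr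
      rw [this, ht']; ring
    have h2 : |s * a * ((l * u) ^ k - v ^ k)| ≤ t * (C2 * u ^ (k - 2)) + s * (C2 * v ^ (k - 2)) := by
      rw [h1]
      refine (abs_sub _ _).trans ?_
      rw [abs_mul, abs_mul, abs_of_pos hs0, abs_of_pos ht0, abs_sub_comm _ (f x : ℝ), abs_sub_comm _ (f y : ℝ)]
      gcongr
    rw [abs_mul, abs_of_pos (by positivity : 0 < s * a)] at h2
    have h3 : t * (C2 * u ^ (k - 2)) + s * (C2 * v ^ (k - 2)) = s * (C2 * (l ^ 2 * (l * u) ^ (k - 2) + v ^ (k - 2))) := by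
      rw [ht', mul_pow]
      have : l ^ k = l ^ 2 * l ^ (k - 2) := by rw [← pow_add]; congr 1; omega
      rw [this]; ring
    rw [h3, mul_assoc] at h2
    have h4 := le_of_mul_le_mul_left h2 hs0
    have h5 := abs_nonneg ((l * u) ^ k - v ^ k)
    nlinarith
  have hgap := (pow_gap k hk2 (l * u) v (by positivity) hv0).trans hmain
  set W := max (l * u) v with hW
  have hW0 : 0 < W := lt_of_lt_of_le hv0 (le_max_right _ _)
  have hW1 : (l * u) ^ (k - 2) ≤ W ^ (k - 2) := pow_le_pow_left₀ (by positivity) (le_max_left _ _) _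
  have hW2 : v ^ (k - 2) ≤ W ^ (k - 2) := pow_le_pow_left₀ (by positivity) (le_max_right _ _) _
  have hfin : |l * u - v| * W ≤ C2 * (l ^ 2 + 1) := by
    have h6 : |l * u - v| * W * W ^ (k - 2) ≤ C2 * (l ^ 2 + 1) * W ^ (k - 2) := by
      calc |l * u - v| * W * W ^ (k - 2) = |l * u - v| * W ^ (k - 1) := by
            rw [mul_assoc, ← pow_succ']; congr 2; omega
        _ ≤ _ := hgap
        _ ≤ C2 * (l ^ 2 * W ^ (k - 2) + W ^ (k - 2)) := by gcongr
        _ = _ := by ring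
    exact le_of_mul_le_mul_right h6 (by positivity)
  have hvW : v ≤ W := le_max_right _ _
  calc |l * u - v| * y ≤ |l * u - v| * (2 * W) := by gcongr; linarith
    _ = 2 * (|l * u - v| * W) := by ring
    _ ≤ 2 * (C2 * (l ^ 2 + 1)) := by gcongr
    _ ≤ _ := by nlinarith [sq_nonneg l]

theorem same_value (h : SfmH P f) : ∃ B : ℕ, ∀ x y : ℕ, 1 ≤ x → 1 ≤ y → f x = f y → x ≠ y → x ≤ B ∧ y ≤ B := by
  obtain ⟨c0, C, hC, hC'⟩ := h.delta
  obtain ⟨_, Cg, hCg, hCg'⟩ := h.growth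
  have hk2 := h.deg
  set k := P.natDegree with hk
  -- if the smaller is < C then f bounded
  set B1 := ∑ n ∈ Finset.range (⌈C⌉₊ + 1), f n with hB1
  have small : ∀ x y : ℕ, 1 ≤ x → 1 ≤ y → f x = f y → (x : ℝ) < C → (y : ℝ) ≤ Cg * B1 := by
    intro x y hx hy hxy hxC
    have h1 : f x ≤ B1 := Finset.single_le_sum (f := f) (fun _ _ => Nat.zero_le _) (by
      rw [Finset.mem_range]
      have : (x : ℝ) ≤ ⌈C⌉₊ := hxC.le.trans (Nat.le_ceil _)
      have : x ≤ ⌈C⌉₊ := by exact_mod_cast this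
      omega)
    have h2 := (hCg' y hy).2
    have hy1 : (1 : ℝ) ≤ y := by exact_mod_cast hy
    calc (y : ℝ) = (y : ℝ) ^ 1 := (pow_one _).symm
      _ ≤ (y : ℝ) ^ k := pow_le_pow_right₀ hy1 (by omega)
      _ ≤ Cg * f y := h2
      _ ≤ Cg * B1 := by
        rw [← hxy]
        have : (f x : ℝ) ≤ B1 := by exact_mod_cast h1
        gcongr
  have key : ∀ x y : ℕ, 1 ≤ x → 1 ≤ y → f x = f y → x ≠ y → (y : ℝ) ≤ 2 * C + Cg * B1 := by
    intro x y hx hy hxy hne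
    have hnn : 0 ≤ Cg * (B1 : ℝ) := by positivity
    by_cases h1 : (x : ℝ) < C
    · have := small x y hx hy hxy h1; linarith
    by_cases h2 : (y : ℝ) < C
    · linarith
    push Not at h1 h2
    have := hC' x y 1 1 h1 h2 le_rfl le_rfl (by rw [hxy]) 1 one_pos (by simp)
    have h3 : (1 : ℝ) ≤ |1 * (x + c0) - (y + c0)| := by
      have : (1 : ℤ) ≤ |(x : ℤ) - y| := Int.one_le_abs (sub_ne_zero.mpr (by exact_mod_cast hne))
      have h4 : (1 : ℝ) ≤ |(x : ℝ) - y| := by exact_mod_cast this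
      have e : 1 * ((x : ℝ) + c0) - (y + c0) = x - y := by ring
      rw [e]; exact h4
    have hy0 : (0 : ℝ) ≤ y := by positivity
    nlinarith
  refine ⟨⌈2 * C + Cg * B1⌉₊, fun x y hx hy hxy hne => ⟨?_, ?_⟩⟩
  · exact_mod_cast (key y x hy hx hxy.symm hne.symm).trans (Nat.le_ceil _)
  · exact_mod_cast (key x y hx hy hxy hne).trans (Nat.le_ceil _)

end SfmH


namespace SfmH
variable {P : Polynomial ℤ} {f : ℕ → ℕ}

theorem fib1 (h : SfmH P f) (s t x : ℕ) (hs : 1 ≤ s) (T : Finset (ℕ × ℕ))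
    (hT : ∀ q ∈ T, q.1 = x ∧ 1 ≤ q.2 ∧ t * f q.1 = s * f q.2) : T.card ≤ P.natDegree := by
  classical
  have hinj : Set.InjOn Prod.snd (T : Set (ℕ × ℕ)) := by
    intro q hq r hr hqr
    exact Prod.ext ((hT q hq).1.trans (hT r hr).1.symm) hqr
  rw [← Finset.card_image_of_injOn hinj]
  apply h.fiber_card (t * f x / s)
  intro n hn
  obtain ⟨q, hq, rfl⟩ := Finset.mem_image.mp hn
  obtain ⟨h1, h2, h3⟩ := hT q hq
  refine ⟨h2, ?_⟩
  rw [← h1, h3, Nat.mul_div_cancel_left _ (by omega)]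

theorem fib2 (h : SfmH P f) (s t y : ℕ) (ht : 1 ≤ t) (T : Finset (ℕ × ℕ))
    (hT : ∀ q ∈ T, q.2 = y ∧ 1 ≤ q.1 ∧ t * f q.1 = s * f q.2) : T.card ≤ P.natDegree := by
  classical
  have hinj : Set.InjOn Prod.fst (T : Set (ℕ × ℕ)) := by
    intro q hq r hr hqr
    exact Prod.ext hqr ((hT q hq).1.trans (hT r hr).1.symm)
  rw [← Finset.card_image_of_injOn hinj]
  apply h.fiber_card (s * f y / t)
  intro n hn
  obtain ⟨q, hq, rfl⟩ := Finset.mem_image.mp hn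
  obtain ⟨h1, h2, h3⟩ := hT q hq
  refine ⟨h2, ?_⟩
  rw [← h1, ← h3, Nat.mul_div_cancel_left _ (by omega)]

theorem collinear (h : SfmH P f) (s t : ℕ) (hs : 1 ≤ s) (ht : 1 ≤ t) (hst : s ≠ t) (T : Finset (ℕ × ℕ))
    (hT : ∀ q ∈ T, 1 ≤ q.1 ∧ 1 ≤ q.2 ∧ t * f q.1 = s * f q.2)
    (hdet : ∀ q ∈ T, ∀ r ∈ T, ∀ w ∈ T, ((r.1 : ℤ) - q.1) * ((w.2 : ℤ) - q.2) =
      ((w.1 : ℤ) - q.1) * ((r.2 : ℤ) - q.2)) : T.card ≤ P.natDegree := by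
  classical
  by_cases hx : ∀ q ∈ T, ∀ r ∈ T, q.1 = r.1
  · rcases T.eq_empty_or_nonempty with h0 | ⟨q, hq⟩
    · simp [h0]
    · exact h.fib1 s t q.1 hs T (fun r hr => ⟨hx r hr q hq, (hT r hr).2⟩)
  push Not at hx
  obtain ⟨q, hq, r, hr, hqr⟩ := hx
  have hd : ((r.1 : ℂ) - q.1) ≠ 0 := by
    rw [sub_ne_zero]; exact_mod_cast hqr.symm
  set μ : ℂ := ((r.2 : ℂ) - q.2) / ((r.1 : ℂ) - q.1) with hμ
  set β : ℂ := (q.2 : ℂ) - μ * q.1 with hβ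
  have hline : ∀ w ∈ T, (w.2 : ℂ) = μ * w.1 + β := by
    intro w hw
    have h1 : ((r.1 : ℂ) - q.1) * ((w.2 : ℂ) - q.2) = ((w.1 : ℂ) - q.1) * ((r.2 : ℂ) - q.2) := by
      exact_mod_cast hdet q hq r hr w hw
    rw [hβ, hμ]
    field_simp
    linear_combination h1
  set Q := P.map (Int.castRingHom ℂ) with hQ
  have hQd : Q.natDegree = P.natDegree := Polynomial.natDegree_map_eq_of_injective Int.cast_injective _
  have hQs : Q.Separable := by
    have := h.sep.map (f := algebraMap ℚ ℂ)
    rw [Polynomial.map_map, show (algebraMap ℚ ℂ).comp (Int.castRingHom ℚ) = Int.castRingHom ℂ from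
      RingHom.ext_int _ _] at this
    exact this
  have hval : ∀ n : ℕ, 1 ≤ n → Q.eval (n : ℂ) = f n := by
    intro n hn
    have h1 := h.val n hn
    have h2 : ((f n : ℤ) : ℂ) = ((P.eval (n : ℤ) : ℤ) : ℂ) := by rw [h1]
    push_cast at h2
    rw [h2, Polynomial.eval_map, Polynomial.eval₂_at_natCast]
    simp
  set W := Polynomial.C ((t : ℝ) : ℂ) * Q - Polynomial.C ((s : ℝ) : ℂ) * Q.comp (Polynomial.C μ * Polynomial.X + Polynomial.C β) with hW
  have hW0 : W ≠ 0 := sfm_nonid Q hQs (by rw [hQd]; exact h.deg) s t (by exact_mod_cast hs)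
    (by exact_mod_cast ht) (by exact_mod_cast hst) μ β
  have hWd : W.natDegree ≤ P.natDegree := by
    refine (Polynomial.natDegree_sub_le _ _).trans (max_le ?_ ?_)
    · exact (Polynomial.natDegree_C_mul_le _ _).trans hQd.le
    · refine (Polynomial.natDegree_C_mul_le _ _).trans ?_
      rw [Polynomial.natDegree_comp, hQd]
      calc _ ≤ P.natDegree * 1 := Nat.mul_le_mul_left _ Polynomial.natDegree_linear_le
        _ = _ := mul_one _
  have hinj : Set.InjOn (fun w : ℕ × ℕ => (w.1 : ℂ)) (T : Set (ℕ × ℕ)) := by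
    intro w hw z hz hwz
    simp only at hwz
    have h1 : w.1 = z.1 := by exact_mod_cast hwz
    have h2 : (w.2 : ℂ) = z.2 := by rw [hline w hw, hline z hz, h1]
    exact Prod.ext h1 (by exact_mod_cast h2)
  rw [← Finset.card_image_of_injOn hinj]
  calc _ ≤ W.roots.toFinset.card := by
        apply Finset.card_le_card
        intro z hz
        obtain ⟨w, hw, rfl⟩ := Finset.mem_image.mp hz
        obtain ⟨h1, h2, h3⟩ := hT w hw
        rw [Multiset.mem_toFinset, Polynomial.mem_roots hW0, Polynomial.IsRoot, hW]
        simp only [Polynomial.eval_sub, Polynomial.eval_mul, Polynomial.eval_C, Polynomial.eval_comp,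
          Polynomial.eval_add, Polynomial.eval_X]
        rw [← hline w hw, hval _ h1, hval _ h2]
        push_cast
        rw [sub_eq_zero]
        exact_mod_cast h3
    _ ≤ Multiset.card W.roots := Multiset.toFinset_card_le _
    _ ≤ W.natDegree := Polynomial.card_roots' _
    _ ≤ _ := hWd

theorem ratio_count (h : SfmH P f) : ∃ C : ℝ, 0 < C ∧ ∀ M s t : ℕ, 1 ≤ M → 1 ≤ s → 1 ≤ t → s ≠ t →
    (t : ℝ) ≤ (M : ℝ) ^ ((1 : ℝ) / 12) → ∀ T : Finset (ℕ × ℕ),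
    (∀ q ∈ T, (1 ≤ q.1 ∧ q.1 ≤ M) ∧ 1 ≤ q.2 ∧ t * f q.1 = s * f q.2) →
    (T.card : ℝ) ≤ C * (M : ℝ) ^ ((3 : ℝ) / 4) := by
  classical
  obtain ⟨c0, C0, hC0, hC0'⟩ := h.delta
  have hk2 := h.deg
  set k := P.natDegree with hk
  refine ⟨k * (16 * C0 + 1) + 2 * (k * (C0 + 3)), by positivity, ?_⟩
  intro M s t hM hs ht hst htM T hT
  have hM1 : (1 : ℝ) ≤ M := by exact_mod_cast hM
  have hM0 : (0 : ℝ) < M := by linarith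
  have hs0 : (0 : ℝ) < s := by exact_mod_cast hs
  have ht0 : (0 : ℝ) < t := by exact_mod_cast ht
  set Y : ℝ := C0 + (M : ℝ) ^ ((1 : ℝ) / 2) with hY
  have hMh : 1 ≤ (M : ℝ) ^ ((1 : ℝ) / 2) := Real.one_le_rpow hM1 (by norm_num)
  set T2 := T.filter (fun q => Y ≤ q.1 ∧ Y ≤ q.2) with hT2
  set T1 := T.filter (fun q : ℕ × ℕ => (q.1 : ℝ) < Y) with hT1
  set T1' := T.filter (fun q : ℕ × ℕ => (q.2 : ℝ) < Y) with hT1'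
  have hsub : T ⊆ T2 ∪ (T1 ∪ T1') := by
    intro q hq
    simp only [hT1, hT2, hT1', Finset.mem_union, Finset.mem_filter, hq, true_and]
    by_cases a1 : (q.1 : ℝ) < Y
    · tauto
    · by_cases a2 : (q.2 : ℝ) < Y
      · tauto
      · push Not at a1 a2; tauto
  have hcard : T.card ≤ T2.card + (T1.card + T1'.card) :=
    (Finset.card_le_card hsub).trans ((Finset.card_union_le _ _).trans
      (Nat.add_le_add_left (Finset.card_union_le _ _) _))
  have hYc : (⌈Y⌉₊ : ℝ) ≤ Y + 1 := (Nat.ceil_lt_add_one (by positivity)).le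
  have hYb : (⌈Y⌉₊ : ℝ) ≤ (C0 + 3) * (M : ℝ) ^ ((3 : ℝ) / 4) := by
    have e1 : (M : ℝ) ^ ((1 : ℝ) / 2) ≤ (M : ℝ) ^ ((3 : ℝ) / 4) :=
      Real.rpow_le_rpow_of_exponent_le hM1 (by norm_num)
    nlinarith
  have hc1 : T1.card ≤ k * ⌈Y⌉₊ := by
    have h1 := Finset.card_le_mul_card_image (f := Prod.fst) T1 k (by
      intro x _
      apply h.fib1 s t x hs
      intro q hq
      simp only [hT1, Finset.mem_filter] at hq
      exact ⟨hq.2, (hT q hq.1.1).2⟩)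
    refine h1.trans (Nat.mul_le_mul_left _ ?_)
    calc _ ≤ (Finset.range ⌈Y⌉₊).card := by
          apply Finset.card_le_card
          intro x hx
          obtain ⟨q, hq, rfl⟩ := Finset.mem_image.mp hx
          simp only [hT1, Finset.mem_filter] at hq
          exact Finset.mem_range.mpr (Nat.lt_ceil.mpr hq.2)
      _ = _ := Finset.card_range _
  have hc1' : T1'.card ≤ k * ⌈Y⌉₊ := by
    have h1 := Finset.card_le_mul_card_image (f := Prod.snd) T1' k (by
      intro x _
      apply h.fib2 s t x ht
      intro q hq
      simp only [hT1', Finset.mem_filter] at hq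
      exact ⟨hq.2, (hT q hq.1.1).1.1, (hT q hq.1.1).2.2⟩)
    refine h1.trans (Nat.mul_le_mul_left _ ?_)
    calc _ ≤ (Finset.range ⌈Y⌉₊).card := by
          apply Finset.card_le_card
          intro x hx
          obtain ⟨q, hq, rfl⟩ := Finset.mem_image.mp hx
          simp only [hT1', Finset.mem_filter] at hq
          exact Finset.mem_range.mpr (Nat.lt_ceil.mpr hq.2)
      _ = _ := Finset.card_range _
  -- main part
  set l : ℝ := ((t : ℝ) / s) ^ ((1 : ℝ) / k) with hl
  have hl0 : 0 < l := by positivity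
  have hlk : l ^ k = (t : ℝ) / s := by
    rw [hl, ← Real.rpow_natCast, ← Real.rpow_mul (by positivity)]
    rw [one_div_mul_cancel (by positivity), Real.rpow_one]
  set m12 := (M : ℝ) ^ ((1 : ℝ) / 12) with hm12
  have hm1 : 1 ≤ m12 := Real.one_le_rpow hM1 (by norm_num)
  have hl2 : l ^ 2 + 1 ≤ 2 * m12 := by
    rcases le_total l 1 with h1 | h1
    · nlinarith
    · have h2 : l ^ 2 ≤ l ^ k := pow_le_pow_right₀ h1 hk2
      have h3 : (t : ℝ) / s ≤ t := div_le_self ht0.le (by exact_mod_cast hs)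
      linarith
  set m5 := (M : ℝ) ^ ((5 : ℝ) / 12) with hm5
  have hm50 : 0 < m5 := by positivity
  set H : ℝ := m5 / (16 * C0) with hH
  have hH0 : 0 < H := by positivity
  have hθ : ∀ q ∈ T2, |l * ((q.1 : ℝ) + c0) - (q.2 + c0)| * m5 ≤ 2 * C0 := by
    intro q hq
    simp only [hT2, Finset.mem_filter] at hq
    obtain ⟨hq1, hq2, hq3⟩ := hq
    have h1 := hC0' q.1 q.2 s t (by linarith) (by linarith) hs ht (hT q hq1).2.2 l hl0 hlk
    have h2 : (M : ℝ) ^ ((1 : ℝ) / 2) ≤ q.2 := by linarith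
    have h3 : (M : ℝ) ^ ((1 : ℝ) / 2) = m5 * m12 := by
      rw [hm5, hm12, ← Real.rpow_add hM0]; norm_num
    rw [h3] at h2
    set θ := |l * ((q.1 : ℝ) + c0) - (q.2 + c0)| with hθ
    have h4 : 0 ≤ θ := abs_nonneg _
    have h5 : θ * m5 * m12 ≤ 2 * C0 * m12 := by
      calc θ * m5 * m12 = θ * (m5 * m12) := by ring
        _ ≤ θ * q.2 := by gcongr
        _ ≤ C0 * (l ^ 2 + 1) := h1
        _ ≤ C0 * (2 * m12) := by gcongr
        _ = _ := by ring
    exact le_of_mul_le_mul_right h5 (by linarith)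
  have hc2 : T2.card ≤ k * (⌊M / H⌋₊ + 1) := by
    have h1 := Finset.card_le_mul_card_image (f := fun q : ℕ × ℕ => ⌊(q.1 : ℝ) / H⌋₊) T2 k (by
      intro j _
      apply h.collinear s t hs ht hst
      · intro q hq
        simp only [hT2, Finset.mem_filter] at hq
        have := hT q hq.1.1
        exact ⟨this.1.1, this.2⟩
      · intro q hq r hr w hw
        rw [Finset.mem_filter] at hq hr hw
        have hdist : ∀ q r : ℕ × ℕ, ⌊(q.1 : ℝ) / H⌋₊ = j → ⌊(r.1 : ℝ) / H⌋₊ = j → |(q.1 : ℝ) - r.1| ≤ H := by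
          intro q r hq hr
          have a1 := Nat.floor_le (show 0 ≤ (q.1 : ℝ) / H by positivity)
          have a2 := Nat.lt_floor_add_one ((q.1 : ℝ) / H)
          have a3 := Nat.floor_le (show 0 ≤ (r.1 : ℝ) / H by positivity)
          have a4 := Nat.lt_floor_add_one ((r.1 : ℝ) / H)
          rw [hq] at a1 a2
          rw [hr] at a3 a4
          rw [le_div_iff₀ hH0] at a1 a3
          rw [div_lt_iff₀ hH0] at a2 a4
          rw [abs_le]; constructor <;> nlinarith
        have b1 := hθ q hq.1
        have b2 := hθ r hr.1
        have b3 := hθ w hw.1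
        have d1 := hdist r q hr.2 hq.2
        have d2 := hdist w q hw.2 hq.2
        set θ1 := l * ((q.1 : ℝ) + c0) - (q.2 + c0) with hθ1
        set θ2 := l * ((r.1 : ℝ) + c0) - (r.2 + c0) with hθ2
        set θ3 := l * ((w.1 : ℝ) + c0) - (w.2 + c0) with hθ3
        have hdetr : ((r.1 : ℝ) - q.1) * ((w.2 : ℝ) - q.2) - ((w.1 : ℝ) - q.1) * ((r.2 : ℝ) - q.2) =
            ((w.1 : ℝ) - q.1) * (θ2 - θ1) - ((r.1 : ℝ) - q.1) * (θ3 - θ1) := by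
          rw [hθ1, hθ2, hθ3]; ring
        have hlt : |((r.1 : ℝ) - q.1) * ((w.2 : ℝ) - q.2) - ((w.1 : ℝ) - q.1) * ((r.2 : ℝ) - q.2)| < 1 := by
          rw [hdetr]
          have c1 : |((w.1 : ℝ) - q.1) * (θ2 - θ1)| ≤ H * (|θ2| + |θ1|) := by
            rw [abs_mul]; gcongr; exact abs_sub _ _
          have c2 : |((r.1 : ℝ) - q.1) * (θ3 - θ1)| ≤ H * (|θ3| + |θ1|) := by
            rw [abs_mul]; gcongr; exact abs_sub _ _
          have c3 : |((w.1 : ℝ) - q.1) * (θ2 - θ1) - ((r.1 : ℝ) - q.1) * (θ3 - θ1)| ≤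
            H * (|θ2| + |θ1|) + H * (|θ3| + |θ1|) := (abs_sub _ _).trans (add_le_add c1 c2)
          refine lt_of_le_of_lt c3 ?_
          have c4 : H * (|θ2| + |θ1|) + H * (|θ3| + |θ1|) =
              (|θ2| * m5 + |θ1| * m5 + |θ3| * m5 + |θ1| * m5) / (16 * C0) := by
            rw [hH]; ring
          rw [c4, div_lt_one (by positivity)]
          linarith
        have hlt' : |((r.1 : ℤ) - q.1) * ((w.2 : ℤ) - q.2) - ((w.1 : ℤ) - q.1) * ((r.2 : ℤ) - q.2)| < 1 := by
          exact_mod_cast hlt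
        have := Int.abs_lt_one_iff.mp hlt'
        linarith)
    refine h1.trans (Nat.mul_le_mul_left _ ?_)
    calc _ ≤ (Finset.range (⌊M / H⌋₊ + 1)).card := by
          apply Finset.card_le_card
          intro x hx
          obtain ⟨q, hq, rfl⟩ := Finset.mem_image.mp hx
          simp only [hT2, Finset.mem_filter] at hq
          rw [Finset.mem_range, Nat.lt_succ_iff]
          apply Nat.floor_le_floor
          have : (q.1 : ℝ) ≤ M := by exact_mod_cast (hT q hq.1).1.2
          gcongr
      _ = _ := Finset.card_range _
  have hMH : (M : ℝ) / H ≤ 16 * C0 * (M : ℝ) ^ ((3 : ℝ) / 4) := by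
    have e1 : (M : ℝ) = (M : ℝ) ^ ((7 : ℝ) / 12) * m5 := by
      rw [hm5, ← Real.rpow_add hM0]; norm_num
    have e2 : (M : ℝ) / H = 16 * C0 * (M : ℝ) ^ ((7 : ℝ) / 12) := by
      rw [hH]; field_simp; rw [mul_comm, ← e1]
    rw [e2]
    have := Real.rpow_le_rpow_of_exponent_le hM1 (show (7 : ℝ) / 12 ≤ 3 / 4 by norm_num)
    gcongr
  have hfl := Nat.floor_le (show 0 ≤ (M : ℝ) / H by positivity)
  have hm34 : 1 ≤ (M : ℝ) ^ ((3 : ℝ) / 4) := Real.one_le_rpow hM1 (by norm_num)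
  calc (T.card : ℝ) ≤ ((k * (⌊M / H⌋₊ + 1) + (k * ⌈Y⌉₊ + k * ⌈Y⌉₊) : ℕ) : ℝ) := by
        exact_mod_cast hcard.trans (by gcongr)
    _ = k * ((⌊M / H⌋₊ : ℝ) + 1) + 2 * (k * (⌈Y⌉₊ : ℝ)) := by push_cast; ring
    _ ≤ k * (16 * C0 * (M : ℝ) ^ ((3 : ℝ) / 4) + (M : ℝ) ^ ((3 : ℝ) / 4)) + 2 * (k * ((C0 + 3) * (M : ℝ) ^ ((3 : ℝ) / 4))) := by
        gcongr
        linarith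
    _ = _ := by ring

end SfmH


theorem sfm_dvd_of_sq (m x : ℕ) (hm : Squarefree m) (h : IsSquare (m * x)) : m ∣ x := by
  obtain ⟨r, hr⟩ := h
  have h1 : m ∣ r := by
    have : m ∣ r ^ 2 := by rw [pow_two, ← hr]; exact dvd_mul_right _ _
    exact (hm.dvd_pow_iff_dvd (by norm_num)).mp this
  obtain ⟨c, rfl⟩ := h1
  have hm0 : 0 < m := Nat.pos_of_ne_zero hm.ne_zero
  refine ⟨c * c, ?_⟩
  apply Nat.eq_of_mul_eq_mul_left hm0
  rw [hr]; ring

theorem sfm_isSquare_cancel (a x : ℕ) (ha : a ≠ 0) (h : IsSquare (a ^ 2 * x)) : IsSquare x := by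
  obtain ⟨r, hr⟩ := h
  have : a ∣ r := by
    have : a ^ 2 ∣ r ^ 2 := by rw [pow_two r, ← hr]; exact dvd_mul_right _ _
    exact (Nat.pow_dvd_pow_iff (by norm_num)).mp this
  obtain ⟨c, rfl⟩ := this
  refine ⟨c, ?_⟩
  apply Nat.eq_of_mul_eq_mul_left (show 0 < a ^ 2 by positivity)
  rw [hr]; ring

theorem sfm_sqf_eq (m n : ℕ) (hm : Squarefree m) (hn : Squarefree n) (h : IsSquare (m * n)) : m = n :=
  Nat.dvd_antisymm (sfm_dvd_of_sq m n hm h) (sfm_dvd_of_sq n m hn (by rwa [mul_comm]))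

theorem sfm_sqf_unique (a m n : ℕ) (ha : a ≠ 0) (hm : Squarefree m) (hn : Squarefree n)
    (h1 : IsSquare (a * m)) (h2 : IsSquare (a * n)) : m = n := by
  apply sfm_sqf_eq m n hm hn
  apply sfm_isSquare_cancel a _ ha
  have := h1.mul h2
  rwa [show a * m * (a * n) = a ^ 2 * (m * n) by ring] at this

/-- the product of the cofactors -/
def sfmR (a b : ℕ) : ℕ := (a / Nat.gcd a b) * (b / Nat.gcd a b)

theorem sfmR_sqf (a b : ℕ) (ha : Squarefree a) (hb : Squarefree b) : Squarefree (sfmR a b) := by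
  unfold sfmR
  have hg : 0 < Nat.gcd a b := Nat.gcd_pos_of_pos_left _ (Nat.pos_of_ne_zero ha.ne_zero)
  rw [Nat.squarefree_mul (Nat.coprime_div_gcd_div_gcd hg)]
  exact ⟨ha.squarefree_of_dvd (Nat.div_dvd_of_dvd (Nat.gcd_dvd_left _ _)),
    hb.squarefree_of_dvd (Nat.div_dvd_of_dvd (Nat.gcd_dvd_right _ _))⟩

theorem sfmR_mul (a b : ℕ) : a * b = (Nat.gcd a b) ^ 2 * sfmR a b := by
  unfold sfmR
  have h1 := Nat.mul_div_cancel' (Nat.gcd_dvd_left a b)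
  have h2 := Nat.mul_div_cancel' (Nat.gcd_dvd_right a b)
  calc a * b = (Nat.gcd a b * (a / Nat.gcd a b)) * (Nat.gcd a b * (b / Nat.gcd a b)) := by rw [h1, h2]
    _ = _ := by ring

theorem sfmR_ge (a b : ℕ) (hb : b ≠ 0) : a ≤ Nat.gcd a b * sfmR a b := by
  unfold sfmR
  have h1 := Nat.mul_div_cancel' (Nat.gcd_dvd_left a b)
  have h2 : 0 < b / Nat.gcd a b := Nat.div_pos (Nat.le_of_dvd (Nat.pos_of_ne_zero hb) (Nat.gcd_dvd_right _ _))
    (Nat.gcd_pos_of_pos_right _ (Nat.pos_of_ne_zero hb))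
  calc a = Nat.gcd a b * (a / Nat.gcd a b) * 1 := by rw [mul_one, h1]
    _ ≤ Nat.gcd a b * (a / Nat.gcd a b) * (b / Nat.gcd a b) := Nat.mul_le_mul_left _ h2
    _ = _ := by ring

theorem sfmR_square (a b x : ℕ) (ha : a ≠ 0) (h : IsSquare (a * b * x)) : IsSquare (sfmR a b * x) := by
  rw [sfmR_mul a b, mul_assoc] at h
  exact sfm_isSquare_cancel _ _ (Nat.gcd_pos_of_pos_left _ (Nat.pos_of_ne_zero ha)).ne' h

theorem sfm_card_divisors (m : ℕ) (hm : Squarefree m) : m.divisors.card = 2 ^ m.primeFactors.card := by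
  rw [← sfm_card_sqf_divisors m hm.ne_zero, Finset.filter_true_of_mem]
  intro d hd
  exact hm.squarefree_of_dvd (Nat.dvd_of_mem_divisors hd)

theorem sfmR_card_divisors (a b : ℕ) (ha : Squarefree a) (hb : Squarefree b) :
    (sfmR a b).divisors.card ≤ 2 ^ a.primeFactors.card * 2 ^ b.primeFactors.card := by
  rw [sfm_card_divisors _ (sfmR_sqf a b ha hb), ← pow_add]
  apply Nat.pow_le_pow_right (by norm_num)
  refine le_trans (Finset.card_le_card ?_) (Finset.card_union_le _ _)
  rw [← Nat.primeFactors_mul ha.ne_zero hb.ne_zero]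
  apply Nat.primeFactors_mono _ (mul_ne_zero ha.ne_zero hb.ne_zero)
  rw [sfmR_mul]; exact dvd_mul_left _ _

/-- normalised solutions -/
structure SfmW (f : ℕ → ℕ) (a b c d : ℕ) : Prop where
  pa : 1 ≤ a
  pb : 1 ≤ b
  pc : 1 ≤ c
  pd : 1 ≤ d
  ba : b ≤ a
  ca : c ≤ a
  da : d ≤ a
  sa : Squarefree (f a)
  sb : Squarefree (f b)
  sc : Squarefree (f c)
  sd : Squarefree (f d)
  sq : IsSquare (f a * f b * f c * f d)
  ne : f c ≠ f d
  g1 : Nat.gcd (f a) (f c) ≤ Nat.gcd (f a) (f b)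
  g2 : Nat.gcd (f a) (f d) ≤ Nat.gcd (f a) (f b)
  hh : Nat.gcd (f d) (sfmR (f a) (f b)) ≤ Nat.gcd (f c) (sfmR (f a) (f b))

theorem SfmW.gcube {f : ℕ → ℕ} {a b c d : ℕ} (w : SfmW f a b c d) : f a ≤ (Nat.gcd (f a) (f b)) ^ 3 := by
  have h1 : f a ∣ f b * (f c * f d) := by
    apply sfm_dvd_of_sq _ _ w.sa
    have := w.sq
    rwa [show f a * f b * f c * f d = f a * (f b * (f c * f d)) by ring] at this
  have h2 : f a ∣ Nat.gcd (f a) (f b) * (Nat.gcd (f a) (f c) * Nat.gcd (f a) (f d)) := by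
    calc f a = Nat.gcd (f a) (f b * (f c * f d)) := (Nat.gcd_eq_left h1).symm
      _ ∣ Nat.gcd (f a) (f b) * Nat.gcd (f a) (f c * f d) := Nat.gcd_mul_right_dvd_mul_gcd _ _ _
      _ ∣ _ := mul_dvd_mul_left _ (Nat.gcd_mul_right_dvd_mul_gcd _ _ _)
  have ha : 0 < f a := Nat.pos_of_ne_zero w.sa.ne_zero
  have h3 := Nat.le_of_dvd (Nat.mul_pos (Nat.gcd_pos_of_pos_left _ ha)
    (Nat.mul_pos (Nat.gcd_pos_of_pos_left _ ha) (Nat.gcd_pos_of_pos_left _ ha))) h2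
  calc f a ≤ _ := h3
    _ ≤ Nat.gcd (f a) (f b) * (Nat.gcd (f a) (f b) * Nat.gcd (f a) (f b)) :=
      Nat.mul_le_mul_left _ (Nat.mul_le_mul w.g1 w.g2)
    _ = _ := by ring

theorem SfmW.hsq {f : ℕ → ℕ} {a b c d : ℕ} (w : SfmW f a b c d) :
    sfmR (f a) (f b) ≤ (Nat.gcd (f c) (sfmR (f a) (f b))) ^ 2 := by
  set R := sfmR (f a) (f b) with hR
  have hRs : Squarefree R := sfmR_sqf _ _ w.sa w.sb
  have h1 : R ∣ f c * f d := by
    apply sfm_dvd_of_sq _ _ hRs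
    apply sfmR_square _ _ _ w.sa.ne_zero
    have := w.sq
    rwa [show f a * f b * f c * f d = f a * f b * (f c * f d) by ring] at this
  have h2 : R ∣ Nat.gcd (f c) R * Nat.gcd (f d) R := by
    calc R = Nat.gcd R (f c * f d) := (Nat.gcd_eq_left h1).symm
      _ ∣ Nat.gcd R (f c) * Nat.gcd R (f d) := Nat.gcd_mul_right_dvd_mul_gcd _ _ _
      _ = _ := by rw [Nat.gcd_comm R, Nat.gcd_comm R]
  have hc : 0 < f c := Nat.pos_of_ne_zero w.sc.ne_zero
  have hd : 0 < f d := Nat.pos_of_ne_zero w.sd.ne_zero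
  have h3 := Nat.le_of_dvd (Nat.mul_pos (Nat.gcd_pos_of_pos_left _ hc) (Nat.gcd_pos_of_pos_left _ hd)) h2
  calc R ≤ _ := h3
    _ ≤ Nat.gcd (f c) R * Nat.gcd (f c) R := Nat.mul_le_mul_left _ w.hh
    _ = _ := by ring

theorem SfmW.ratio {f : ℕ → ℕ} {a b c d : ℕ} (w : SfmW f a b c d) :
    ∃ s t : ℕ, s * t = sfmR (f a) (f b) ∧ s ≠ t ∧ t * f c = s * f d := by
  set g := Nat.gcd (f c) (f d) with hg
  have hc : 0 < f c := Nat.pos_of_ne_zero w.sc.ne_zero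
  have hg0 : 0 < g := Nat.gcd_pos_of_pos_left _ hc
  have h1 : g * (f c / g) = f c := Nat.mul_div_cancel' (Nat.gcd_dvd_left _ _)
  have h2 : g * (f d / g) = f d := Nat.mul_div_cancel' (Nat.gcd_dvd_right _ _)
  refine ⟨f c / g, f d / g, ?_, ?_, ?_⟩
  · show sfmR (f c) (f d) = _
    apply sfm_sqf_eq _ _ (sfmR_sqf _ _ w.sc w.sd) (sfmR_sqf _ _ w.sa w.sb)
    apply sfmR_square _ _ _ w.sc.ne_zero
    rw [mul_comm]
    apply sfmR_square _ _ _ w.sa.ne_zero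
    have := w.sq
    rwa [show f a * f b * f c * f d = f a * f b * (f c * f d) by ring] at this
  · intro h
    apply w.ne
    rw [← h1, ← h2, h]
  · conv_lhs => rw [← h1]
    conv_rhs => rw [← h2]
    ring

namespace SfmH
variable {P : Polynomial ℤ} {f : ℕ → ℕ}

theorem count_eps (h : SfmH P f) (ε : ℝ) (hε : 0 < ε) : ∃ C : ℝ, 0 < C ∧ ∀ M q : ℕ, 1 ≤ M → Squarefree q →
    ((((Finset.Icc 1 M).filter (fun n : ℕ => q ∣ f n)).card : ℕ) : ℝ) ≤ C * (M : ℝ) ^ ε * ((M : ℝ) / q + 1) := by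
  have hk : (0 : ℝ) < P.natDegree := by exact_mod_cast (by have := h.deg; omega)
  obtain ⟨C1, hC1, hC1'⟩ := h.rho_eps (ε / P.natDegree) (by positivity)
  obtain ⟨_, C2, hC2, hC2'⟩ := h.growth
  refine ⟨C1 * C2 ^ (ε / P.natDegree), by positivity, fun M q hM hq => ?_⟩
  rcases Finset.eq_empty_or_nonempty ((Finset.Icc 1 M).filter (fun n : ℕ => q ∣ f n)) with h0 | ⟨n, hn⟩
  · rw [h0]
    simp only [Finset.card_empty, Nat.cast_zero]
    positivity
  simp only [Finset.mem_filter, Finset.mem_Icc] at hn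
  refine (h.count_le q M (Nat.pos_of_ne_zero hq.ne_zero)).trans ?_
  gcongr
  refine (hC1' q hq).1.trans ?_
  rw [mul_assoc]
  gcongr
  have h1 : (q : ℝ) ≤ C2 * (M : ℝ) ^ P.natDegree := by
    have h2 : q ≤ f n := Nat.le_of_dvd (h.pos n hn.1.1) hn.2
    calc (q : ℝ) ≤ f n := by exact_mod_cast h2
      _ ≤ C2 * (n : ℝ) ^ P.natDegree := (hC2' n hn.1.1).1
      _ ≤ _ := by
        have : (n : ℝ) ≤ M := by exact_mod_cast hn.1.2
        gcongr
  calc (q : ℝ) ^ (ε / P.natDegree) ≤ (C2 * (M : ℝ) ^ P.natDegree) ^ (ε / P.natDegree) := by gcongr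
    _ = C2 ^ (ε / P.natDegree) * (M : ℝ) ^ ε := by
      rw [Real.mul_rpow hC2.le (by positivity), ← Real.rpow_natCast, ← Real.rpow_mul (by positivity),
        mul_div_cancel₀ _ hk.ne']

theorem fiberA (h : SfmH P f) (ε : ℝ) (hε : 0 < ε) : ∃ C : ℝ, 0 < C ∧ ∀ M n : ℕ, 1 ≤ M →
    ∀ T : Finset (ℕ × ℕ), (∀ q ∈ T, SfmW f M n q.1 q.2) →
    (T.card : ℝ) ≤ C * (M : ℝ) ^ ε * ((M : ℝ) / Real.sqrt (sfmR (f M) (f n)) + 1) := by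
  classical
  obtain ⟨C1, hC1, hC1'⟩ := h.count_eps (ε / 3) (by positivity)
  obtain ⟨C2, hC2, hC2'⟩ := h.omega_eps (ε / 3) (by positivity)
  set k := P.natDegree with hk
  have hk0 : (0 : ℝ) < k := by exact_mod_cast (by have := h.deg; omega)
  refine ⟨k * (C2 ^ 2 * C1), by positivity, fun M n hM T hT => ?_⟩
  rcases T.eq_empty_or_nonempty with h0 | ⟨q0, hq0⟩
  · rw [h0]
    simp only [Finset.card_empty, Nat.cast_zero]
    positivity
  have w0 := hT q0 hq0
  have hM0 : (0 : ℝ) < M := by exact_mod_cast hM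
  set R := sfmR (f M) (f n) with hR
  have hRs : Squarefree R := sfmR_sqf _ _ w0.sa w0.sb
  have hR0 : 0 < R := Nat.pos_of_ne_zero hRs.ne_zero
  have hRr : (0 : ℝ) < R := by exact_mod_cast hR0
  have hc1 : T.card ≤ k * (T.image Prod.fst).card := by
    apply Finset.card_le_mul_card_image
    intro x _
    have hinj : Set.InjOn Prod.snd ((T.filter (fun q => q.1 = x) : Finset (ℕ × ℕ)) : Set (ℕ × ℕ)) := by
      intro q hq r hr hqr
      simp only [Finset.coe_filter, Set.mem_setOf_eq] at hq hr
      exact Prod.ext (hq.2.trans hr.2.symm) hqr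
    rw [← Finset.card_image_of_injOn hinj]
    rcases (T.filter (fun q => q.1 = x)).eq_empty_or_nonempty with h0 | ⟨r, hr⟩
    · rw [h0]; simp
    apply h.fiber_card (f r.2)
    intro y hy
    obtain ⟨q, hq, rfl⟩ := Finset.mem_image.mp hy
    rw [Finset.mem_filter] at hq hr
    have w := hT q hq.1
    have w' := hT r hr.1
    refine ⟨w.pd, ?_⟩
    apply sfm_sqf_unique (f M * f n * f x) _ _ _ w.sd w'.sd
    · have := w.sq; rwa [hq.2] at this
    · have := w'.sq; rwa [hr.2] at this
    · have := w.sc.ne_zero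
      rw [hq.2] at this
      exact mul_ne_zero (mul_ne_zero w.sa.ne_zero w.sb.ne_zero) this
  set Ds := R.divisors.filter (fun d => R ≤ d ^ 2) with hDs
  have hc2 : (T.image Prod.fst).card ≤ ∑ d ∈ Ds, ((Finset.Icc 1 M).filter (fun x : ℕ => d ∣ f x)).card := by
    refine le_trans (Finset.card_le_card ?_) Finset.card_biUnion_le
    intro x hx
    obtain ⟨q, hq, rfl⟩ := Finset.mem_image.mp hx
    have w := hT q hq
    simp only [Finset.mem_biUnion, hDs, Finset.mem_filter, Finset.mem_Icc]
    exact ⟨Nat.gcd (f q.1) R, ⟨Nat.mem_divisors.mpr ⟨Nat.gcd_dvd_right _ _, hR0.ne'⟩, w.hsq⟩,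
      ⟨w.pc, w.ca⟩, Nat.gcd_dvd_left _ _⟩
  have hc3 : ((∑ d ∈ Ds, ((Finset.Icc 1 M).filter (fun x : ℕ => d ∣ f x)).card : ℕ) : ℝ) ≤
      Ds.card * (C1 * (M : ℝ) ^ (ε / 3) * ((M : ℝ) / Real.sqrt R + 1)) := by
    push_cast
    rw [← nsmul_eq_mul, ← Finset.sum_const]
    apply Finset.sum_le_sum
    intro d hd
    simp only [hDs, Finset.mem_filter] at hd
    have hds : Squarefree d := hRs.squarefree_of_dvd (Nat.dvd_of_mem_divisors hd.1)
    refine (hC1' M d hM hds).trans ?_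
    have : Real.sqrt R ≤ d := Real.sqrt_le_iff.mpr ⟨by positivity, by exact_mod_cast hd.2⟩
    have h5 : 0 < Real.sqrt R := Real.sqrt_pos.mpr hRr
    gcongr
  have hDc : (Ds.card : ℝ) ≤ C2 ^ 2 * ((M : ℝ) ^ (ε / 3)) ^ 2 := by
    have h1 : Ds.card ≤ 2 ^ (f M).primeFactors.card * 2 ^ (f n).primeFactors.card :=
      (Finset.card_filter_le _ _).trans (sfmR_card_divisors _ _ w0.sa w0.sb)
    calc (Ds.card : ℝ) ≤ (2 : ℝ) ^ (f M).primeFactors.card * (2 : ℝ) ^ (f n).primeFactors.card := by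
          exact_mod_cast h1
      _ ≤ (C2 * (M : ℝ) ^ (ε / 3)) * (C2 * (M : ℝ) ^ (ε / 3)) := by
          have a1 := hC2' M M hM le_rfl
          have a2 := hC2' n M w0.pb w0.ba
          gcongr
      _ = _ := by ring
  have hεe : (M : ℝ) ^ ε = ((M : ℝ) ^ (ε / 3)) ^ 3 := by
    rw [← Real.rpow_natCast, ← Real.rpow_mul hM0.le]; congr 1; push_cast; ring
  calc (T.card : ℝ) ≤ ((k * ∑ d ∈ Ds, ((Finset.Icc 1 M).filter (fun x : ℕ => d ∣ f x)).card : ℕ) : ℝ) := by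
        exact_mod_cast hc1.trans (Nat.mul_le_mul_left _ hc2)
    _ = k * ((∑ d ∈ Ds, ((Finset.Icc 1 M).filter (fun x : ℕ => d ∣ f x)).card : ℕ) : ℝ) := by
        rw [Nat.cast_mul]
    _ ≤ k * (Ds.card * (C1 * (M : ℝ) ^ (ε / 3) * ((M : ℝ) / Real.sqrt R + 1))) := by gcongr
    _ ≤ k * ((C2 ^ 2 * ((M : ℝ) ^ (ε / 3)) ^ 2) * (C1 * (M : ℝ) ^ (ε / 3) * ((M : ℝ) / Real.sqrt R + 1))) := by
        gcongr
    _ = _ := by rw [hεe]; ring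

theorem fiberB (h : SfmH P f) : ∃ C : ℝ, 0 < C ∧ ∀ M n : ℕ, 1 ≤ M →
    (sfmR (f M) (f n) : ℝ) ≤ (M : ℝ) ^ ((1 : ℝ) / 12) →
    ∀ T : Finset (ℕ × ℕ), (∀ q ∈ T, SfmW f M n q.1 q.2) →
    (T.card : ℝ) ≤ C * (M : ℝ) ^ ((5 : ℝ) / 6) := by
  classical
  obtain ⟨C1, hC1, hC1'⟩ := h.ratio_count
  refine ⟨C1, hC1, fun M n hM hRM T hT => ?_⟩
  rcases T.eq_empty_or_nonempty with h0 | ⟨q0, hq0⟩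
  · rw [h0]
    simp only [Finset.card_empty, Nat.cast_zero]
    positivity
  have w0 := hT q0 hq0
  have hM0 : (0 : ℝ) < M := by exact_mod_cast hM
  set R := sfmR (f M) (f n) with hR
  have hRs : Squarefree R := sfmR_sqf _ _ w0.sa w0.sb
  have hR0 : 0 < R := Nat.pos_of_ne_zero hRs.ne_zero
  have hsub : T ⊆ (R.divisors).biUnion (fun s => T.filter (fun q => s ≠ R / s ∧ (R / s) * f q.1 = s * f q.2)) := by
    intro q hq
    obtain ⟨s, t, h1, h2, h3⟩ := (hT q hq).ratio
    rw [← hR] at h1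
    have hs0 : 0 < s := Nat.pos_of_ne_zero (by rintro rfl; simp at h1; omega)
    have ht : R / s = t := by rw [← h1, Nat.mul_div_cancel_left _ hs0]
    simp only [Finset.mem_biUnion, Finset.mem_filter]
    exact ⟨s, Nat.mem_divisors.mpr ⟨⟨t, h1.symm⟩, hR0.ne'⟩, hq, by rw [ht]; exact h2, by rw [ht]; exact h3⟩
  have hc : (T.card : ℝ) ≤ ∑ s ∈ R.divisors,
      ((T.filter (fun q => s ≠ R / s ∧ (R / s) * f q.1 = s * f q.2)).card : ℝ) := by
    exact_mod_cast (Finset.card_le_card hsub).trans Finset.card_biUnion_le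
  refine hc.trans ?_
  have hd : (R.divisors.card : ℝ) ≤ R := by exact_mod_cast Nat.card_divisors_le_self R
  calc _ ≤ ∑ s ∈ R.divisors, C1 * (M : ℝ) ^ ((3 : ℝ) / 4) := by
        apply Finset.sum_le_sum
        intro s hs
        have hsd := Nat.dvd_of_mem_divisors hs
        have hs0 : 0 < s := Nat.pos_of_dvd_of_pos hsd hR0
        by_cases hst : s = R / s
        · have : T.filter (fun q => s ≠ R / s ∧ (R / s) * f q.1 = s * f q.2) = ∅ := by
            apply Finset.filter_eq_empty_iff.mpr
            intro q _ hq
            exact hq.1 hst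
          rw [this]
          simp only [Finset.card_empty, Nat.cast_zero]
          positivity
        · apply hC1' M s (R / s) hM hs0 (Nat.div_pos (Nat.le_of_dvd hR0 hsd) hs0) hst
          · refine le_trans ?_ hRM
            exact_mod_cast Nat.div_le_self R s
          · intro q hq
            rw [Finset.mem_filter] at hq
            have w := hT q hq.1
            exact ⟨⟨w.pc, w.ca⟩, w.pd, hq.2.2⟩
    _ = R.divisors.card * (C1 * (M : ℝ) ^ ((3 : ℝ) / 4)) := by simp
    _ ≤ (M : ℝ) ^ ((1 : ℝ) / 12) * (C1 * (M : ℝ) ^ ((3 : ℝ) / 4)) := by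
        have := hd.trans hRM
        gcongr
    _ = C1 * ((M : ℝ) ^ ((1 : ℝ) / 12) * (M : ℝ) ^ ((3 : ℝ) / 4)) := by ring
    _ = _ := by rw [← Real.rpow_add hM0]; norm_num

end SfmH


namespace SfmH
variable {P : Polynomial ℤ} {f : ℕ → ℕ}

theorem outer (h : SfmH P f) (ε : ℝ) (hε : 0 < ε) : ∃ C : ℝ, 0 < C ∧ ∀ M : ℕ, 1 ≤ M → Squarefree (f M) →
    ∀ (I : Finset ℕ) (F : ℕ → ℝ) (K : ℝ), I ⊆ Finset.Icc 1 M → 0 ≤ K → (∀ n ∈ I, 0 ≤ F n) →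
    (∀ n ∈ I, F n * ((M : ℝ) / (Nat.gcd (f M) (f n) : ℕ) + 1) ≤ K) →
    ∑ n ∈ I, F n ≤ C * (M : ℝ) ^ ε * K := by
  classical
  obtain ⟨C1, hC1, hC1'⟩ := h.count_eps (ε / 2) (by positivity)
  obtain ⟨C2, hC2, hC2'⟩ := h.omega_eps (ε / 2) (by positivity)
  refine ⟨C2 * C1, by positivity, fun M hM hs I F K hI hK hF hFK => ?_⟩
  have hM0 : (0 : ℝ) < M := by exact_mod_cast hM
  have hmap : ∀ n ∈ I, Nat.gcd (f M) (f n) ∈ (f M).divisors := fun n _ =>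
    Nat.mem_divisors.mpr ⟨Nat.gcd_dvd_left _ _, hs.ne_zero⟩
  rw [← Finset.sum_fiberwise_of_maps_to hmap]
  calc _ ≤ ∑ g ∈ (f M).divisors, C1 * (M : ℝ) ^ (ε / 2) * K := by
        apply Finset.sum_le_sum
        intro g hg
        have hgs : Squarefree g := hs.squarefree_of_dvd (Nat.dvd_of_mem_divisors hg)
        have hX : (0 : ℝ) < (M : ℝ) / g + 1 := by positivity
        have h1 : ∀ n ∈ I.filter (fun n => Nat.gcd (f M) (f n) = g), F n ≤ K / ((M : ℝ) / g + 1) := by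
          intro n hn
          rw [Finset.mem_filter] at hn
          have := hFK n hn.1
          rw [hn.2] at this
          rwa [le_div_iff₀ hX]
        refine (Finset.sum_le_card_nsmul _ _ _ h1).trans ?_
        rw [nsmul_eq_mul]
        have h2 : ((I.filter (fun n => Nat.gcd (f M) (f n) = g)).card : ℝ) ≤
            C1 * (M : ℝ) ^ (ε / 2) * ((M : ℝ) / g + 1) := by
          refine le_trans ?_ (hC1' M g hM hgs)
          norm_cast
          apply Finset.card_le_card
          intro n hn
          rw [Finset.mem_filter] at hn ⊢
          exact ⟨hI hn.1, hn.2 ▸ Nat.gcd_dvd_right _ _⟩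
        calc _ ≤ (C1 * (M : ℝ) ^ (ε / 2) * ((M : ℝ) / g + 1)) * (K / ((M : ℝ) / g + 1)) := by gcongr
          _ = _ := by field_simp
    _ = (f M).divisors.card * (C1 * (M : ℝ) ^ (ε / 2) * K) := by simp
    _ ≤ (C2 * (M : ℝ) ^ (ε / 2)) * (C1 * (M : ℝ) ^ (ε / 2) * K) := by
        have h1 : ((f M).divisors.card : ℝ) ≤ C2 * (M : ℝ) ^ (ε / 2) := by
          rw [sfm_card_divisors _ hs]
          push_cast
          exact hC2' M M hM le_rfl
        gcongr
    _ = C2 * C1 * ((M : ℝ) ^ (ε / 2) * (M : ℝ) ^ (ε / 2)) * K := by ring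
    _ = _ := by rw [← Real.rpow_add hM0]; congr 3; ring

end SfmH

theorem sfm_caseA (C x F g R : ℝ) (hC : 1 ≤ C) (hx : 1 ≤ x) (hg : 1 ≤ g) (hR : 1 ≤ R)
    (hF : x ^ 2 ≤ C * F) (h3 : F ≤ g ^ 3) (hgR : F ≤ g * R) (hRx : x ^ ((1 : ℝ) / 12) ≤ R) :
    (x / Real.sqrt R + 1) * (x / g + 1) ≤ 4 * C * x ^ ((23 : ℝ) / 24) := by
  have hx0 : 0 < x := by linarith
  have hg0 : 0 < g := by linarith
  have hR0 : 0 < R := by linarith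
  have hs : 0 < Real.sqrt R := Real.sqrt_pos.mpr hR0
  have hC0 : 0 < C := by linarith
  set A := x / g with hA
  set B := x / Real.sqrt R with hB
  have hA0 : 0 < A := by positivity
  have hB0 : 0 < B := by positivity
  have hB2 : B ^ 2 = x ^ 2 / R := by rw [hB, div_pow, Real.sq_sqrt hR0.le]
  have hA3 : A ^ 3 ≤ C * x := by
    rw [hA, div_pow, div_le_iff₀ (by positivity)]
    calc x ^ 3 = x ^ 2 * x := by ring
      _ ≤ C * g ^ 3 * x := by
        have : x ^ 2 ≤ C * g ^ 3 := hF.trans (by gcongr)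
        gcongr
      _ = _ := by ring
  have hAB : A * B ^ 2 ≤ C * x := by
    rw [hB2, hA, div_mul_div_comm, div_le_iff₀ (by positivity)]
    calc x * x ^ 2 ≤ x * (C * (g * R)) := by
          have : x ^ 2 ≤ C * (g * R) := hF.trans (by gcongr)
          gcongr
      _ = _ := by ring
  have e3 : (x ^ ((1 : ℝ) / 3)) ^ 3 = x := by
    rw [← Real.rpow_natCast, ← Real.rpow_mul hx0.le]; norm_num
  have hC3 : C ≤ C ^ 3 := by
    calc C = C ^ 1 := by ring
      _ ≤ C ^ 3 := pow_le_pow_right₀ hC (by norm_num)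
  set y := x ^ ((1 : ℝ) / 3) with hy
  have hy1 : 0 < y := by positivity
  have hA1 : A ≤ C * y := by
    refine le_of_pow_le_pow_left₀ (n := 3) (by norm_num) (by positivity) ?_
    rw [mul_pow, e3]
    refine hA3.trans ?_
    gcongr
  have hAB1 : A * B ≤ C * y ^ 2 := by
    refine le_of_pow_le_pow_left₀ (n := 2) (by norm_num) (by positivity) ?_
    calc (A * B) ^ 2 = A * (A * B ^ 2) := by ring
      _ ≤ (C * y) * (C * x) := by gcongr
      _ = (C * y) * (C * y ^ 3) := by rw [e3]
      _ = _ := by ring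
  set z := x ^ ((23 : ℝ) / 24) with hz
  have hz1 : 1 ≤ z := Real.one_le_rpow hx (by norm_num)
  have hyz : y ≤ z := Real.rpow_le_rpow_of_exponent_le hx (by norm_num)
  have hy2z : y ^ 2 ≤ z := by
    rw [hy, ← Real.rpow_natCast, ← Real.rpow_mul hx0.le]
    exact Real.rpow_le_rpow_of_exponent_le hx (by norm_num)
  have hBz : B ≤ z := by
    rw [hB, div_le_iff₀ hs]
    have : x ^ ((1 : ℝ) / 24) ≤ Real.sqrt R := by
      apply Real.le_sqrt_of_sq_le
      refine le_trans (le_of_eq ?_) hRx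
      rw [← Real.rpow_natCast, ← Real.rpow_mul hx0.le]; norm_num
    calc x = z * x ^ ((1 : ℝ) / 24) := by rw [hz, ← Real.rpow_add hx0]; norm_num
      _ ≤ _ := by gcongr
  have h1 : B ≤ C * z := hBz.trans (by nlinarith)
  have h2 : A ≤ C * z := hA1.trans (by gcongr)
  have h3 : A * B ≤ C * z := hAB1.trans (by gcongr)
  have h4 : 1 ≤ C * z := by nlinarith
  nlinarith

namespace SfmH
variable {P : Polynomial ℤ} {f : ℕ → ℕ}

theorem count_M (h : SfmH P f) : ∃ C : ℝ, 0 < C ∧ ∀ M : ℕ, 1 ≤ M →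
    ∀ T : Finset (ℕ × ℕ × ℕ), (∀ q ∈ T, SfmW f M q.1 q.2.1 q.2.2) →
    (T.card : ℝ) ≤ C * (M : ℝ) ^ ((49 : ℝ) / 50) := by
  classical
  obtain ⟨CA, hCA, hCA'⟩ := h.fiberA (1 / 1000) (by norm_num)
  obtain ⟨CB, hCB, hCB'⟩ := h.fiberB
  obtain ⟨CO, hCO, hCO'⟩ := h.outer (1 / 1000) (by norm_num)
  obtain ⟨_, C0, hC0, hC0'⟩ := h.growth
  set C := max C0 1 with hC
  have hC1 : 1 ≤ C := le_max_right _ _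
  have hCp : 0 < C := by linarith
  refine ⟨CO * (CA * (4 * C)) + CO * (CB * (C + 1)), by positivity, fun M hM T hT => ?_⟩
  rcases T.eq_empty_or_nonempty with h0 | ⟨q0, hq0⟩
  · rw [h0]
    simp only [Finset.card_empty, Nat.cast_zero]
    positivity
  have hM1 : (1 : ℝ) ≤ M := by exact_mod_cast hM
  have hM0 : (0 : ℝ) < M := by linarith
  have hs : Squarefree (f M) := (hT q0 hq0).sa
  have hFM : (M : ℝ) ^ 2 ≤ C * f M := by
    calc (M : ℝ) ^ 2 ≤ (M : ℝ) ^ P.natDegree := pow_le_pow_right₀ hM1 h.deg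
      _ ≤ C0 * f M := (hC0' M hM).2
      _ ≤ C * f M := by gcongr; exact le_max_left _ _
  set I := T.image Prod.fst with hI
  have hIw : ∀ n ∈ I, ∃ c d, SfmW f M n c d := by
    intro n hn
    obtain ⟨q, hq, rfl⟩ := Finset.mem_image.mp hn
    exact ⟨_, _, hT q hq⟩
  have hIs : I ⊆ Finset.Icc 1 M := by
    intro n hn
    obtain ⟨c, d, w⟩ := hIw n hn
    exact Finset.mem_Icc.mpr ⟨w.pb, w.ba⟩
  set Fc : ℕ → ℝ := fun n => ((T.filter (fun q => q.1 = n)).card : ℝ) with hFc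
  have hcard : (T.card : ℝ) = ∑ n ∈ I, Fc n := by
    rw [hFc, ← Nat.cast_sum]
    congr 1
    exact Finset.card_eq_sum_card_image Prod.fst T
  have hFim : ∀ n, Fc n = (((T.filter (fun q => q.1 = n)).image Prod.snd).card : ℝ) := by
    intro n
    rw [Finset.card_image_of_injOn]
    intro q hq r hr hqr
    simp only [Finset.coe_filter, Set.mem_setOf_eq] at hq hr
    exact Prod.ext (hq.2.trans hr.2.symm) hqr
  have hFw : ∀ n, ∀ r ∈ ((T.filter (fun q => q.1 = n)).image Prod.snd), SfmW f M n r.1 r.2 := by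
    intro n r hr
    obtain ⟨q, hq, rfl⟩ := Finset.mem_image.mp hr
    rw [Finset.mem_filter] at hq
    have := hT q hq.1
    rwa [hq.2] at this
  rw [hcard, ← Finset.sum_filter_add_sum_filter_not I (fun n => (M : ℝ) ^ ((1 : ℝ) / 12) ≤ sfmR (f M) (f n))]
  have hFpos : ∀ n, 0 ≤ Fc n := fun n => Nat.cast_nonneg _
  have hgen : ∀ n ∈ I, (1 : ℝ) ≤ (Nat.gcd (f M) (f n) : ℕ) ∧ (1 : ℝ) ≤ sfmR (f M) (f n) ∧
      (f M : ℝ) ≤ ((Nat.gcd (f M) (f n) : ℕ) : ℝ) ^ 3 ∧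
      (f M : ℝ) ≤ ((Nat.gcd (f M) (f n) : ℕ) : ℝ) * sfmR (f M) (f n) := by
    intro n hn
    obtain ⟨c, d, w⟩ := hIw n hn
    refine ⟨?_, ?_, ?_, ?_⟩
    · exact_mod_cast Nat.gcd_pos_of_pos_left _ (Nat.pos_of_ne_zero hs.ne_zero)
    · exact_mod_cast Nat.pos_of_ne_zero (sfmR_sqf _ _ w.sa w.sb).ne_zero
    · exact_mod_cast w.gcube
    · exact_mod_cast sfmR_ge (f M) (f n) w.sb.ne_zero
  have hA := hCO' M hM hs (I.filter (fun n => (M : ℝ) ^ ((1 : ℝ) / 12) ≤ sfmR (f M) (f n))) Fc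
    (CA * (M : ℝ) ^ ((1 : ℝ) / 1000) * (4 * C * (M : ℝ) ^ ((23 : ℝ) / 24)))
    ((Finset.filter_subset _ _).trans hIs) (by positivity) (fun n _ => hFpos n) (by
      intro n hn
      rw [Finset.mem_filter] at hn
      obtain ⟨g1, g2, g3, g4⟩ := hgen n hn.1
      have e1 := sfm_caseA C M (f M) _ _ hC1 hM1 g1 g2 hFM g3 g4 hn.2
      have e2 := hCA' M n hM _ (hFw n)
      rw [← hFim n] at e2
      calc _ ≤ CA * (M : ℝ) ^ ((1 : ℝ) / 1000) * ((M : ℝ) / Real.sqrt (sfmR (f M) (f n)) + 1) *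
            ((M : ℝ) / (Nat.gcd (f M) (f n) : ℕ) + 1) := by gcongr
        _ = CA * (M : ℝ) ^ ((1 : ℝ) / 1000) * (((M : ℝ) / Real.sqrt (sfmR (f M) (f n)) + 1) *
            ((M : ℝ) / (Nat.gcd (f M) (f n) : ℕ) + 1)) := by ring
        _ ≤ _ := by gcongr)
  have hB := hCO' M hM hs (I.filter (fun n => ¬ (M : ℝ) ^ ((1 : ℝ) / 12) ≤ sfmR (f M) (f n))) Fc
    (CB * (M : ℝ) ^ ((5 : ℝ) / 6) * (C + 1))
    ((Finset.filter_subset _ _).trans hIs) (by positivity) (fun n _ => hFpos n) (by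
      intro n hn
      rw [Finset.mem_filter] at hn
      obtain ⟨g1, g2, g3, g4⟩ := hgen n hn.1
      have hn2 := (not_le.mp hn.2).le
      have e2 := hCB' M n hM hn2 _ (hFw n)
      rw [← hFim n] at e2
      have e3 : (M : ℝ) / (Nat.gcd (f M) (f n) : ℕ) ≤ C := by
        have g0 : (0 : ℝ) < (Nat.gcd (f M) (f n) : ℕ) := by linarith
        rw [div_le_iff₀ g0]
        have e4 : (sfmR (f M) (f n) : ℝ) ≤ M := hn2.trans (by
          calc (M : ℝ) ^ ((1 : ℝ) / 12) ≤ (M : ℝ) ^ (1 : ℝ) :=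
                Real.rpow_le_rpow_of_exponent_le hM1 (by norm_num)
            _ = M := Real.rpow_one _)
        have e5 : (M : ℝ) * M ≤ (C * (Nat.gcd (f M) (f n) : ℕ)) * M := by
          calc (M : ℝ) * M = (M : ℝ) ^ 2 := by ring
            _ ≤ C * f M := hFM
            _ ≤ C * (((Nat.gcd (f M) (f n) : ℕ) : ℝ) * sfmR (f M) (f n)) := by gcongr
            _ ≤ C * (((Nat.gcd (f M) (f n) : ℕ) : ℝ) * M) := by gcongr
            _ = _ := by ring
        exact le_of_mul_le_mul_right e5 hM0
      gcongr)
  refine (add_le_add hA hB).trans ?_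
  have p1 : (M : ℝ) ^ ((1 : ℝ) / 1000) * ((M : ℝ) ^ ((1 : ℝ) / 1000) * (M : ℝ) ^ ((23 : ℝ) / 24)) ≤
      (M : ℝ) ^ ((49 : ℝ) / 50) := by
    rw [← Real.rpow_add hM0, ← Real.rpow_add hM0]
    exact Real.rpow_le_rpow_of_exponent_le hM1 (by norm_num)
  have p2 : (M : ℝ) ^ ((1 : ℝ) / 1000) * (M : ℝ) ^ ((5 : ℝ) / 6) ≤ (M : ℝ) ^ ((49 : ℝ) / 50) := by
    rw [← Real.rpow_add hM0]
    exact Real.rpow_le_rpow_of_exponent_le hM1 (by norm_num)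
  calc _ = CO * (CA * (4 * C)) * ((M : ℝ) ^ ((1 : ℝ) / 1000) * ((M : ℝ) ^ ((1 : ℝ) / 1000) * (M : ℝ) ^ ((23 : ℝ) / 24)))
        + CO * (CB * (C + 1)) * ((M : ℝ) ^ ((1 : ℝ) / 1000) * (M : ℝ) ^ ((5 : ℝ) / 6)) := by ring
    _ ≤ CO * (CA * (4 * C)) * (M : ℝ) ^ ((49 : ℝ) / 50) + CO * (CB * (C + 1)) * (M : ℝ) ^ ((49 : ℝ) / 50) := by
        gcongr
    _ = _ := by ring

end SfmH


theorem sfm_perm {α ι : Type*} [DecidableEq α] [Fintype ι] (s t : Finset α) (φ : ι → α → α)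
    (hφ : ∀ i, Function.Injective (φ i)) (h : ∀ q ∈ s, ∃ i, φ i q ∈ t) :
    s.card ≤ Fintype.card ι * t.card := by
  classical
  have hsub : s ⊆ Finset.univ.biUnion (fun i => s.filter (fun q => φ i q ∈ t)) := by
    intro q hq
    obtain ⟨i, hi⟩ := h q hq
    simp only [Finset.mem_biUnion, Finset.mem_univ, true_and, Finset.mem_filter]
    exact ⟨i, hq, hi⟩
  refine (Finset.card_le_card hsub).trans (Finset.card_biUnion_le.trans ?_)
  rw [← Finset.card_univ, ← smul_eq_mul, ← Finset.sum_const]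
  apply Finset.sum_le_sum
  intro i _
  apply Finset.card_le_card_of_injOn (φ i)
  · intro q hq
    exact (Finset.mem_filter.mp hq).2
  · exact (hφ i).injOn

/-- generic solutions -/
structure SfmV (f : ℕ → ℕ) (N a b c d : ℕ) : Prop where
  pa : 1 ≤ a ∧ a ≤ N
  pb : 1 ≤ b ∧ b ≤ N
  pc : 1 ≤ c ∧ c ≤ N
  pd : 1 ≤ d ∧ d ≤ N
  sa : Squarefree (f a)
  sb : Squarefree (f b)
  sc : Squarefree (f c)
  sd : Squarefree (f d)
  sq : IsSquare (f a * f b * f c * f d)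
  ab : f a ≠ f b
  ac : f a ≠ f c
  ad : f a ≠ f d
  bc : f b ≠ f c
  bd : f b ≠ f d
  cd : f c ≠ f d

theorem SfmV.s12 {f : ℕ → ℕ} {N a b c d : ℕ} (v : SfmV f N a b c d) : SfmV f N b a c d :=
  ⟨v.pb, v.pa, v.pc, v.pd, v.sb, v.sa, v.sc, v.sd, by have := v.sq; rwa [mul_comm (f a)] at this,
    v.ab.symm, v.bc, v.bd, v.ac, v.ad, v.cd⟩

theorem SfmV.s23 {f : ℕ → ℕ} {N a b c d : ℕ} (v : SfmV f N a b c d) : SfmV f N a c b d :=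
  ⟨v.pa, v.pc, v.pb, v.pd, v.sa, v.sc, v.sb, v.sd, by have := v.sq; rwa [mul_right_comm (f a)] at this,
    v.ac, v.ab, v.ad, v.bc.symm, v.cd, v.bd⟩

theorem SfmV.s34 {f : ℕ → ℕ} {N a b c d : ℕ} (v : SfmV f N a b c d) : SfmV f N a b d c :=
  ⟨v.pa, v.pb, v.pd, v.pc, v.sa, v.sb, v.sd, v.sc, by have := v.sq; rwa [mul_right_comm (f a * f b)] at this,
    v.ab, v.ad, v.ac, v.bd, v.bc, v.cd.symm⟩

/-- the box -/
def sfmBox (N : ℕ) : Finset (ℕ × ℕ × ℕ × ℕ) :=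
  Finset.Icc 1 N ×ˢ Finset.Icc 1 N ×ˢ Finset.Icc 1 N ×ˢ Finset.Icc 1 N

theorem SfmV.box {f : ℕ → ℕ} {N a b c d : ℕ} (v : SfmV f N a b c d) : (a, b, c, d) ∈ sfmBox N := by
  simp only [sfmBox, Finset.mem_product, Finset.mem_Icc]
  exact ⟨v.pa, v.pb, v.pc, v.pd⟩

open Classical in
/-- finset of quadruples satisfying a predicate -/
noncomputable def sfmQ (N : ℕ) (p : ℕ → ℕ → ℕ → ℕ → Prop) : Finset (ℕ × ℕ × ℕ × ℕ) :=
  (sfmBox N).filter (fun q => p q.1 q.2.1 q.2.2.1 q.2.2.2)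

theorem sfmQ_mem {f : ℕ → ℕ} {N a b c d : ℕ} {p : ℕ → ℕ → ℕ → ℕ → Prop} (v : SfmV f N a b c d)
    (h : p a b c d) : (a, b, c, d) ∈ sfmQ N p := by
  classical
  unfold sfmQ
  simp only [Finset.mem_filter]
  exact ⟨v.box, h⟩

theorem sfmQ_mem' {N : ℕ} {q : ℕ × ℕ × ℕ × ℕ} {p : ℕ → ℕ → ℕ → ℕ → Prop}
    (h : q ∈ sfmQ N p) : p q.1 q.2.1 q.2.2.1 q.2.2.2 := by
  classical
  unfold sfmQ at h
  simp only [Finset.mem_filter] at h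
  exact h.2

theorem sfm_step1 (f : ℕ → ℕ) (N : ℕ) :
    (sfmQ N (SfmV f N)).card ≤ 4 * (sfmQ N (fun a b c d => SfmV f N a b c d ∧ b ≤ a ∧ c ≤ a ∧ d ≤ a)).card := by
  classical
  refine sfm_perm (ι := Fin 4) _ _ ![fun q => (q.1, q.2.1, q.2.2.1, q.2.2.2),
    fun q => (q.2.1, q.1, q.2.2.1, q.2.2.2), fun q => (q.2.2.1, q.1, q.2.1, q.2.2.2),
    fun q => (q.2.2.2, q.1, q.2.1, q.2.2.1)] ?_ ?_
  · intro i
    fin_cases i <;> (rintro ⟨a, b, c, d⟩ ⟨a', b', c', d'⟩ h; simp at h ⊢; tauto)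
  · rintro ⟨a, b, c, d⟩ hq
    have v : SfmV f N a b c d := sfmQ_mem' hq
    rcases le_total a b with h1 | h1 <;> rcases le_total c d with h2 | h2
    · rcases le_total b d with h3 | h3
      · exact ⟨3, sfmQ_mem v.s34.s23.s12 ⟨v.s34.s23.s12, by (try dsimp only); omega, by (try dsimp only); omega, by (try dsimp only); omega⟩⟩
      · exact ⟨1, sfmQ_mem v.s12 ⟨v.s12, by (try dsimp only); omega, by (try dsimp only); omega, by (try dsimp only); omega⟩⟩
    · rcases le_total b c with h3 | h3
      · exact ⟨2, sfmQ_mem v.s23.s12 ⟨v.s23.s12, by (try dsimp only); omega, by (try dsimp only); omega, by (try dsimp only); omega⟩⟩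
      · exact ⟨1, sfmQ_mem v.s12 ⟨v.s12, by (try dsimp only); omega, by (try dsimp only); omega, by (try dsimp only); omega⟩⟩
    · rcases le_total a d with h3 | h3
      · exact ⟨3, sfmQ_mem v.s34.s23.s12 ⟨v.s34.s23.s12, by (try dsimp only); omega, by (try dsimp only); omega, by (try dsimp only); omega⟩⟩
      · exact ⟨0, sfmQ_mem v ⟨v, by (try dsimp only); omega, by (try dsimp only); omega, by (try dsimp only); omega⟩⟩
    · rcases le_total a c with h3 | h3
      · exact ⟨2, sfmQ_mem v.s23.s12 ⟨v.s23.s12, by (try dsimp only); omega, by (try dsimp only); omega, by (try dsimp only); omega⟩⟩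
      · exact ⟨0, sfmQ_mem v ⟨v, by (try dsimp only); omega, by (try dsimp only); omega, by (try dsimp only); omega⟩⟩

theorem sfm_step2 (f : ℕ → ℕ) (N : ℕ) :
    (sfmQ N (fun a b c d => SfmV f N a b c d ∧ b ≤ a ∧ c ≤ a ∧ d ≤ a)).card ≤
    3 * (sfmQ N (fun a b c d => SfmV f N a b c d ∧ (b ≤ a ∧ c ≤ a ∧ d ≤ a) ∧
      Nat.gcd (f a) (f c) ≤ Nat.gcd (f a) (f b) ∧ Nat.gcd (f a) (f d) ≤ Nat.gcd (f a) (f b))).card := by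
  classical
  refine sfm_perm (ι := Fin 3) _ _ ![fun q => (q.1, q.2.1, q.2.2.1, q.2.2.2),
    fun q => (q.1, q.2.2.1, q.2.1, q.2.2.2), fun q => (q.1, q.2.2.2, q.2.1, q.2.2.1)] ?_ ?_
  · intro i
    fin_cases i <;> (rintro ⟨a, b, c, d⟩ ⟨a', b', c', d'⟩ h; simp at h ⊢; tauto)
  · rintro ⟨a, b, c, d⟩ hq
    have v' : SfmV f N a b c d ∧ b ≤ a ∧ c ≤ a ∧ d ≤ a := sfmQ_mem' hq
    obtain ⟨v, hb, hc, hd⟩ := v'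
    rcases le_total (Nat.gcd (f a) (f b)) (Nat.gcd (f a) (f c)) with h1 | h1
    · rcases le_total (Nat.gcd (f a) (f c)) (Nat.gcd (f a) (f d)) with h2 | h2
      · exact ⟨2, sfmQ_mem v.s34.s23 ⟨v.s34.s23, ⟨by (try dsimp only); omega, by (try dsimp only); omega, by (try dsimp only); omega⟩, by (try dsimp only); omega, by (try dsimp only); omega⟩⟩
      · exact ⟨1, sfmQ_mem v.s23 ⟨v.s23, ⟨by (try dsimp only); omega, by (try dsimp only); omega, by (try dsimp only); omega⟩, by (try dsimp only); omega, by (try dsimp only); omega⟩⟩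
    · rcases le_total (Nat.gcd (f a) (f b)) (Nat.gcd (f a) (f d)) with h2 | h2
      · exact ⟨2, sfmQ_mem v.s34.s23 ⟨v.s34.s23, ⟨by (try dsimp only); omega, by (try dsimp only); omega, by (try dsimp only); omega⟩, by (try dsimp only); omega, by (try dsimp only); omega⟩⟩
      · exact ⟨0, sfmQ_mem v ⟨v, ⟨by (try dsimp only); omega, by (try dsimp only); omega, by (try dsimp only); omega⟩, by (try dsimp only); omega, by (try dsimp only); omega⟩⟩

theorem sfm_step3 (f : ℕ → ℕ) (N : ℕ) :
    (sfmQ N (fun a b c d => SfmV f N a b c d ∧ (b ≤ a ∧ c ≤ a ∧ d ≤ a) ∧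
      Nat.gcd (f a) (f c) ≤ Nat.gcd (f a) (f b) ∧ Nat.gcd (f a) (f d) ≤ Nat.gcd (f a) (f b))).card ≤
    2 * (sfmQ N (SfmW f)).card := by
  classical
  refine sfm_perm (ι := Fin 2) _ _ ![fun q => (q.1, q.2.1, q.2.2.1, q.2.2.2),
    fun q => (q.1, q.2.1, q.2.2.2, q.2.2.1)] ?_ ?_
  · intro i
    fin_cases i <;> (rintro ⟨a, b, c, d⟩ ⟨a', b', c', d'⟩ h; simp at h ⊢; tauto)
  · rintro ⟨a, b, c, d⟩ hq
    have v' : SfmV f N a b c d ∧ (b ≤ a ∧ c ≤ a ∧ d ≤ a) ∧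
      Nat.gcd (f a) (f c) ≤ Nat.gcd (f a) (f b) ∧ Nat.gcd (f a) (f d) ≤ Nat.gcd (f a) (f b) := sfmQ_mem' hq
    obtain ⟨v, ⟨hb, hc, hd⟩, g1, g2⟩ := v'
    rcases le_total (Nat.gcd (f d) (sfmR (f a) (f b))) (Nat.gcd (f c) (sfmR (f a) (f b))) with h1 | h1
    · exact ⟨0, sfmQ_mem v ⟨v.pa.1, v.pb.1, v.pc.1, v.pd.1, hb, hc, hd, v.sa, v.sb, v.sc, v.sd, v.sq, v.cd,
        g1, g2, h1⟩⟩
    · exact ⟨1, sfmQ_mem v.s34 ⟨v.pa.1, v.pb.1, v.pd.1, v.pc.1, hb, hd, hc, v.sa, v.sb, v.sd, v.sc, v.s34.sq,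
        v.cd.symm, g2, g1, h1⟩⟩

namespace SfmH
variable {P : Polynomial ℤ} {f : ℕ → ℕ}

theorem count_V (h : SfmH P f) : ∃ C : ℝ, 0 < C ∧ ∀ N : ℕ, 1 ≤ N →
    ((sfmQ N (SfmV f N)).card : ℝ) ≤ C * (N : ℝ) ^ ((99 : ℝ) / 50) := by
  classical
  obtain ⟨C, hC, hC'⟩ := h.count_M
  refine ⟨24 * C, by positivity, fun N hN => ?_⟩
  have hN0 : (0 : ℝ) < N := by exact_mod_cast hN
  have h1 : (sfmQ N (SfmV f N)).card ≤ 24 * (sfmQ N (SfmW f)).card := by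
    have a1 := sfm_step1 f N
    have a2 := sfm_step2 f N
    have a3 := sfm_step3 f N
    omega
  have h2 : ((sfmQ N (SfmW f)).card : ℝ) ≤ C * (N : ℝ) ^ ((99 : ℝ) / 50) := by
    have hm : ∀ q ∈ sfmQ N (SfmW f), q.1 ∈ Finset.Icc 1 N := by
      intro q hq
      unfold sfmQ sfmBox at hq
      simp only [Finset.mem_filter, Finset.mem_product] at hq
      exact hq.1.1
    rw [Finset.card_eq_sum_card_fiberwise hm]
    push_cast
    calc _ ≤ ∑ M ∈ Finset.Icc 1 N, C * (N : ℝ) ^ ((49 : ℝ) / 50) := by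
          apply Finset.sum_le_sum
          intro M hM
          rw [Finset.mem_Icc] at hM
          have e1 : (((sfmQ N (SfmW f)).filter (fun q => q.1 = M)).image Prod.snd).card =
              ((sfmQ N (SfmW f)).filter (fun q => q.1 = M)).card := by
            apply Finset.card_image_of_injOn
            intro q hq r hr hqr
            simp only [Finset.coe_filter, Set.mem_setOf_eq] at hq hr
            exact Prod.ext (hq.2.trans hr.2.symm) hqr
          rw [← e1]
          refine (hC' M hM.1 _ ?_).trans ?_
          · intro r hr
            obtain ⟨q, hq, rfl⟩ := Finset.mem_image.mp hr
            rw [Finset.mem_filter] at hq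
            have := sfmQ_mem' hq.1
            rwa [hq.2] at this
          · have : (M : ℝ) ≤ N := by exact_mod_cast hM.2
            gcongr
      _ = C * ((N : ℝ) ^ (1 : ℝ) * (N : ℝ) ^ ((49 : ℝ) / 50)) := by
          simp; ring
      _ = _ := by rw [← Real.rpow_add hN0]; norm_num
  calc ((sfmQ N (SfmV f N)).card : ℝ) ≤ 24 * ((sfmQ N (SfmW f)).card : ℝ) := by exact_mod_cast h1
    _ ≤ 24 * (C * (N : ℝ) ^ ((99 : ℝ) / 50)) := by gcongr
    _ = _ := by ring

end SfmH


/-- all solutions -/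
structure SfmU (f : ℕ → ℕ) (a b c d : ℕ) : Prop where
  sa : Squarefree (f a)
  sb : Squarefree (f b)
  sc : Squarefree (f c)
  sd : Squarefree (f d)
  sq : IsSquare (f a * f b * f c * f d)

open Classical in
/-- squarefree indices -/
noncomputable def sfmS (f : ℕ → ℕ) (N : ℕ) : Finset ℕ := (Finset.Icc 1 N).filter (fun n => Squarefree (f n))

/-- diagonal solutions -/
noncomputable def sfmD (f : ℕ → ℕ) (N : ℕ) : Finset (ℕ × ℕ × ℕ × ℕ) :=
  ((sfmS f N ×ˢ sfmS f N).image (fun q => (q.1, q.1, q.2, q.2)) ∪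
   (sfmS f N ×ˢ sfmS f N).image (fun q => (q.1, q.2, q.1, q.2))) ∪
   (sfmS f N ×ˢ sfmS f N).image (fun q => (q.1, q.2, q.2, q.1))

theorem sfmD_card (f : ℕ → ℕ) (N : ℕ) : (sfmD f N).card ≤ 3 * (sfmS f N).card ^ 2 ∧
    3 * (sfmS f N).card ^ 2 ≤ (sfmD f N).card + 2 * (sfmS f N).card := by
  classical
  unfold sfmD
  set S := sfmS f N with hS
  set D1 := (S ×ˢ S).image (fun q => (q.1, q.1, q.2, q.2)) with hD1
  set D2 := (S ×ˢ S).image (fun q => (q.1, q.2, q.1, q.2)) with hD2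
  set D3 := (S ×ˢ S).image (fun q => (q.1, q.2, q.2, q.1)) with hD3
  have c1 : D1.card = S.card ^ 2 := by
    rw [hD1, Finset.card_image_of_injective, Finset.card_product, pow_two]
    rintro ⟨a, b⟩ ⟨c, d⟩ h; simp at h ⊢; tauto
  have c2 : D2.card = S.card ^ 2 := by
    rw [hD2, Finset.card_image_of_injective, Finset.card_product, pow_two]
    rintro ⟨a, b⟩ ⟨c, d⟩ h; simp at h ⊢; tauto
  have c3 : D3.card = S.card ^ 2 := by
    rw [hD3, Finset.card_image_of_injective, Finset.card_product, pow_two]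
    rintro ⟨a, b⟩ ⟨c, d⟩ h; simp at h ⊢; tauto
  have i1 : (D1 ∩ D2).card ≤ S.card := by
    refine le_trans (Finset.card_le_card (t := S.image (fun a => (a, a, a, a))) ?_) Finset.card_image_le
    rintro ⟨a, b, c, d⟩ h
    simp only [hD1, hD2, Finset.mem_inter, Finset.mem_image, Finset.mem_product, Prod.exists, Prod.mk.injEq] at h ⊢
    grind
  have i2 : ((D1 ∪ D2) ∩ D3).card ≤ S.card := by
    refine le_trans (Finset.card_le_card (t := S.image (fun a => (a, a, a, a))) ?_) Finset.card_image_le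
    rintro ⟨a, b, c, d⟩ h
    simp only [hD1, hD2, hD3, Finset.mem_inter, Finset.mem_union, Finset.mem_image, Finset.mem_product, Prod.exists, Prod.mk.injEq] at h ⊢
    grind
  have u1 := Finset.card_union_add_card_inter D1 D2
  have u2 := Finset.card_union_add_card_inter (D1 ∪ D2) D3
  omega

theorem sfmS_mem {f : ℕ → ℕ} {N n : ℕ} : n ∈ sfmS f N ↔ (1 ≤ n ∧ n ≤ N) ∧ Squarefree (f n) := by
  classical
  unfold sfmS
  simp only [Finset.mem_filter, Finset.mem_Icc]

theorem sfmQU_mem {f : ℕ → ℕ} {N a b c d : ℕ} : (a, b, c, d) ∈ sfmQ N (SfmU f) ↔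
    ((1 ≤ a ∧ a ≤ N) ∧ (1 ≤ b ∧ b ≤ N) ∧ (1 ≤ c ∧ c ≤ N) ∧ (1 ≤ d ∧ d ≤ N)) ∧ SfmU f a b c d := by
  classical
  unfold sfmQ sfmBox
  simp only [Finset.mem_filter, Finset.mem_product, Finset.mem_Icc]

theorem sfmD_sub (f : ℕ → ℕ) (N : ℕ) : sfmD f N ⊆ sfmQ N (SfmU f) := by
  classical
  rintro ⟨a, b, c, d⟩ h
  rw [sfmQU_mem]
  simp only [sfmD, Finset.mem_union, Finset.mem_image, Finset.mem_product, Prod.exists, Prod.mk.injEq,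
    sfmS_mem] at h
  rcases h with (⟨x, y, ⟨⟨hx, sx⟩, hy, sy⟩, rfl, rfl, rfl, rfl⟩ | ⟨x, y, ⟨⟨hx, sx⟩, hy, sy⟩, rfl, rfl, rfl, rfl⟩) |
    ⟨x, y, ⟨⟨hx, sx⟩, hy, sy⟩, rfl, rfl, rfl, rfl⟩
  · exact ⟨⟨hx, hx, hy, hy⟩, sx, sx, sy, sy, ⟨f x * f y, by ring⟩⟩
  · exact ⟨⟨hx, hy, hx, hy⟩, sx, sy, sx, sy, ⟨f x * f y, by ring⟩⟩
  · exact ⟨⟨hx, hy, hy, hx⟩, sx, sy, sy, sx, ⟨f x * f y, by ring⟩⟩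

/-- pairs that are equal or small -/
def sfmX (N B : ℕ) : Finset (ℕ × ℕ) :=
  (Finset.Icc 1 N).image (fun n => (n, n)) ∪ Finset.Icc 1 B ×ˢ Finset.Icc 1 B

/-- pairs of such pairs, one being small -/
def sfmZ (N B : ℕ) : Finset ((ℕ × ℕ) × (ℕ × ℕ)) :=
  (sfmX N B ×ˢ (Finset.Icc 1 B ×ˢ Finset.Icc 1 B)) ∪ ((Finset.Icc 1 B ×ˢ Finset.Icc 1 B) ×ˢ sfmX N B)

theorem sfmZ_card (N B : ℕ) : (sfmZ N B).card ≤ 2 * (B ^ 2 * (N + B ^ 2)) := by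
  have h1 : (sfmX N B).card ≤ N + B ^ 2 := by
    unfold sfmX
    refine (Finset.card_union_le _ _).trans ?_
    have : ((Finset.Icc 1 N).image (fun n => (n, n))).card ≤ N := by
      refine Finset.card_image_le.trans ?_
      simp
    have h2 : (Finset.Icc 1 B ×ˢ Finset.Icc 1 B).card = B ^ 2 := by
      rw [Finset.card_product]; simp; ring
    omega
  unfold sfmZ
  refine (Finset.card_union_le _ _).trans ?_
  simp only [Finset.card_product, Nat.card_Icc, Nat.add_sub_cancel]
  nlinarith [Nat.mul_le_mul_left (B ^ 2) h1]

set_option maxHeartbeats 800000 in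
theorem sfm_offdiag_sub (f : ℕ → ℕ) (B N : ℕ) (hB : ∀ x y : ℕ, 1 ≤ x → 1 ≤ y → f x = f y → x ≠ y → x ≤ B ∧ y ≤ B) :
    sfmQ N (SfmU f) \ sfmD f N ⊆ sfmQ N (SfmV f N) ∪
      (((sfmZ N B).image (fun q => (q.1.1, q.1.2, q.2.1, q.2.2)) ∪
        (sfmZ N B).image (fun q => (q.1.1, q.2.1, q.1.2, q.2.2))) ∪
        (sfmZ N B).image (fun q => (q.1.1, q.2.1, q.2.2, q.1.2))) := by
  classical
  have key : ∀ a b c d : ℕ, 1 ≤ a ∧ a ≤ N → 1 ≤ b ∧ b ≤ N → 1 ≤ c ∧ c ≤ N → 1 ≤ d ∧ d ≤ N →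
      Squarefree (f a) → Squarefree (f c) → Squarefree (f d) → IsSquare (f a * f b * f c * f d) → f a = f b → ¬ (a = b ∧ c = d) →
      ((a, b), (c, d)) ∈ sfmZ N B := by
    intro a b c d ha hb hc hd sa sc sd hsq hab hnd
    have hcd : f c = f d := by
      apply sfm_sqf_eq _ _ sc sd
      apply sfm_isSquare_cancel (f a) _ sa.ne_zero
      rw [← hab] at hsq
      rwa [show f a * f a * f c * f d = f a ^ 2 * (f c * f d) by ring] at hsq
    have x1 : a ≠ b → a ≤ B ∧ b ≤ B := hB a b ha.1 hb.1 hab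
    have x2 : c ≠ d → c ≤ B ∧ d ≤ B := hB c d hc.1 hd.1 hcd
    simp only [sfmZ, sfmX, Finset.mem_union, Finset.mem_product, Finset.mem_image, Finset.mem_Icc, Prod.mk.injEq]
    by_cases h1 : a = b
    · have h2 : c ≠ d := fun h2 => hnd ⟨h1, h2⟩
      have := x2 h2
      left
      exact ⟨Or.inl ⟨a, ha, rfl, h1⟩, ⟨hc.1, this.1⟩, hd.1, this.2⟩
    · have := x1 h1
      right
      refine ⟨⟨⟨ha.1, this.1⟩, hb.1, this.2⟩, ?_⟩
      by_cases h2 : c = d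
      · exact Or.inl ⟨c, hc, rfl, h2⟩
      · have := x2 h2
        exact Or.inr ⟨⟨hc.1, this.1⟩, hd.1, this.2⟩
  rintro ⟨a, b, c, d⟩ hq
  rw [Finset.mem_sdiff, sfmQU_mem] at hq
  obtain ⟨⟨⟨ha, hb, hc, hd⟩, u⟩, hnD⟩ := hq
  have n1 : ¬ (a = b ∧ c = d) := by
    rintro ⟨rfl, rfl⟩
    apply hnD
    simp only [sfmD, Finset.mem_union, Finset.mem_image, Finset.mem_product, Prod.exists, Prod.mk.injEq, sfmS_mem]
    exact Or.inl (Or.inl ⟨a, c, ⟨⟨ha, u.sa⟩, hc, u.sc⟩, rfl, rfl, rfl, rfl⟩)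
  have n2 : ¬ (a = c ∧ b = d) := by
    rintro ⟨rfl, rfl⟩
    apply hnD
    simp only [sfmD, Finset.mem_union, Finset.mem_image, Finset.mem_product, Prod.exists, Prod.mk.injEq, sfmS_mem]
    exact Or.inl (Or.inr ⟨a, b, ⟨⟨ha, u.sa⟩, hb, u.sb⟩, rfl, rfl, rfl, rfl⟩)
  have n3 : ¬ (a = d ∧ b = c) := by
    rintro ⟨rfl, rfl⟩
    apply hnD
    simp only [sfmD, Finset.mem_union, Finset.mem_image, Finset.mem_product, Prod.exists, Prod.mk.injEq, sfmS_mem]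
    exact Or.inr ⟨a, b, ⟨⟨ha, u.sa⟩, hb, u.sb⟩, rfl, rfl, rfl, rfl⟩
  have sq1 := u.sq
  have sq2 : IsSquare (f a * f c * f b * f d) := by rwa [mul_right_comm (f a)] at sq1
  have sq3 : IsSquare (f a * f d * f b * f c) := by
    rwa [show f a * f b * f c * f d = f a * f d * f b * f c by ring] at sq1
  have sq4 : IsSquare (f c * f d * f a * f b) := by
    rwa [show f a * f b * f c * f d = f c * f d * f a * f b by ring] at sq1
  have sq5 : IsSquare (f b * f d * f a * f c) := by
    rwa [show f a * f b * f c * f d = f b * f d * f a * f c by ring] at sq1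
  have sq6 : IsSquare (f b * f c * f a * f d) := by
    rwa [show f a * f b * f c * f d = f b * f c * f a * f d by ring] at sq1
  have sw : ∀ x y : ℕ × ℕ, (x, y) ∈ sfmZ N B → (y, x) ∈ sfmZ N B := by
    intro x y h
    unfold sfmZ at h ⊢
    rw [Finset.mem_union] at h ⊢
    rcases h with h | h
    · exact Or.inr (Finset.mem_product.mpr (Finset.mem_product.mp h).symm)
    · exact Or.inl (Finset.mem_product.mpr (Finset.mem_product.mp h).symm)
  have m1 : ((a, b), (c, d)) ∈ sfmZ N B → (a, b, c, d) ∈ (sfmZ N B).image (fun q => (q.1.1, q.1.2, q.2.1, q.2.2)) :=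
    fun h => Finset.mem_image.mpr ⟨_, h, rfl⟩
  have m2 : ((a, c), (b, d)) ∈ sfmZ N B → (a, b, c, d) ∈ (sfmZ N B).image (fun q => (q.1.1, q.2.1, q.1.2, q.2.2)) :=
    fun h => Finset.mem_image.mpr ⟨_, h, rfl⟩
  have m3 : ((a, d), (b, c)) ∈ sfmZ N B → (a, b, c, d) ∈ (sfmZ N B).image (fun q => (q.1.1, q.2.1, q.2.2, q.1.2)) :=
    fun h => Finset.mem_image.mpr ⟨_, h, rfl⟩
  simp only [Finset.mem_union]
  by_cases e1 : f a = f b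
  · exact Or.inr (Or.inl (Or.inl (m1 (key a b c d ha hb hc hd u.sa u.sc u.sd sq1 e1 n1))))
  by_cases e2 : f a = f c
  · exact Or.inr (Or.inl (Or.inr (m2 (key a c b d ha hc hb hd u.sa u.sb u.sd sq2 e2 n2))))
  by_cases e3 : f a = f d
  · exact Or.inr (Or.inr (m3 (key a d b c ha hd hb hc u.sa u.sb u.sc sq3 e3 n3)))
  by_cases e4 : f c = f d
  · exact Or.inr (Or.inl (Or.inl (m1 (sw _ _ (key c d a b hc hd ha hb u.sc u.sa u.sb sq4 e4 (fun h => n1 ⟨h.2, h.1⟩))))))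
  by_cases e5 : f b = f d
  · exact Or.inr (Or.inl (Or.inr (m2 (sw _ _ (key b d a c hb hd ha hc u.sb u.sa u.sc sq5 e5 (fun h => n2 ⟨h.2, h.1⟩))))))
  by_cases e6 : f b = f c
  · exact Or.inr (Or.inr (m3 (sw _ _ (key b c a d hb hc ha hd u.sb u.sa u.sd sq6 e6 (fun h => n3 ⟨h.2, h.1⟩)))))
  have v : SfmV f N a b c d := ⟨ha, hb, hc, hd, u.sa, u.sb, u.sc, u.sd, sq1, e1, e2, e3, e6, e5, e4⟩
  exact Or.inl (sfmQ_mem v v)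

namespace SfmH
variable {P : Polynomial ℤ} {f : ℕ → ℕ}

theorem fourth (h : SfmH P f) (κ C0 : ℝ) (hκ : 0 < κ)
    (hd : ∀ N : ℕ, 1 ≤ N → |((sfmS f N).card : ℝ) - κ * N| ≤ C0 * (N : ℝ) ^ ((3 : ℝ) / 4)) :
    ∃ C : ℝ, 0 < C ∧ ∀ N : ℕ, 1 ≤ N →
      |((sfmQ N (SfmU f)).card : ℝ) - 3 * κ ^ 2 * (N : ℝ) ^ 2| ≤ C * (N : ℝ) ^ ((99 : ℝ) / 50) := by
  classical
  obtain ⟨CV, hCV, hCV'⟩ := h.count_V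
  obtain ⟨B, hB⟩ := h.same_value
  have hC0 : 0 ≤ C0 := by
    have := hd 1 le_rfl
    simp only [Nat.cast_one, Real.one_rpow, mul_one] at this
    exact (abs_nonneg _).trans this
  refine ⟨CV + 6 * ((B : ℝ) ^ 2 * (1 + (B : ℝ) ^ 2)) + 2 + 3 * (C0 * (1 + κ)), by positivity, fun N hN => ?_⟩
  have hN1 : (1 : ℝ) ≤ N := by exact_mod_cast hN
  have hN0 : (0 : ℝ) < N := by linarith
  set S : ℝ := ((sfmS f N).card : ℝ) with hS
  set U : ℝ := ((sfmQ N (SfmU f)).card : ℝ) with hU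
  set D : ℝ := ((sfmD f N).card : ℝ) with hD
  set z : ℝ := (N : ℝ) ^ ((99 : ℝ) / 50) with hz
  have hNz : (N : ℝ) ≤ z := by
    calc (N : ℝ) = (N : ℝ) ^ (1 : ℝ) := (Real.rpow_one _).symm
      _ ≤ z := Real.rpow_le_rpow_of_exponent_le hN1 (by norm_num)
  have hSN : S ≤ N := by
    rw [hS]
    have : (sfmS f N).card ≤ N := by
      unfold sfmS
      refine (Finset.card_filter_le _ _).trans ?_
      simp
    exact_mod_cast this
  have hS0 : 0 ≤ S := Nat.cast_nonneg _
  have hD1 : D ≤ 3 * S ^ 2 := by rw [hD, hS]; exact_mod_cast (sfmD_card f N).1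
  have hD2 : 3 * S ^ 2 ≤ D + 2 * S := by rw [hD, hS]; exact_mod_cast (sfmD_card f N).2
  have hDU : D ≤ U := by rw [hD, hU]; exact_mod_cast Finset.card_le_card (sfmD_sub f N)
  have hUD : U ≤ D + (CV * z + 6 * ((B : ℝ) ^ 2 * (N + (B : ℝ) ^ 2))) := by
    have a1 := Finset.card_le_card (sfm_offdiag_sub f B N (fun x y hx hy e ne => hB x y hx hy e ne))
    have a2 : (sfmQ N (SfmU f)).card ≤ (sfmD f N).card + (sfmQ N (SfmU f) \ sfmD f N).card := by
      have := Finset.card_sdiff_add_card_eq_card (sfmD_sub f N)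
      omega
    have a3 := sfmZ_card N B
    have a4 : (sfmQ N (SfmU f) \ sfmD f N).card ≤ (sfmQ N (SfmV f N)).card + 6 * (B ^ 2 * (N + B ^ 2)) := by
      refine a1.trans ((Finset.card_union_le _ _).trans ?_)
      gcongr
      refine (Finset.card_union_le _ _).trans ?_
      refine le_trans (Nat.add_le_add_right (Finset.card_union_le _ _) _) ?_
      have b1 := Finset.card_image_le (s := sfmZ N B) (f := fun q => (q.1.1, q.1.2, q.2.1, q.2.2))
      have b2 := Finset.card_image_le (s := sfmZ N B) (f := fun q => (q.1.1, q.2.1, q.1.2, q.2.2))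
      have b3 := Finset.card_image_le (s := sfmZ N B) (f := fun q => (q.1.1, q.2.1, q.2.2, q.1.2))
      omega
    have a5 : U ≤ D + (((sfmQ N (SfmV f N)).card : ℝ) + 6 * ((B : ℝ) ^ 2 * (N + (B : ℝ) ^ 2))) := by
      rw [hD, hU]
      exact_mod_cast a2.trans (Nat.add_le_add_left a4 _)
    have a6 := hCV' N hN
    linarith
  have hBN : (B : ℝ) ^ 2 * (N + (B : ℝ) ^ 2) ≤ (B : ℝ) ^ 2 * (1 + (B : ℝ) ^ 2) * z := by
    have : (N : ℝ) + (B : ℝ) ^ 2 ≤ (1 + (B : ℝ) ^ 2) * z := by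
      have : (B : ℝ) ^ 2 * 1 ≤ (B : ℝ) ^ 2 * z := by gcongr; linarith
      linarith
    calc _ ≤ (B : ℝ) ^ 2 * ((1 + (B : ℝ) ^ 2) * z) := by gcongr
      _ = _ := by ring
  have hSq : |S ^ 2 - κ ^ 2 * (N : ℝ) ^ 2| ≤ C0 * (1 + κ) * z := by
    rw [show S ^ 2 - κ ^ 2 * (N : ℝ) ^ 2 = (S - κ * N) * (S + κ * N) by ring, abs_mul]
    have e1 : |S + κ * N| ≤ (1 + κ) * N := by
      rw [abs_of_nonneg (by positivity)]
      linarith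
    calc _ ≤ (C0 * (N : ℝ) ^ ((3 : ℝ) / 4)) * ((1 + κ) * N) := by
          have := hd N hN
          gcongr
      _ = C0 * (1 + κ) * ((N : ℝ) ^ ((3 : ℝ) / 4) * (N : ℝ) ^ (1 : ℝ)) := by rw [Real.rpow_one]; ring
      _ ≤ _ := by
          rw [← Real.rpow_add hN0]
          gcongr
          exact Real.rpow_le_rpow_of_exponent_le hN1 (by norm_num)
  rw [abs_le] at hSq ⊢
  constructor
  · nlinarith [hSq.1, hSq.2, mul_nonneg hCV.le (hN0.le.trans hNz), mul_nonneg (by positivity : 0 ≤ (B : ℝ) ^ 2 * (1 + (B : ℝ) ^ 2)) (hN0.le.trans hNz)]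
  · nlinarith [hSq.1, hSq.2]

end SfmH


theorem sfm_sep_linear (k : ℕ) (a b : Fin k → ℤ) (ha : ∀ i, a i ≠ 0)
    (hΔ : ∀ i j, i ≠ j → a i * b j - a j * b i ≠ 0) :
    ((∏ i, (Polynomial.C (a i) * Polynomial.X + Polynomial.C (b i)) : Polynomial ℤ).map
      (Int.castRingHom ℚ)).Separable := by
  have hcast : ∀ z : ℤ, (Int.castRingHom ℚ) z = (z : ℚ) := fun z => rfl
  rw [Polynomial.map_prod]
  apply Polynomial.separable_prod'
  · intro i _ j _ hij
    have hD : ((a j : ℚ) * b i - a i * b j) ≠ 0 := by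
      have := hΔ j i hij.symm
      exact_mod_cast this
    simp only [Polynomial.map_add, Polynomial.map_mul, Polynomial.map_C, Polynomial.map_X, hcast]
    refine ⟨Polynomial.C ((a j : ℚ) / (a j * b i - a i * b j)), Polynomial.C (-(a i : ℚ) / (a j * b i - a i * b j)), ?_⟩
    rw [mul_add, mul_add, ← mul_assoc, ← mul_assoc, ← Polynomial.C_mul, ← Polynomial.C_mul, ← Polynomial.C_mul,
      ← Polynomial.C_mul]
    have e1 : (a j : ℚ) / (a j * b i - a i * b j) * a i = - (-(a i : ℚ) / (a j * b i - a i * b j) * a j) := by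
      field_simp
    have e2 : (a j : ℚ) / (a j * b i - a i * b j) * b i = 1 - (-(a i : ℚ) / (a j * b i - a i * b j) * b j) := by
      field_simp; ring
    rw [e1, e2, Polynomial.C_neg, Polynomial.C_sub, Polynomial.C_1]
    ring
  · intro i _
    have hi : (a i : ℚ) ≠ 0 := by exact_mod_cast ha i
    refine ⟨0, Polynomial.C ((a i : ℚ)⁻¹), ?_⟩
    simp only [Polynomial.map_add, Polynomial.map_mul, Polynomial.map_C, Polynomial.map_X, hcast,
      Polynomial.derivative_add, Polynomial.derivative_C_mul, Polynomial.derivative_X, Polynomial.derivative_C,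
      mul_one, add_zero, zero_mul, zero_add]
    rw [← Polynomial.C_mul, inv_mul_cancel₀ hi, Polynomial.C_1]

theorem sfm_deg_linear (k : ℕ) (a b : Fin k → ℤ) (ha : ∀ i, a i ≠ 0) :
    (∏ i, (Polynomial.C (a i) * Polynomial.X + Polynomial.C (b i)) : Polynomial ℤ).natDegree = k := by
  rw [Polynomial.natDegree_prod]
  · rw [Finset.sum_congr rfl (fun i _ => Polynomial.natDegree_linear (b := b i) (ha i))]
    simp
  · intro i _ h
    have := Polynomial.natDegree_linear (b := b i) (ha i)
    rw [h] at this
    simp at this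

theorem squarefree_density_and_fourth_moment_count
    (P : Polynomial ℤ)
    (hP : (∃ k : ℕ, 2 ≤ k ∧ ∃ a b : Fin k → ℤ, (∀ i, a i ≠ 0) ∧
            P = ∏ i, (Polynomial.C (a i) * Polynomial.X + Polynomial.C (b i)) ∧
            ∀ i j, i ≠ j → a i * b j - a j * b i ≠ 0) ∨
          (P.natDegree = 2 ∧ Irreducible P))
    (hadm : ¬ ∃ p : ℕ, p.Prime ∧ ∀ n : ℕ, 0 < n → (p : ℤ)^2 ∣ P.eval (n : ℤ))
    (hpos : ∀ n : ℕ, 0 < n → 1 ≤ P.eval (n : ℤ)) :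
    ∃ κ : ℝ, 0 < κ ∧ ∃ δ : ℝ, 0 < δ ∧
      (∃ C : ℝ, ∀ N : ℕ, 1 ≤ N →
        |({n : ℕ | 1 ≤ n ∧ n ≤ N ∧ Squarefree (P.eval (n : ℤ))}.ncard : ℝ) - κ * N| ≤
          C * (N : ℝ) ^ ((3:ℝ)/4)) ∧
      (∀ ε : ℝ, 0 < ε → ∃ C : ℝ, ∀ N : ℕ, 1 ≤ N →
        |({q : ℕ × ℕ × ℕ × ℕ |
            (1 ≤ q.1 ∧ q.1 ≤ N) ∧ (1 ≤ q.2.1 ∧ q.2.1 ≤ N) ∧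
            (1 ≤ q.2.2.1 ∧ q.2.2.1 ≤ N) ∧ (1 ≤ q.2.2.2 ∧ q.2.2.2 ≤ N) ∧
            Squarefree (P.eval (q.1 : ℤ)) ∧ Squarefree (P.eval (q.2.1 : ℤ)) ∧
            Squarefree (P.eval (q.2.2.1 : ℤ)) ∧ Squarefree (P.eval (q.2.2.2 : ℤ)) ∧
            IsSquare (P.eval (q.1 : ℤ) * P.eval (q.2.1 : ℤ) *
              P.eval (q.2.2.1 : ℤ) * P.eval (q.2.2.2 : ℤ))}.ncard : ℝ) -
          3 * κ^2 * (N : ℝ)^2| ≤ C * (N : ℝ) ^ ((2 : ℝ) - δ + ε)) := by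
  classical
  set f : ℕ → ℕ := fun n => (P.eval (n : ℤ)).toNat with hf
  have hval : ∀ n : ℕ, 1 ≤ n → (f n : ℤ) = P.eval (n : ℤ) := fun n hn =>
    Int.toNat_of_nonneg (by have := hpos n hn; omega)
  have hfpos : ∀ n : ℕ, 1 ≤ n → 1 ≤ f n := fun n hn => by
    have h1 := hpos n hn
    have h2 := hval n hn
    omega
  have hmain : SfmH P f ∧ SfmT f := by
    rcases hP with ⟨k, hk, a, b, ha, hPe, hΔ⟩ | ⟨h2, hirr⟩
    · refine ⟨⟨?_, ?_, hval, hfpos⟩, ?_⟩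
      · rw [hPe, sfm_deg_linear k a b ha]; exact hk
      · rw [hPe]; exact sfm_sep_linear k a b ha hΔ
      · apply sfmT_linear k a b f hΔ _ hfpos
        intro n hn
        rw [hval n hn, hPe, Polynomial.eval_prod]
        simp
    · have h : SfmH P f := by
        refine ⟨h2.ge, ?_, hval, hfpos⟩
        exact ((Polynomial.IsPrimitive.Int.irreducible_iff_irreducible_map_cast (hirr.isPrimitive (by omega))).mp hirr).separable
      exact ⟨h, sfmT_quadratic h h2⟩
  obtain ⟨h, hT⟩ := hmain
  obtain ⟨C1, hC1, hC1'⟩ := h.density hT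
  have hκ := h.kappa_pos hT hadm
  set κ := ∑' n, sfmH P n with hκd
  have hd : ∀ N : ℕ, 1 ≤ N → |((sfmS f N).card : ℝ) - κ * N| ≤ C1 * (N : ℝ) ^ ((3 : ℝ) / 4) := by
    intro N hN
    have := hC1' N hN
    unfold sfmS
    convert this
  obtain ⟨C2, hC2, hC2'⟩ := h.fourth κ C1 hκ hd
  have hsf : ∀ n : ℕ, 1 ≤ n → (Squarefree (P.eval (n : ℤ)) ↔ Squarefree (f n)) := fun n hn => by
    rw [← hval n hn, Int.squarefree_natCast]
  refine ⟨κ, hκ, 1 / 50, by norm_num, ⟨C1, fun N hN => ?_⟩, fun ε hε => ⟨C2, fun N hN => ?_⟩⟩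
  · have e : {n : ℕ | 1 ≤ n ∧ n ≤ N ∧ Squarefree (P.eval (n : ℤ))} = ((sfmS f N : Finset ℕ) : Set ℕ) := by
      ext n
      simp only [Set.mem_setOf_eq, Finset.mem_coe, sfmS_mem]
      constructor
      · rintro ⟨h1, h2, h3⟩
        exact ⟨⟨h1, h2⟩, (hsf n h1).mp h3⟩
      · rintro ⟨⟨h1, h2⟩, h3⟩
        exact ⟨h1, h2, (hsf n h1).mpr h3⟩
    rw [e, Set.ncard_coe_finset]
    exact hd N hN
  · have e : {q : ℕ × ℕ × ℕ × ℕ |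
            (1 ≤ q.1 ∧ q.1 ≤ N) ∧ (1 ≤ q.2.1 ∧ q.2.1 ≤ N) ∧
            (1 ≤ q.2.2.1 ∧ q.2.2.1 ≤ N) ∧ (1 ≤ q.2.2.2 ∧ q.2.2.2 ≤ N) ∧
            Squarefree (P.eval (q.1 : ℤ)) ∧ Squarefree (P.eval (q.2.1 : ℤ)) ∧
            Squarefree (P.eval (q.2.2.1 : ℤ)) ∧ Squarefree (P.eval (q.2.2.2 : ℤ)) ∧
            IsSquare (P.eval (q.1 : ℤ) * P.eval (q.2.1 : ℤ) *
              P.eval (q.2.2.1 : ℤ) * P.eval (q.2.2.2 : ℤ))} =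
            ((sfmQ N (SfmU f) : Finset (ℕ × ℕ × ℕ × ℕ)) : Set (ℕ × ℕ × ℕ × ℕ)) := by
      ext ⟨a, b, c, d⟩
      rw [Finset.mem_coe, sfmQU_mem, Set.mem_setOf_eq]
      constructor
      · rintro ⟨h1, h2, h3, h4, s1, s2, s3, s4, sq⟩
        refine ⟨⟨h1, h2, h3, h4⟩, (hsf a h1.1).mp s1, (hsf b h2.1).mp s2, (hsf c h3.1).mp s3, (hsf d h4.1).mp s4, ?_⟩
        rw [← Int.isSquare_natCast_iff]
        push_cast
        rw [hval a h1.1, hval b h2.1, hval c h3.1, hval d h4.1]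
        exact sq
      · rintro ⟨⟨h1, h2, h3, h4⟩, u⟩
        refine ⟨h1, h2, h3, h4, (hsf a h1.1).mpr u.sa, (hsf b h2.1).mpr u.sb, (hsf c h3.1).mpr u.sc,
          (hsf d h4.1).mpr u.sd, ?_⟩
        have sq := u.sq
        rw [← Int.isSquare_natCast_iff] at sq
        push_cast at sq
        rw [hval a h1.1, hval b h2.1, hval c h3.1, hval d h4.1] at sq
        exact sq
    rw [e, Set.ncard_coe_finset]
    refine (hC2' N hN).trans ?_
    have hN1 : (1 : ℝ) ≤ N := by exact_mod_cast hN
    have : (N : ℝ) ^ ((99 : ℝ) / 50) ≤ (N : ℝ) ^ ((2 : ℝ) - 1 / 50 + ε) :=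
      Real.rpow_le_rpow_of_exponent_le hN1 (by linarith)
    gcongr
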